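/- arXiv:1806.02767 — 9 statements merged into one kernel-verified Lean document; each statement's English description precedes it below -/
import Mathlib

section
/- Let k be an infinite field and let A, B, C be graded Artinian k-algebras such that C is a free extension of A with fiber B (via graded algebra maps ι : A → C and π : C → B). Then the generic linear Jordan type of C dominates that of the tensor product A ⊗_k B: there exists a linear form ℓ ∈ C_1 such that for every linear form m ∈ (A ⊗_k B)_1 and every integer k ≥ 0 one has dim_k ker((×ℓ)^k : C → C) ≤ dim_k ker((×m)^k : A ⊗_k B → A ⊗_k B). -/
open TensorProduct

/-!
Choose an `A`-basis of `C`; by freeness its image under `π` is a `k`-basis of `B`. Let `σ_t` be the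
endomorphism of `A` scaling the degree `i` component by `t ^ i`, and let `N` be the matrix over `A`
of multiplication by `c` on `C`. Consider the family of matrices `G t = a • 1 + σ_t N`, for
`a ∈ A₁`. For `t ≠ 0` it is the `σ_t`-twist of the matrix of multiplication by `t⁻¹ • a + c` on
`C`, whereas `G 0` is the matrix of multiplication by `a ⊗ 1 + 1 ⊗ π c` on `A ⊗ B`. The kernel of
a power of `G t` can only become larger under the specialization `t = 0`. A generic linear form of
`C` minimizes the kernels of all powers at once, so each power may be treated separately.
-/

open Module Filter

section PolynomialFamilies

variable (k M : Type*) [CommSemiring k] [AddCommMonoid M] [Module k M]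

/-- The functions `k → M` that are polynomial in their argument, with coefficients in `M`: the
one-parameter families that are specialized at points of `k`. They are encoded as a span of
functions because `M`, typically a space of linear maps, need not be a ring. -/
def polynomialFamilies : Submodule k (k → M) :=
  Submodule.span k (Set.range fun (p : ℕ × M) (t : k) ↦ t ^ p.1 • p.2)

namespace polynomialFamilies

variable {k M} {N P : Type*} [AddCommMonoid N] [Module k N] [AddCommMonoid P] [Module k P]

theorem pow_smul_mem (i : ℕ) (m : M) : (fun t : k ↦ t ^ i • m) ∈ polynomialFamilies k M :=
  Submodule.subset_span ⟨(i, m), rfl⟩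

theorem const_mem (m : M) : (fun _ : k ↦ m) ∈ polynomialFamilies k M := by
  simpa only [pow_zero, one_smul] using pow_smul_mem (k := k) 0 m

theorem apply_mem_of_forall_pow_smul (T : (k → M) →ₗ[k] (k → N))
    (hT : ∀ i m, T (fun t ↦ t ^ i • m) ∈ polynomialFamilies k N) {f : k → M}
    (hf : f ∈ polynomialFamilies k M) : T f ∈ polynomialFamilies k N := by
  suffices polynomialFamilies k M ≤ (polynomialFamilies k N).comap T from this hf
  refine Submodule.span_le.2 ?_
  rintro _ ⟨⟨i, m⟩, rfl⟩
  exact hT i m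

theorem map_mem (L : M →ₗ[k] N) {f : k → M} (hf : f ∈ polynomialFamilies k M) :
    (fun t ↦ L (f t)) ∈ polynomialFamilies k N :=
  apply_mem_of_forall_pow_smul (L.compLeft k) (fun i m ↦ by
    change (fun t ↦ L (t ^ i • m)) ∈ _
    simpa only [map_smul] using pow_smul_mem i (L m)) hf

theorem pow_smul_fun_mem (i : ℕ) {f : k → M} (hf : f ∈ polynomialFamilies k M) :
    (fun t ↦ t ^ i • f t) ∈ polynomialFamilies k M :=
  apply_mem_of_forall_pow_smul (.pi fun t ↦ t ^ i • .proj t)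
    (fun j m ↦ by simpa [pow_add, mul_smul] using! pow_smul_mem (k := k) (i + j) m) hf

theorem map₂_mem (L : M →ₗ[k] N →ₗ[k] P) {f : k → M} {g : k → N}
    (hf : f ∈ polynomialFamilies k M) (hg : g ∈ polynomialFamilies k N) :
    (fun t ↦ L (f t) (g t)) ∈ polynomialFamilies k P :=
  apply_mem_of_forall_pow_smul (.pi fun t ↦ L.flip (g t) ∘ₗ .proj t) (fun i m ↦ by
    change (fun t ↦ L (t ^ i • m) (g t)) ∈ _
    simpa only [map_smul, LinearMap.smul_apply] using pow_smul_fun_mem i (map_mem (L m) hg)) hf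

theorem pow_mem {R : Type*} [Semiring R] [Algebra k R] {f : k → R}
    (hf : f ∈ polynomialFamilies k R) (n : ℕ) :
    (fun t ↦ f t ^ n) ∈ polynomialFamilies k R := by
  induction n with
  | zero => simpa only [pow_zero] using const_mem 1
  | succ n ih => simpa only [pow_succ] using! map₂_mem (LinearMap.mul k R) ih hf

theorem pi_mem {Q : Type*} [Finite Q] {f : k → Q → M}
    (hf : ∀ q, (fun t ↦ f t q) ∈ polynomialFamilies k M) : f ∈ polynomialFamilies k (Q → M) := by
  classical
  have := Fintype.ofFinite Q
  convert Submodule.sum_mem _ fun q (_ : q ∈ Finset.univ) ↦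
    map_mem (LinearMap.single k (fun _ : Q ↦ M) q) (hf q) using 1
  ext t q
  simp [Finset.sum_apply, Pi.single_apply]

theorem exists_polynomial_eval_eq {f : k → k} (hf : f ∈ polynomialFamilies k k) :
    ∃ p : Polynomial k, ∀ t, p.eval t = f t := by
  induction hf using Submodule.span_induction with
  | mem f hf =>
    obtain ⟨⟨i, m⟩, rfl⟩ := hf
    exact ⟨.X ^ i * .C m, fun t ↦ by simp [-Polynomial.X_pow_mul_C]⟩
  | zero => exact ⟨0, fun t ↦ by simp⟩
  | add f g _ _ hf hg =>
    obtain ⟨p, hp⟩ := hf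
    obtain ⟨q, hq⟩ := hg
    exact ⟨p + q, fun t ↦ by simp [hp, hq]⟩
  | smul r f _ hf =>
    obtain ⟨p, hp⟩ := hf
    exact ⟨r • p, fun t ↦ by simp [hp]⟩

end polynomialFamilies

end PolynomialFamilies

section Semicontinuity

variable {k W W' : Type*} [Field k] [AddCommGroup W] [Module k W] [FiniteDimensional k W]
  [AddCommGroup W'] [Module k W']

namespace polynomialFamilies

theorem exists_polynomial_eval_eq_det {F : k → End k W}
    (hF : F ∈ polynomialFamilies k (End k W)) :
    ∃ p : Polynomial k, ∀ t, p.eval t = LinearMap.det (F t) := by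
  let b := finBasis k W
  choose p hp using fun i j ↦ exists_polynomial_eval_eq <|
    map_mem (b.coord i ∘ₗ LinearMap.applyₗ (b j)) hF
  refine ⟨(Matrix.of p).det, fun t ↦ ?_⟩
  rw [← LinearMap.det_toMatrix b, ← Polynomial.coe_evalRingHom, RingHom.map_det]
  congr 1
  ext i j
  simp [LinearMap.toMatrix_apply, hp]

theorem eventually_isUnit {F : k → End k W} (hF : F ∈ polynomialFamilies k (End k W)) {t₀ : k}
    (h₀ : IsUnit (F t₀)) : ∀ᶠ t in cofinite, IsUnit (F t) := by
  obtain ⟨p, hp⟩ := exists_polynomial_eval_eq_det hF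
  simp only [LinearMap.isUnit_iff_isUnit_det, isUnit_iff_ne_zero, ← hp] at h₀ ⊢
  have hp₀ : p ≠ 0 := fun h ↦ h₀ (by simp [h])
  simpa [eventually_cofinite] using Polynomial.finite_setOfPred_isRoot hp₀

/-- The restriction of `F t₀` to a complement of its kernel has a left inverse `g`; composing
`F t` with `g` gives an endomorphism that is invertible for `t = t₀`, hence for almost all `t`. -/
theorem eventually_finrank_ker_le {F : k → W →ₗ[k] W'}
    (hF : F ∈ polynomialFamilies k (W →ₗ[k] W')) (t₀ : k) :
    ∀ᶠ t in cofinite, finrank k (F t).ker ≤ finrank k (F t₀).ker := by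
  obtain ⟨s, hs⟩ := (F t₀).rangeRestrict.exists_rightInverse_of_surjective
    (F t₀).range_rangeRestrict
  obtain ⟨g, hg⟩ := (F t₀).range.subtype.exists_leftInverse_of_injective (Submodule.ker_subtype _)
  have h₀ : g ∘ₗ F t₀ ∘ₗ s = 1 := by
    have hsub : F t₀ ∘ₗ s = (F t₀).range.subtype := by
      rw [← (F t₀).range.subtype.comp_id, ← hs]
      rfl
    rw [hsub, hg, End.one_eq_id]
  have hunit : ∀ᶠ t in cofinite, IsUnit (g ∘ₗ F t ∘ₗ s : End k (F t₀).range) :=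
    eventually_isUnit (t₀ := t₀) (map_mem (LinearMap.compRight k g ∘ₗ LinearMap.lcomp k W' s) hF)
      (h₀ ▸ isUnit_one)
  filter_upwards [hunit] with t ht
  have hrange : finrank k (F t₀).range ≤ finrank k (F t).range := by
    refine LinearMap.finrank_le_finrank_of_injective (f := (F t).rangeRestrict ∘ₗ s) ?_
    have hinj := ((End.isUnit_iff _).1 ht).injective
    exact .of_comp (f := g ∘ₗ (F t).range.subtype) hinj
  have := (F t₀).finrank_range_add_finrank_ker
  have := (F t).finrank_range_add_finrank_ker
  omega

end polynomialFamilies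

variable [Infinite k] {V : Type*} [AddCommGroup V] [Module k V] (f : V →ₗ[k] End k W)

theorem exists_finrank_ker_pow_le_and_le (v w : V) (d : ℕ) :
    ∃ u, ∀ n ≤ d, finrank k (f u ^ n).ker ≤ finrank k (f v ^ n).ker ∧
      finrank k (f u ^ n).ker ≤ finrank k (f w ^ n).ker := by
  have hline : (fun t : k ↦ f (v + t • (w - v))) ∈ polynomialFamilies k (End k W) := by
    refine polynomialFamilies.map_mem f ?_
    simpa only [pow_one] using! add_mem (polynomialFamilies.const_mem v)
      (polynomialFamilies.pow_smul_mem 1 (w - v))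
  have hle (n : ℕ) (t₀ : k) := polynomialFamilies.eventually_finrank_ker_le
    (polynomialFamilies.pow_mem hline n) t₀
  obtain ⟨t, ht⟩ := ((eventually_all_finite (Set.finite_Iic d)).2 fun n _ ↦
    (hle n 0).and (hle n 1)).exists
  have h₀ : v + (0 : k) • (w - v) = v := by simp
  have h₁ : v + (1 : k) • (w - v) = w := by simp
  rw [h₀, h₁] at ht
  exact ⟨v + t • (w - v), ht⟩

theorem exists_forall_finrank_ker_pow_le :
    ∃ v, ∀ w n, finrank k (f v ^ n).ker ≤ finrank k (f w ^ n).ker := by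
  let d := finrank k W
  obtain ⟨v, -, hv⟩ := exists_minimalFor_of_wellFoundedLT (fun _ : V ↦ True)
    (fun v (n : Fin (d + 1)) ↦ finrank k (f v ^ (n : ℕ)).ker) ⟨0, trivial⟩
  have hle (w : V) (n : ℕ) (hn : n ≤ d) : finrank k (f v ^ n).ker ≤ finrank k (f w ^ n).ker := by
    obtain ⟨u, hu⟩ := exists_finrank_ker_pow_le_and_le f v w d
    exact (hv trivial (fun i ↦ (hu i i.is_le).1) ⟨n, Nat.lt_succ_of_le hn⟩).trans (hu n hn).2
  refine ⟨v, fun w n ↦ ?_⟩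
  rcases le_total n d with hn | hn
  · exact hle w n hn
  · rw [End.ker_pow_eq_ker_pow_finrank_of_le hn, End.ker_pow_eq_ker_pow_finrank_of_le hn]
    exact hle w d le_rfl

end Semicontinuity

theorem finrank_ker_pow_le_of_comp_eq {k W W' : Type*} [Field k] [AddCommGroup W] [Module k W]
    [AddCommGroup W'] [Module k W'] [FiniteDimensional k W'] {f : End k W} {g : End k W'}
    {Φ : W →ₗ[k] W'} (hΦ : Function.Injective Φ) (h : g ∘ₗ Φ = Φ ∘ₗ f) (n : ℕ) :
    finrank k (f ^ n).ker ≤ finrank k (g ^ n).ker := by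
  have hmem : ∀ x ∈ (f ^ n).ker, Φ x ∈ (g ^ n).ker := fun x hx ↦ by
    have := LinearMap.congr_fun (End.commute_pow_left_of_commute h n) x
    rwa [LinearMap.comp_apply, LinearMap.comp_apply, LinearMap.mem_ker.1 hx, map_zero] at this
  exact LinearMap.finrank_le_finrank_of_injective (f := Φ.restrict hmem)
    fun x y hxy ↦ Subtype.ext (hΦ (congrArg Subtype.val hxy))

section GradedScale

variable {k A : Type*} [CommSemiring k] [Semiring A] [Algebra k A] (𝒜 : ℕ → Submodule k A)
  [GradedAlgebra 𝒜]

/-- The endomorphism of a graded algebra that multiplies the component of degree `i` by `t ^ i`.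
It degenerates the identity, at `t = 1`, to the projection onto degree `0`, at `t = 0`. -/
noncomputable def gradedScale (t : k) : A →ₐ[k] A :=
  (DirectSum.toAlgebra k (fun i ↦ 𝒜 i) (fun i ↦ t ^ i • (𝒜 i).subtype) (by simp)
    fun _ _ ↦ by simp [pow_add, smul_smul, mul_comm]).comp
  (DirectSum.decomposeAlgEquiv 𝒜).toAlgHom

variable {𝒜} in
theorem gradedScale_of_mem (t : k) {i : ℕ} {a : A} (ha : a ∈ 𝒜 i) :
    gradedScale 𝒜 t a = t ^ i • a := by
  change DirectSum.toAddMonoid _ (DirectSum.decompose 𝒜 a) = _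
  rw [DirectSum.decompose_of_mem 𝒜 ha, DirectSum.toAddMonoid_of]
  rfl

theorem gradedScale_injective {t : k} (ht : IsUnit t) : Function.Injective (gradedScale 𝒜 t) := by
  obtain ⟨t, rfl⟩ := ht
  refine Function.LeftInverse.injective (g := gradedScale 𝒜 (↑t⁻¹ : k)) fun a ↦ ?_
  induction a using DirectSum.Decomposition.inductionOn 𝒜 with
  | zero => simp
  | homogeneous a =>
    rw [gradedScale_of_mem _ a.2, map_smul, gradedScale_of_mem _ a.2, smul_smul, ← mul_pow,
      t.mul_inv, one_pow, one_smul]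
  | add a b ha hb => rw [map_add, map_add, ha, hb]

theorem gradedScale_zero (a : A) :
    gradedScale 𝒜 (0 : k) a = GradedRing.projZeroRingHom 𝒜 a := by
  induction a using DirectSum.Decomposition.inductionOn 𝒜 with
  | zero => simp
  | @homogeneous i a =>
    rw [gradedScale_of_mem _ a.2, GradedRing.projZeroRingHom_apply]
    rcases eq_or_ne i 0 with rfl | hi
    · rw [pow_zero, one_smul, DirectSum.decompose_of_mem_same 𝒜 a.2]
    · rw [zero_pow hi, zero_smul, DirectSum.decompose_of_mem_ne 𝒜 a.2 hi]
  | add a b ha hb => rw [map_add, map_add, ha, hb]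

theorem gradedScale_mem_polynomialFamilies (a : A) :
    (fun t ↦ gradedScale 𝒜 t a) ∈ polynomialFamilies k A := by
  induction a using DirectSum.Decomposition.inductionOn 𝒜 with
  | zero => simpa only [map_zero] using polynomialFamilies.const_mem 0
  | @homogeneous i a =>
    simpa only [gradedScale_of_mem _ a.2] using polynomialFamilies.pow_smul_mem i (a : A)
  | add a b ha hb => simpa only [map_add] using! add_mem ha hb

end GradedScale

theorem exists_augmentation {k A : Type*} [Field k] [Semiring A] [Nontrivial A] [Algebra k A]
    {𝒜 : ℕ → Submodule k A} [GradedAlgebra 𝒜] (h𝒜 : 𝒜 0 = 1) :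
    ∃ ε : A →ₐ[k] k, ∀ a, algebraMap k A (ε a) = GradedRing.projZeroRingHom 𝒜 a := by
  have hmem (a : A) : gradedScale 𝒜 (0 : k) a ∈ (⊥ : Subalgebra k A) := by
    rw [gradedScale_zero, GradedRing.projZeroRingHom_apply, ← Subalgebra.mem_toSubmodule,
      Algebra.toSubmodule_bot, ← h𝒜]
    exact SetLike.coe_mem _
  refine ⟨(Algebra.botEquiv k A).toAlgHom.comp ((gradedScale 𝒜 0).codRestrict ⊥ hmem),
    fun a ↦ ?_⟩
  rw [← gradedScale_zero]
  exact congrArg Subtype.val ((Algebra.botEquiv k A).symm_apply_apply ⟨_, hmem a⟩)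

theorem map_irrelevant_eq_span_iUnion_succ {A C σ : Type*} [Semiring A] [Semiring C]
    [SetLike σ A] [AddSubmonoidClass σ A] (𝒜 : ℕ → σ) [GradedRing 𝒜] (f : A →+* C) :
    (HomogeneousIdeal.irrelevant 𝒜).toIdeal.map f =
      Ideal.span (f '' ⋃ i, (𝒜 (i + 1) : Set A)) := by
  rw [HomogeneousIdeal.irrelevant_eq_span, Ideal.map_span]
  congr 2
  ext a
  simp only [Set.mem_iUnion, exists_prop]
  exact ⟨fun ⟨i, hi, ha⟩ ↦ ⟨i - 1, by rwa [Nat.sub_add_cancel hi]⟩, fun ⟨i, ha⟩ ↦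
    ⟨i + 1, i.succ_pos, ha⟩⟩

section FreeAlgebra

variable {A C Q : Type*} [CommRing A] [Ring C] [Algebra A C] (u : Basis Q A C)

theorem mem_map_algebraMap_iff_repr_mem (I : Ideal A) (x : C) :
    x ∈ I.map (algebraMap A C) ↔ ∀ q, u.repr x q ∈ I := by
  refine ⟨fun hx ↦ ?_, fun hx ↦ ?_⟩
  · induction hx using Submodule.span_induction with
    | mem y hy =>
      obtain ⟨a, ha, rfl⟩ := hy
      intro q
      rw [Algebra.algebraMap_eq_smul_one, map_smul]
      exact I.mul_mem_right _ ha
    | zero => simp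
    | add y z _ _ hy hz => exact fun q ↦ by simpa using add_mem (hy q) (hz q)
    | smul d y _ hy =>
      intro q
      rw [← u.linearCombination_repr y, Finsupp.linearCombination_apply, Finsupp.sum,
        Finset.smul_sum, map_sum, Finsupp.finsetSum_apply]
      refine sum_mem fun q' _ ↦ ?_
      rw [smul_comm, map_smul]
      exact I.mul_mem_right _ (hy q')
  · rw [← u.linearCombination_repr x, Finsupp.linearCombination_apply]
    refine sum_mem fun q _ ↦ ?_
    beta_reduce
    rw [Algebra.smul_def, Algebra.commutes]
    exact Ideal.mul_mem_left _ _ (Ideal.mem_map_of_mem _ (hx q))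

variable {k B : Type*} [CommRing k] [Algebra k A] [Algebra k C] [Ring B] [Algebra k B]
  {ε : A →ₐ[k] k} {π : C →ₐ[k] B}

theorem exists_basis_repr_apply_eq [Finite Q] [IsScalarTower k A C]
    (hπ : Function.Surjective π)
    (hker : RingHom.ker π = (RingHom.ker ε).map (algebraMap A C)) :
    ∃ b : Basis Q k B, ∀ x q, b.repr (π x) q = ε (u.repr x q) := by
  classical
  have := Fintype.ofFinite Q
  let ρ : C →ₗ[k] Q → k := ε.toLinearMap.compLeft Q ∘ₗ u.equivFun.toLinearMap.restrictScalars k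
  have hρ : Function.Surjective ρ := fun v ↦ by
    refine ⟨u.equivFun.symm fun q ↦ algebraMap k A (v q), funext fun q ↦ ?_⟩
    change ε (u.equivFun (u.equivFun.symm fun q ↦ algebraMap k A (v q)) q) = v q
    rw [LinearEquiv.apply_symm_apply, AlgHom.commutes, Algebra.algebraMap_self_apply]
  have hkerρ : π.toLinearMap.ker = ρ.ker := by
    ext x
    rw [LinearMap.mem_ker, AlgHom.toLinearMap_apply, ← RingHom.mem_ker, hker,
      mem_map_algebraMap_iff_repr_mem u]
    simp [ρ, funext_iff]
  let e : B ≃ₗ[k] Q → k := (π.toLinearMap.quotKerEquivOfSurjective hπ).symm ≪≫ₗ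
    Submodule.quotEquivOfEq _ _ hkerρ ≪≫ₗ ρ.quotKerEquivOfSurjective hρ
  have he (x : C) : e (π x) = ρ x := by
    have : (π.toLinearMap.quotKerEquivOfSurjective hπ).symm (π x) = Submodule.Quotient.mk x :=
      (LinearEquiv.symm_apply_eq _).2 rfl
    simp [e, this]
  exact ⟨.ofEquivFun e, fun x q ↦ by simp [he, ρ]⟩

theorem leftMulMatrix_apply_eq_mapMatrix [Fintype Q] [DecidableEq Q] {b : Basis Q k B}
    (hb : ∀ x q, b.repr (π x) q = ε (u.repr x q)) (c : C) :
    Algebra.leftMulMatrix b (π c) = ε.mapMatrix (Algebra.leftMulMatrix u c) := by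
  have hπu (q : Q) : π (u q) = b q := b.ext_elem fun q' ↦ by
    simp [hb, Finsupp.single_apply, apply_ite ε]
  ext i j
  simp [Algebra.leftMulMatrix_eq_repr_mul, ← hπu, ← map_mul, hb]

end FreeAlgebra

theorem leftMulMatrix_basis_tmul_one_add_one_tmul {k A B Q : Type*} [CommRing k] [CommRing A]
    [Ring B] [Algebra k A] [Algebra k B] [Fintype Q] [DecidableEq Q] (b : Basis Q k B)
    (a : A) (y : B) :
    Algebra.leftMulMatrix (Algebra.TensorProduct.basis A b) (a ⊗ₜ 1 + 1 ⊗ₜ y) =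
      algebraMap A (Matrix Q Q A) a + (Algebra.leftMulMatrix b y).map (algebraMap k A) := by
  have ha : a ⊗ₜ[k] (1 : B) = algebraMap A (A ⊗[k] B) a := by
    simp [Algebra.TensorProduct.algebraMap_apply]
  rw [map_add, ha, AlgHom.commutes]
  congr 1
  ext i j
  simp [Algebra.leftMulMatrix_eq_repr_mul]

section MulVec

open scoped Matrix

variable {k A C Q : Type*} [Field k] [CommRing A] [Ring C] [Algebra k A] [Algebra A C]
  [Algebra k C] [IsScalarTower k A C] [Fintype Q] [DecidableEq Q] (u : Basis Q A C)

theorem finrank_ker_mulLeft_pow_le_mulVecBilin_mapMatrix [FiniteDimensional k A]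
    {σ : A →ₐ[k] A} (hσ : Function.Injective σ) (x : C) (n : ℕ) :
    finrank k (LinearMap.mulLeft k x ^ n).ker ≤ finrank k
      (Matrix.mulVecBilin k k (σ.mapMatrix (Algebra.leftMulMatrix u x)) ^ n :
        End k (Q → A)).ker := by
  let Φ : C →ₗ[k] Q → A := σ.toLinearMap.compLeft Q ∘ₗ u.equivFun.toLinearMap.restrictScalars k
  refine finrank_ker_pow_le_of_comp_eq (Φ := Φ)
    (hσ.comp_left.comp u.equivFun.injective) (LinearMap.ext fun y ↦ ?_) n
  ext q
  change (σ.mapMatrix _ *ᵥ fun q ↦ σ (u.repr y q)) q = σ (u.repr (x * y) q)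
  rw [← Algebra.leftMulMatrix_mulVec_repr]
  exact (RingHom.map_mulVec σ.toRingHom _ (u.repr y) q).symm

theorem finrank_ker_mulVecBilin_pow_le_mulLeft [FiniteDimensional k C] (x : C) (n : ℕ) :
    finrank k (Matrix.mulVecBilin k k (Algebra.leftMulMatrix u x) ^ n : End k (Q → A)).ker ≤
      finrank k (LinearMap.mulLeft k x ^ n).ker := by
  let Φ : (Q → A) →ₗ[k] C := u.equivFun.symm.toLinearMap.restrictScalars k
  refine finrank_ker_pow_le_of_comp_eq (Φ := Φ) u.equivFun.symm.injective
    (LinearMap.ext fun v ↦ u.equivFun.injective ?_) n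
  change u.equivFun (x * u.equivFun.symm v) =
    u.equivFun (u.equivFun.symm (Algebra.leftMulMatrix u x *ᵥ v))
  rw [LinearEquiv.apply_symm_apply]
  conv_rhs => rw [← u.equivFun.apply_symm_apply v]
  exact (Algebra.leftMulMatrix_mulVec_repr u x (u.equivFun.symm v)).symm

end MulVec

section Degeneration

variable {k A C Q : Type*} [Field k] [CommRing A] [Ring C] [Algebra k A] [Algebra A C]
  {𝒜 : ℕ → Submodule k A} [GradedAlgebra 𝒜]

theorem mapMatrix_gradedScale_leftMulMatrix [Fintype Q] [DecidableEq Q] (u : Basis Q A C) {a : A}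
    (ha : a ∈ 𝒜 1) (c : C) {t : k} (ht : t ≠ 0) :
    (gradedScale 𝒜 t).mapMatrix (Algebra.leftMulMatrix u (algebraMap A C (t⁻¹ • a) + c)) =
      algebraMap A (Matrix Q Q A) a +
        (gradedScale 𝒜 t).mapMatrix (Algebra.leftMulMatrix u c) := by
  have ha' : gradedScale 𝒜 t (t⁻¹ • a) = a := by
    rw [map_smul, gradedScale_of_mem t ha, pow_one, inv_smul_smul₀ ht]
  rw [map_add, map_add, AlgHom.commutes]
  simp [Matrix.algebraMap_eq_diagonal, Matrix.diagonal_map, Pi.algebraMap_def, ha']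

theorem matrix_map_gradedScale_mem_polynomialFamilies [Finite Q] (N : Matrix Q Q A) :
    (fun t ↦ N.map (gradedScale 𝒜 t)) ∈ polynomialFamilies k (Matrix Q Q A) :=
  polynomialFamilies.pi_mem fun i ↦ polynomialFamilies.pi_mem fun j ↦
    gradedScale_mem_polynomialFamilies 𝒜 (N i j)

theorem exists_finrank_ker_mulLeft_pow_le_tensorProduct [Finite Q] [Infinite k] [Nontrivial A]
    [FiniteDimensional k A] [Algebra k C] [IsScalarTower k A C] {B : Type*} [Ring B]
    [Algebra k B] (h𝒜 : 𝒜 0 = 1) (u : Basis Q A C) {π : C →ₐ[k] B}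
    (hπ : Function.Surjective π)
    (hker : RingHom.ker π = (HomogeneousIdeal.irrelevant 𝒜).toIdeal.map (algebraMap A C))
    {a : A} (ha : a ∈ 𝒜 1) (c : C) (n : ℕ) :
    ∃ t : k, finrank k (LinearMap.mulLeft k (algebraMap A C (t • a) + c) ^ n).ker ≤
      finrank k (LinearMap.mulLeft k (a ⊗ₜ[k] 1 + 1 ⊗ₜ π c) ^ n).ker := by
  classical
  have := Fintype.ofFinite Q
  obtain ⟨ε, hε⟩ := exists_augmentation h𝒜
  have hkerε : (HomogeneousIdeal.irrelevant 𝒜).toIdeal = RingHom.ker ε := by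
    ext x
    rw [HomogeneousIdeal.toIdeal_irrelevant, RingHom.mem_ker, ← hε, RingHom.mem_ker,
      FaithfulSMul.algebraMap_eq_zero_iff]
  obtain ⟨b, hb⟩ := exists_basis_repr_apply_eq u hπ (hkerε ▸ hker)
  have := b.finiteDimensional_of_finite
  let N := Algebra.leftMulMatrix u c
  let G (t : k) : Matrix Q Q A := algebraMap A _ a + (gradedScale 𝒜 t).mapMatrix N
  have hG : (fun t ↦ Matrix.mulVecBilin k k (G t)) ∈ polynomialFamilies k (End k (Q → A)) :=
    polynomialFamilies.map_mem _ <| add_mem (polynomialFamilies.const_mem _)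
      (matrix_map_gradedScale_mem_polynomialFamilies N)
  have hG₀ : G 0 = Algebra.leftMulMatrix (Algebra.TensorProduct.basis A b)
      (a ⊗ₜ 1 + 1 ⊗ₜ π c) := by
    rw [leftMulMatrix_basis_tmul_one_add_one_tmul, leftMulMatrix_apply_eq_mapMatrix u hb]
    refine congrArg (algebraMap A _ a + ·) (Matrix.ext fun i j ↦ ?_)
    exact (gradedScale_zero 𝒜 _).trans (hε _).symm
  obtain ⟨t, ht, hle⟩ := ((eventually_cofinite_ne (0 : k)).and <|
    polynomialFamilies.eventually_finrank_ker_le (polynomialFamilies.pow_mem hG n) 0).exists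
  refine ⟨t⁻¹, ?_⟩
  calc
    _ ≤ finrank k (Matrix.mulVecBilin k k (G t) ^ n : End k (Q → A)).ker := by
      rw [show G t = _ from (mapMatrix_gradedScale_leftMulMatrix u ha c ht).symm]
      exact finrank_ker_mulLeft_pow_le_mulVecBilin_mapMatrix u
        (gradedScale_injective 𝒜 (.mk0 t ht)) _ n
    _ ≤ finrank k (Matrix.mulVecBilin k k (G 0) ^ n : End k (Q → A)).ker := hle
    _ ≤ _ := by
      rw [hG₀]
      exact finrank_ker_mulVecBilin_pow_le_mulLeft _ _ n

end Degeneration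

theorem map_gradedAlgHom_eq_of_surjective {k B C ι : Type*} [CommSemiring k] [Semiring B]
    [Semiring C] [Algebra k B] [Algebra k C] [DecidableEq ι] [AddMonoid ι] {ℬ : ι → Submodule k B}
    {𝒞 : ι → Submodule k C} [GradedAlgebra ℬ] [GradedAlgebra 𝒞] (π : 𝒞 →ₐᵍ[k] ℬ)
    (hπ : Function.Surjective π) (i : ι) : (𝒞 i).map π.toAlgHom.toLinearMap = ℬ i := by
  refine le_antisymm (Submodule.map_le_iff_le_comap.2 fun c hc ↦ π.map_mem hc) fun b hb ↦ ?_
  obtain ⟨c, rfl⟩ := hπ b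
  refine ⟨DirectSum.decompose 𝒞 c i, SetLike.coe_mem _, ?_⟩
  exact (map_directSumDecompose 𝒞 ℬ π).trans (DirectSum.decompose_of_mem_same ℬ hb)

theorem free_extension_generic_jordan_type_dominates_tensor_product_general
    {k A B C : Type*} [Field k] [Infinite k] [CommRing A] [Ring B] [Ring C]
    [Algebra k A] [Algebra k B] [Algebra k C] [Algebra A C] [IsScalarTower k A C]
    [FiniteDimensional k C] [Module.Free A C] (𝒜 : ℕ → Submodule k A) [GradedAlgebra 𝒜]
    (h𝒜 : 𝒜 0 = 1) {π : C →ₐ[k] B} (hπ : Function.Surjective π)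
    (hker : RingHom.ker π = (HomogeneousIdeal.irrelevant 𝒜).toIdeal.map (algebraMap A C))
    {V : Submodule k C} (hV : ∀ a ∈ 𝒜 1, algebraMap A C a ∈ V) :
    ∃ ℓ ∈ V, ∀ m ∈ (𝒜 1).map
        (Algebra.TensorProduct.includeLeft : A →ₐ[k] A ⊗[k] B).toLinearMap ⊔
      (V.map π.toLinearMap).map
        (Algebra.TensorProduct.includeRight : B →ₐ[k] A ⊗[k] B).toLinearMap,
      ∀ n : ℕ, finrank k (LinearMap.mulLeft k ℓ ^ n).ker ≤
        finrank k (LinearMap.mulLeft k m ^ n).ker := by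
  rcases subsingleton_or_nontrivial C with _ | _
  · exact ⟨0, V.zero_mem, fun m _ n ↦ by simp [finrank_zero_of_subsingleton]⟩
  have : Nontrivial A := (algebraMap A C).domain_nontrivial
  have : FiniteDimensional k A := .of_injective (IsScalarTower.toAlgHom k A C).toLinearMap
    (FaithfulSMul.algebraMap_injective A C)
  have : Module.Finite A C := .of_restrictScalars_finite k A C
  obtain ⟨ℓ, hℓ⟩ := exists_forall_finrank_ker_pow_le (LinearMap.mul k C ∘ₗ V.subtype)
  refine ⟨ℓ, ℓ.2, fun m hm n ↦ ?_⟩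
  obtain ⟨_, ⟨a, ha, rfl⟩, _, ⟨_, ⟨c, hc, rfl⟩, rfl⟩, rfl⟩ := Submodule.mem_sup.1 hm
  obtain ⟨t, ht⟩ := exists_finrank_ker_mulLeft_pow_le_tensorProduct h𝒜
    (Module.Free.chooseBasis A C) hπ hker ha c n
  exact (hℓ ⟨_, V.add_mem (hV _ ((𝒜 1).smul_mem t ha)) hc⟩ n).trans ht

/-- **Theorem (Theorem 2.2 / TPthm).** If `C` is a free extension of the graded Artinian
algebra `A` with fiber `B`, over an infinite field `k`, then the generic linear Jordan type
of `C` dominates that of `A ⊗ₖ B`: there is a linear form `ℓ ∈ C₁` such that for every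
linear form `m ∈ (A ⊗ₖ B)₁` and every `n`, `dim ker((×ℓ)^n) ≤ dim ker((×m)^n)`. -/
theorem free_extension_generic_jordan_type_dominates_tensor_product
    (k : Type*) [Field k] [Infinite k]
    (A B C : Type*) [CommRing A] [CommRing B] [CommRing C]
    [Algebra k A] [Algebra k B] [Algebra k C]
    [FiniteDimensional k A] [FiniteDimensional k B] [FiniteDimensional k C]
    (𝒜 : ℕ → Submodule k A) (ℬ : ℕ → Submodule k B) (𝒞 : ℕ → Submodule k C)
    [GradedAlgebra 𝒜] [GradedAlgebra ℬ] [GradedAlgebra 𝒞]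
    (hA0 : 𝒜 0 = 1) (hB0 : ℬ 0 = 1) (hC0 : 𝒞 0 = 1)
    (ι : A →ₐ[k] C) (π : C →ₐ[k] B)
    (hιgr : ∀ i : ℕ, ∀ a ∈ 𝒜 i, ι a ∈ 𝒞 i)
    (hπgr : ∀ i : ℕ, ∀ c ∈ 𝒞 i, π c ∈ ℬ i)
    (hinj : Function.Injective ι)
    (hfree : @Module.Free A C _ _ (Module.compHom C (ι : A →+* C)))
    (hsurj : Function.Surjective π)
    (hker : RingHom.ker π = Ideal.span (⇑ι '' (⋃ i : ℕ, (𝒜 (i + 1) : Set A)))) :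
    ∃ ℓ ∈ 𝒞 1, ∀ m ∈ (Submodule.map
        (Algebra.TensorProduct.includeLeft : A →ₐ[k] A ⊗[k] B).toLinearMap (𝒜 1) ⊔
      Submodule.map
        (Algebra.TensorProduct.includeRight : B →ₐ[k] A ⊗[k] B).toLinearMap (ℬ 1)),
      ∀ n : ℕ,
        Module.finrank k (LinearMap.ker ((LinearMap.mulLeft k ℓ) ^ n)) ≤
          Module.finrank k (LinearMap.ker ((LinearMap.mulLeft k m) ^ n)) := by
  let _ : Algebra A C := (ι : A →+* C).toAlgebra
  have : IsScalarTower k A C := .of_algebraMap_eq fun r ↦ (ι.commutes r).symm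
  have : Module.Free A C := hfree
  rw [← map_gradedAlgHom_eq_of_surjective (𝒞 := 𝒞) (ℬ := ℬ) ⟨π, hπgr _ _⟩ hsurj 1]
  exact free_extension_generic_jordan_type_dominates_tensor_product_general 𝒜 hA0 hsurj
    (hker.trans (map_irrelevant_eq_span_iUnion_succ 𝒜 (algebraMap A C)).symm) (hιgr 1)
end

section
/- Let k be an infinite field and A a graded Artinian k-algebra. Then there exists a nonempty Zariski-open subset U ⊆ A_1 (the complement of the zero locus of a nonzero polynomial function on the finite-dimensional vector space A_1) such that for every ℓ ∈ U, every ℓ' ∈ A_1, and every integer k ≥ 0, dim_k ker((×ℓ)^k : A → A) ≤ dim_k ker((×ℓ')^k : A → A); that is, the Jordan type P_{ℓ'} is dominated by P_ℓ for all ℓ ∈ U, so A has a well-defined generic linear Jordan type. -/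
/-!
A matrix of polynomials has rank at least `r` exactly where some `r × r` minor does not vanish, so
near a given point, in the Zariski topology, the rank is at least its value there. Applied to the
`n`-th power of the generic member of a linear family of endomorphisms of `M`, at a point where the
kernel of this power is smallest, this gives a nonzero polynomial off whose zero locus that smallest
dimension is attained. Since `ker (f ^ n)` is constant for `n ≥ dim M`, only finitely many `n`
matter, and the product of the corresponding polynomials has a nonzero value because the field is
infinite.
-/

open Module MvPolynomial

section MatrixRank

variable {m n R K L : Type*} [Fintype n] [CommRing R] [Field K] [CommRing L] [IsDomain L]

lemma exists_linearIndependent_row_of_rank_eq [Finite m] {A : Matrix m n K} {r : ℕ}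
    (hA : A.rank = r) :
    ∃ rows : Fin r → m, LinearIndependent K (A.submatrix rows id).row := by
  rw [Matrix.rank_eq_finrank_span_row] at hA
  subst hA
  obtain ⟨v, hv, -, hli⟩ := Submodule.exists_fun_fin_finrank_span_eq K (Set.range A.row)
  choose rows hrows using hv
  have hrow : (A.submatrix rows id).row = v := funext hrows
  exact ⟨rows, hrow ▸ hli⟩

lemma exists_det_submatrix_ne_zero [Finite m] (A : Matrix m n K) :
    ∃ (rows : Fin A.rank → m) (cols : Fin A.rank → n), (A.submatrix rows cols).det ≠ 0 := by
  obtain ⟨rows, hrows⟩ := exists_linearIndependent_row_of_rank_eq (rfl : A.rank = _)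
  have hrank : (A.submatrix rows id).transpose.rank = A.rank := by
    rw [Matrix.rank_transpose, hrows.rank_matrix, Fintype.card_fin]
  obtain ⟨cols, hcols⟩ := exists_linearIndependent_row_of_rank_eq hrank
  refine ⟨rows, cols, ?_⟩
  rw [← Matrix.det_transpose, ← isUnit_iff_ne_zero, ← Matrix.isUnit_iff_isUnit_det]
  exact Matrix.linearIndependent_rows_iff_isUnit.mp hcols

lemma le_rank_of_det_submatrix_ne_zero {A : Matrix m n L} {r : ℕ} {rows : Fin r → m}
    {cols : Fin r → n} (h : (A.submatrix rows cols).det ≠ 0) : r ≤ A.rank :=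
  calc
    r = (A.submatrix rows cols).rank := by rw [Matrix.rank_of_det_ne_zero h, Fintype.card_fin]
    _ ≤ A.rank := A.rank_submatrix_le rows cols

lemma exists_forall_rank_map_le [Finite m] (P : Matrix m n R) (f₀ : R →+* K) :
    ∃ d : R, f₀ d ≠ 0 ∧ ∀ f : R →+* L, f d ≠ 0 → (P.map f₀).rank ≤ (P.map f).rank := by
  obtain ⟨rows, cols, hdet⟩ := exists_det_submatrix_ne_zero (P.map f₀)
  refine ⟨(P.submatrix rows cols).det, ?_, fun f hf => ?_⟩
  · rwa [f₀.map_det]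
  · rw [f.map_det] at hf
    exact le_rank_of_det_submatrix_ne_zero hf

end MatrixRank

section LinearFamily

lemma exists_eval_repr_ne_zero {R V ι : Type*} [CommRing R] [IsDomain R] [Infinite R]
    [AddCommGroup V] [Module R V] [Finite ι] (b : Basis ι R V) {F : MvPolynomial ι R}
    (hF : F ≠ 0) : ∃ v, eval (b.repr v) F ≠ 0 := by
  obtain ⟨x, hx⟩ : ∃ x, eval x F ≠ 0 := by
    by_contra! hzero
    exact hF (MvPolynomial.funext fun x => by rw [hzero x, map_zero])
  exact ⟨b.equivFun.symm x, by rwa [← b.equivFun_apply, LinearEquiv.apply_symm_apply]⟩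

section GenericMatrix

variable {R V M ι κ : Type*} [CommRing R] [AddCommGroup V] [Module R V] [AddCommGroup M]
  [Module R M] [Fintype ι] [Fintype κ] [DecidableEq ι] [DecidableEq κ]

/-- The matrix of the generic member of a linear family `φ` of endomorphisms: its entries are linear
forms in the coordinates, with respect to `b`, of the parameter. -/
noncomputable def genericMatrix (φ : V →ₗ[R] End R M) (b : Basis ι R V) (c : Basis κ R M) :
    Matrix κ κ (MvPolynomial ι R) :=
  Matrix.of fun i j => φ.toMvPolynomial b c.end (i, j)

lemma genericMatrix_map_eval (φ : V →ₗ[R] End R M) (b : Basis ι R V) (c : Basis κ R M) (v : V) :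
    (genericMatrix φ b c).map (eval (b.repr v)) = LinearMap.toMatrix c c (φ v) := by
  ext i j
  rw [genericMatrix, Matrix.map_apply, Matrix.of_apply, LinearMap.toMvPolynomial_eval_eq_apply,
    LinearEquiv.symm_apply_apply]
  rfl

lemma genericMatrix_pow_map_eval (φ : V →ₗ[R] End R M) (b : Basis ι R V) (c : Basis κ R M)
    (n : ℕ) (v : V) :
    (genericMatrix φ b c ^ n).map (eval (b.repr v)) = LinearMap.toMatrix c c (φ v ^ n) := by
  rw [Matrix.map_pow, genericMatrix_map_eval, LinearMap.toMatrix_pow]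

end GenericMatrix

variable {k V M ι : Type*} [Field k] [AddCommGroup V] [Module k V] [AddCommGroup M] [Module k M]

lemma finrank_ker_le_iff_rank_toMatrix_le {κ : Type*} [Fintype κ] [DecidableEq κ] (c : Basis κ k M)
    (f g : End k M) :
    finrank k f.ker ≤ finrank k g.ker ↔
      (LinearMap.toMatrix c c g).rank ≤ (LinearMap.toMatrix c c f).rank := by
  have := c.finiteDimensional_of_finite
  have rank_nullity (h : End k M) :
      (LinearMap.toMatrix c c h).rank + finrank k h.ker = finrank k M := by
    rw [Matrix.rank_eq_finrank_range_toLin _ c c, Matrix.toLin_toMatrix,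
      h.finrank_range_add_finrank_ker]
  have hf := rank_nullity f
  have hg := rank_nullity g
  lia

variable [FiniteDimensional k M]

lemma ker_pow_min_finrank (f : End k M) (n : ℕ) :
    (f ^ min n (finrank k M)).ker = (f ^ n).ker := by
  rcases le_total n (finrank k M) with hn | hn
  · rw [min_eq_left hn]
  · rw [min_eq_right hn, End.ker_pow_eq_ker_pow_finrank_of_le hn]

variable [Finite ι]

lemma exists_forall_finrank_ker_pow_le_s3 (φ : V →ₗ[k] End k M) (b : Basis ι k V) (n : ℕ) :
    ∃ F : MvPolynomial ι k, F ≠ 0 ∧ ∀ v, eval (b.repr v) F ≠ 0 →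
      ∀ w, finrank k (φ v ^ n).ker ≤ finrank k (φ w ^ n).ker := by
  classical
  have := Fintype.ofFinite ι
  let c := finBasis k M
  let v₀ := Function.argmin fun v => finrank k (φ v ^ n).ker
  obtain ⟨F, hF₀, hF⟩ :=
    exists_forall_rank_map_le (L := k) (genericMatrix φ b c ^ n) (eval (b.repr v₀))
  refine ⟨F, fun h => hF₀ (by rw [h, map_zero]), fun v hv w => ?_⟩
  have hrank := hF _ hv
  rw [genericMatrix_pow_map_eval, genericMatrix_pow_map_eval] at hrank
  calc
    finrank k (φ v ^ n).ker ≤ finrank k (φ v₀ ^ n).ker :=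
      (finrank_ker_le_iff_rank_toMatrix_le c _ _).mpr hrank
    _ ≤ finrank k (φ w ^ n).ker := Function.argmin_le (fun v => finrank k (φ v ^ n).ker) w

theorem generic_linear_jordan_type_exists_general [Infinite k] (φ : V →ₗ[k] End k M)
    (b : Basis ι k V) :
    ∃ F : MvPolynomial ι k, F ≠ 0 ∧ (∃ v, eval (b.repr v) F ≠ 0) ∧
      ∀ v, eval (b.repr v) F ≠ 0 →
        ∀ w, ∀ n : ℕ, finrank k (φ v ^ n).ker ≤ finrank k (φ w ^ n).ker := by
  choose p hp₀ hp using exists_forall_finrank_ker_pow_le_s3 φ b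
  let F := ∏ n ∈ Finset.range (finrank k M + 1), p n
  have hF : F ≠ 0 := Finset.prod_ne_zero_iff.mpr fun n _ => hp₀ n
  refine ⟨F, hF, exists_eval_repr_ne_zero b hF, fun v hv w n => ?_⟩
  rw [map_prod, Finset.prod_ne_zero_iff] at hv
  rw [← ker_pow_min_finrank (φ v), ← ker_pow_min_finrank (φ w)]
  exact hp _ v (hv _ (Finset.mem_range_succ_iff.mpr (min_le_right _ _))) w

end LinearFamily

/-- **Proposition (Prop. 1.3 / propdef:GenJorType, graded case).** Over an infinite field,
a graded Artinian algebra `A` has a generic linear Jordan type: there is a nonempty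
Zariski-open subset `U ⊆ A₁` (the nonvanishing locus of a nonzero polynomial function on
`A₁`, written in coordinates with respect to a basis of `A₁`) such that for every `ℓ ∈ U`,
every `ℓ' ∈ A₁`, and every `n`, `dim ker((×ℓ)^n) ≤ dim ker((×ℓ')^n)`, i.e. `P_{ℓ'} ≤ P_ℓ`. -/
theorem generic_linear_jordan_type_exists
    (k : Type*) [Field k] [Infinite k]
    (A : Type*) [CommRing A] [Algebra k A] [FiniteDimensional k A]
    (𝒜 : ℕ → Submodule k A) [GradedAlgebra 𝒜] (hA0 : 𝒜 0 = 1) :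
    ∃ (F : MvPolynomial (Fin (Module.finrank k (𝒜 1))) k)
      (b : Module.Basis (Fin (Module.finrank k (𝒜 1))) k (𝒜 1)),
      F ≠ 0 ∧
      (∃ ℓ : 𝒜 1, MvPolynomial.eval (fun i => b.repr ℓ i) F ≠ 0) ∧
      ∀ ℓ : 𝒜 1, MvPolynomial.eval (fun i => b.repr ℓ i) F ≠ 0 →
        ∀ ℓ' ∈ 𝒜 1, ∀ n : ℕ,
          Module.finrank k (LinearMap.ker ((LinearMap.mulLeft k (ℓ : A)) ^ n)) ≤
            Module.finrank k (LinearMap.ker ((LinearMap.mulLeft k ℓ') ^ n)) := by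
  obtain ⟨F, hF, hU, hmin⟩ := generic_linear_jordan_type_exists_general
    (LinearMap.mul k A ∘ₗ (𝒜 1).subtype) (finBasis k (𝒜 1))
  exact ⟨F, finBasis k (𝒜 1), hF, hU, fun ℓ hℓ ℓ' hℓ' n => hmin ℓ hℓ ⟨ℓ', hℓ'⟩ n⟩
end

section
/- Let A be a graded Artinian algebra over a field k with Hilbert function h_i = dim_k A_i for 0 ≤ i ≤ j_A. Then for every linear form ℓ ∈ A_1 and every integer k ≥ 0, the sum of the k largest values among h_0, h_1, …, h_{j_A} is at most dim_k ker((×ℓ)^k : A → A). Equivalently, the Jordan type P_ℓ is bounded above in the dominance order by the conjugate partition H^∨(A) of the Hilbert function. -/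
/-!
Let `T` be multiplication by a linear form. Since `dim ker (T ^ n) = dim A - rank (T ^ n)`, it
suffices to bound the rank of `T ^ n` by the total dimension of the graded pieces whose degree lies
outside `s`. On the piece of degree `i`, the map `T ^ n` factors through the pieces of degrees
`i, …, i + n`; as `s` has at most `n` elements, the `i`-th natural number outside `s` (counted from
`0`) is one of these degrees. Distinct `i` use distinct pieces, so summing over `i` gives the bound.
-/

open Finset Module

theorem exists_injective_notMem_le_add_card (s : Finset ℕ) :
    ∃ c : ℕ → ℕ, c.Injective ∧ ∀ i, c i ∉ s ∧ i ≤ c i ∧ c i ≤ i + #s := by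
  have hinf : (Set.ofPred (· ∉ s)).Infinite := s.finite_toSet.infinite_compl
  refine ⟨Nat.nth (· ∉ s), Nat.nth_injective hinf, fun i ↦
    ⟨Nat.nth_mem_of_infinite hinf i, (Nat.nth_strictMono hinf).le_apply, ?_⟩⟩
  set m := Nat.nth (· ∉ s) i
  have hcount : #{x ∈ range m | x ∉ s} = i := by
    rw [← Nat.count_eq_card_filter_range, Nat.count_nth_of_infinite hinf]
  have hmem : #{x ∈ range m | x ∈ s} ≤ #s :=
    card_le_card fun x hx ↦ (mem_filter.1 hx).2
  have hsplit := card_filter_add_card_filter_not (s := range m) (· ∈ s)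
  rw [card_range] at hsplit
  omega

theorem exists_finset_sup_eq_top_of_iSup_eq_top {R M ι : Type*} [Semiring R] [AddCommMonoid M]
    [Module R M] [Module.Finite R M] {U : ι → Submodule R M} (hU : ⨆ i, U i = ⊤) :
    ∃ S : Finset ι, S.sup U = ⊤ := by
  have hcompact : IsCompactElement (⊤ : Submodule R M) :=
    (Submodule.fg_iff_compact ⊤).1 Module.Finite.fg_top
  obtain ⟨S, hS⟩ := CompleteLattice.IsCompactElement.exists_finset_of_le_iSup _ hcompact U hU.ge
  exact ⟨S, by rwa [Finset.sup_eq_iSup, eq_top_iff]⟩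

section FiniteDimensional

variable {K V W ι : Type*} [DivisionRing K] [AddCommGroup V] [Module K V] [FiniteDimensional K V]
  [AddCommGroup W] [Module K W]

theorem finrank_finset_sup_le_sum_finrank (S : Finset ι) (U : ι → Submodule K V) :
    finrank K (S.sup U : Submodule K V) ≤ ∑ i ∈ S, finrank K (U i) := by
  classical
  induction S using Finset.induction_on with
  | empty => simp
  | insert a S ha ih =>
    rw [sup_insert, sum_insert ha]
    exact (Submodule.finrank_add_le_finrank_add_finrank _ _).trans (Nat.add_le_add_left ih _)

theorem finrank_finset_sup_eq_sum_finrank_of_supIndep {S : Finset ι} {U : ι → Submodule K V}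
    (hU : S.SupIndep U) :
    finrank K (S.sup U : Submodule K V) = ∑ i ∈ S, finrank K (U i) := by
  classical
  induction S using Finset.induction_on with
  | empty => simp
  | insert a S ha ih =>
    have hdisj : Disjoint (U a) (S.sup U) := hU (subset_insert a S) (mem_insert_self a S) ha
    rw [sup_insert, sum_insert ha, ← ih (hU.subset (subset_insert a S)),
      ← Submodule.finrank_sup_add_finrank_inf_eq, hdisj.eq_bot, finrank_bot, add_zero]

theorem sum_finrank_le_finrank_of_iSupIndep {U : ι → Submodule K V} (hU : iSupIndep U)
    (S : Finset ι) : ∑ i ∈ S, finrank K (U i) ≤ finrank K V :=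
  (finrank_finset_sup_eq_sum_finrank_of_supIndep (hU.supIndep' S)).symm.trans_le
    (Submodule.finrank_le _)

theorem finrank_range_le_sum_finrank_map {S : Finset ι} {U : ι → Submodule K W}
    (hU : S.sup U = ⊤) (f : W →ₗ[K] V) :
    finrank K (LinearMap.range f) ≤ ∑ i ∈ S, finrank K ((U i).map f) := by
  have hrange : LinearMap.range f = S.sup fun i ↦ (U i).map f := by
    simp only [← Submodule.map_top, ← hU, Finset.sup_eq_iSup, Submodule.map_iSup]
  rw [hrange]
  exact finrank_finset_sup_le_sum_finrank S _

end FiniteDimensional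

theorem map_pow_le_of_map_le_add {ι R M : Type*} [AddMonoid ι] [Semiring R] [AddCommMonoid M]
    [Module R M] {T : End R M} {𝒱 : ι → Submodule R M} {d : ι}
    (hT : ∀ i, (𝒱 i).map T ≤ 𝒱 (i + d)) (i : ι) (p : ℕ) :
    (𝒱 i).map (T ^ p) ≤ 𝒱 (i + p • d) := by
  induction p with
  | zero => rw [pow_zero, End.one_eq_id, Submodule.map_id, zero_nsmul, add_zero]
  | succ p ih =>
    rw [pow_succ', End.mul_eq_comp, Submodule.map_comp, succ_nsmul, ← add_assoc]
    exact (Submodule.map_mono ih).trans (hT (i + p • d))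

section DegreeOne

variable {K V : Type*} [DivisionRing K] [AddCommGroup V] [Module K V] [FiniteDimensional K V]
  {T : End K V} {𝒱 : ℕ → Submodule K V}

theorem finrank_map_pow_le_of_le_of_le (hT : ∀ i, (𝒱 i).map T ≤ 𝒱 (i + 1)) {i j n : ℕ}
    (hij : i ≤ j) (hjn : j ≤ i + n) :
    finrank K ((𝒱 i).map (T ^ n)) ≤ finrank K (𝒱 j) := by
  obtain ⟨p, rfl⟩ := Nat.exists_eq_add_of_le hij
  obtain ⟨q, rfl⟩ := Nat.exists_eq_add_of_le' (Nat.le_of_add_le_add_left hjn)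
  calc finrank K ((𝒱 i).map (T ^ (q + p)))
      = finrank K (((𝒱 i).map (T ^ p)).map (T ^ q)) := by
        rw [pow_add, End.mul_eq_comp, Submodule.map_comp]
    _ ≤ finrank K ((𝒱 i).map (T ^ p)) := Submodule.finrank_map_le _ _
    _ ≤ finrank K (𝒱 (i + p)) :=
        Submodule.finrank_mono (by simpa using map_pow_le_of_map_le_add hT i p)

theorem exists_disjoint_finrank_range_pow_le_sum (hT : ∀ i, (𝒱 i).map T ≤ 𝒱 (i + 1))
    (h𝒱 : ⨆ i, 𝒱 i = ⊤) {s : Finset ℕ} {n : ℕ} (hs : #s ≤ n) :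
    ∃ t : Finset ℕ, Disjoint t s ∧
      finrank K (LinearMap.range (T ^ n)) ≤ ∑ j ∈ t, finrank K (𝒱 j) := by
  obtain ⟨S, hS⟩ := exists_finset_sup_eq_top_of_iSup_eq_top h𝒱
  obtain ⟨c, hinj, hc⟩ := exists_injective_notMem_le_add_card s
  refine ⟨S.map ⟨c, hinj⟩, ?_, ?_⟩
  · rw [disjoint_left, forall_mem_map]
    exact fun i _ ↦ (hc i).1
  · calc finrank K (LinearMap.range (T ^ n))
        ≤ ∑ i ∈ S, finrank K ((𝒱 i).map (T ^ n)) := finrank_range_le_sum_finrank_map hS _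
      _ ≤ ∑ i ∈ S, finrank K (𝒱 (c i)) := by
        gcongr with i
        exact finrank_map_pow_le_of_le_of_le hT (hc i).2.1
          ((hc i).2.2.trans (Nat.add_le_add_left hs i))
      _ = ∑ j ∈ S.map ⟨c, hinj⟩, finrank K (𝒱 j) :=
        (sum_map S ⟨c, hinj⟩ fun j ↦ finrank K (𝒱 j)).symm

end DegreeOne

theorem map_mulLeft_le_of_mem {ι R A : Type*} [AddCommMonoid ι] [CommSemiring R] [Semiring A]
    [Algebra R A] (𝒜 : ι → Submodule R A) [SetLike.GradedMonoid 𝒜] {a : A} {d : ι} (ha : a ∈ 𝒜 d)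
    (i : ι) : (𝒜 i).map (LinearMap.mulLeft R a) ≤ 𝒜 (i + d) := by
  rintro _ ⟨x, hx, rfl⟩
  rw [add_comm]
  exact SetLike.mul_mem_graded ha hx

theorem jordan_type_le_conjugate_hilbert_function_graded_general
    {K V : Type*} [DivisionRing K] [AddCommGroup V] [Module K V] [FiniteDimensional K V]
    {T : End K V} {𝒱 : ℕ → Submodule K V} (hT : ∀ i, (𝒱 i).map T ≤ 𝒱 (i + 1))
    (h𝒱 : DirectSum.IsInternal 𝒱) {s : Finset ℕ} {n : ℕ} (hs : #s ≤ n) :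
    ∑ i ∈ s, finrank K (𝒱 i) ≤ finrank K (LinearMap.ker (T ^ n)) := by
  obtain ⟨t, hts, hrange⟩ :=
    exists_disjoint_finrank_range_pow_le_sum hT h𝒱.submodule_iSup_eq_top hs
  have hsum := sum_finrank_le_finrank_of_iSupIndep h𝒱.submodule_iSupIndep (t.disjUnion s hts)
  rw [sum_disjUnion] at hsum
  have hrank := LinearMap.finrank_range_add_finrank_ker (T ^ n)
  omega

/-- **Proposition (Prop. 1.5 / prop:HFBound, graded case).** For a graded Artinian algebra
`A` with socle degree `j_A` and any linear form `ℓ ∈ A₁`, the Jordan type `P_ℓ` is bounded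
above in the dominance order by the conjugate `H^∨(A)` of the Hilbert function; equivalently,
for every `n`, the sum of the `n` largest values among `h_0, …, h_{j_A}` is at most
`dim ker((×ℓ)^n)` (i.e. the sum of any at most `n` of the `h_i` is at most this dimension). -/
theorem jordan_type_le_conjugate_hilbert_function_graded
    (k : Type*) [Field k]
    (A : Type*) [CommRing A] [Algebra k A] [FiniteDimensional k A]
    (𝒜 : ℕ → Submodule k A) [GradedAlgebra 𝒜] (hA0 : 𝒜 0 = 1)
    (jA : ℕ) (hjA : 𝒜 jA ≠ ⊥ ∧ ∀ i : ℕ, jA < i → 𝒜 i = ⊥) :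
    ∀ ℓ ∈ 𝒜 1, ∀ n : ℕ, ∀ s : Finset ℕ, s ⊆ Finset.range (jA + 1) → s.card ≤ n →
      ∑ i ∈ s, Module.finrank k (𝒜 i) ≤
        Module.finrank k (LinearMap.ker ((LinearMap.mulLeft k ℓ) ^ n)) := by
  intro ℓ hℓ n s _ hs
  exact jordan_type_le_conjugate_hilbert_function_graded_general (map_mulLeft_le_of_mem 𝒜 hℓ)
    (DirectSum.Decomposition.isInternal 𝒜) hs
end

section
/- Let (A, m, k) be a local Artinian k-algebra with residue field k, and let h_i = dim_k(m^i/m^{i+1}) be its Hilbert function. Then for every ℓ ∈ m and every integer k ≥ 0, the sum of the k largest values among the h_i is at most dim_k ker((×ℓ)^k : A → A). Equivalently, the Jordan type P_ℓ is bounded above in the dominance order by the conjugate partition H^∨(A) of the Hilbert function. -/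
/-!
Let `T` be an endomorphism carrying `F i` into `F (i + 1)` for every step of a decreasing
filtration `F`. By rank-nullity, `dim (F i ⊓ ker T^(n+1)) = dim F i - dim T^(n+1) (F i)`, and
`T^(n+1) (F i) ≤ T^n (F (i + 1))`; hence replacing `F (i + 1) ⊓ ker T^n` by `F i ⊓ ker T^(n+1)`
gains at least `dim F i - dim F (i + 1)`. Adding the chosen indices from the largest to the smallest
uses up one power of `T` per index. Multiplication by `ℓ ∈ I` is such an endomorphism for the powers
of `I`.
-/

section Filtration

open Module

variable {k V W U : Type*} [DivisionRing k] [AddCommGroup V] [Module k V]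
  [AddCommGroup W] [Module k W] [AddCommGroup U] [Module k U]

theorem finrank_map_add_finrank_inf_ker (f : V →ₗ[k] W) (P : Submodule k V)
    [FiniteDimensional k P] :
    finrank k (P.map f) + finrank k (P ⊓ LinearMap.ker f : Submodule k V) = finrank k P := by
  have rank_nullity := (f.domRestrict P).finrank_range_add_finrank_ker
  rwa [LinearMap.range_domRestrict, LinearMap.ker_domRestrict,
    ← Submodule.finrank_map_subtype_eq, Submodule.map_comap_subtype] at rank_nullity

theorem finrank_add_finrank_inf_ker_le_of_map_le (f : V →ₗ[k] W) (g : W →ₗ[k] U)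
    {P : Submodule k V} {Q : Submodule k W} [FiniteDimensional k P] [FiniteDimensional k Q]
    (hPQ : P.map f ≤ Q) :
    finrank k P + finrank k (Q ⊓ LinearMap.ker g : Submodule k W) ≤
      finrank k (P ⊓ LinearMap.ker (g ∘ₗ f) : Submodule k V) + finrank k Q := by
  have hP := finrank_map_add_finrank_inf_ker (g ∘ₗ f) P
  have hQ := finrank_map_add_finrank_inf_ker g Q
  have map_le : finrank k (P.map (g ∘ₗ f)) ≤ finrank k (Q.map g) := by
    rw [Submodule.map_comp]
    exact Submodule.finrank_mono (Submodule.map_mono hPQ)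
  omega

theorem sum_finrank_sub_finrank_le_finrank_inf_ker_pow (T : End k V) {F : ℕ → Submodule k V}
    [∀ i, FiniteDimensional k (F i)] (hF : Antitone F) (hT : ∀ i, (F i).map T ≤ F (i + 1))
    {s : Finset ℕ} {j : ℕ} (hj : ∀ i ∈ s, j ≤ i) :
    ∑ i ∈ s, (finrank k (F i) - finrank k (F (i + 1))) ≤
      finrank k (F j ⊓ LinearMap.ker (T ^ s.card) : Submodule k V) := by
  induction s using Finset.induction_on_min generalizing j with
  | empty => simp
  | insert i s hi ih =>
    have hi_notMem : i ∉ s := fun his => (hi i his).false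
    have sum_le : ∑ l ∈ s, (finrank k (F l) - finrank k (F (l + 1))) ≤
        finrank k (F (i + 1) ⊓ LinearMap.ker (T ^ s.card) : Submodule k V) := ih hi
    have gain := finrank_add_finrank_inf_ker_le_of_map_le T (T ^ s.card) (hT i)
    rw [← End.mul_eq_comp, ← pow_succ] at gain
    have succ_le : finrank k (F (i + 1)) ≤ finrank k (F i) :=
      Submodule.finrank_mono (hF i.le_succ)
    have inf_ker_le : finrank k (F i ⊓ LinearMap.ker (T ^ (s.card + 1)) : Submodule k V) ≤
        finrank k (F j ⊓ LinearMap.ker (T ^ (s.card + 1)) : Submodule k V) :=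
      Submodule.finrank_mono (inf_le_inf_right _ (hF (hj i (s.mem_insert_self i))))
    rw [Finset.sum_insert hi_notMem, Finset.card_insert_of_notMem hi_notMem]
    omega

theorem sum_finrank_sub_finrank_le_finrank_ker_pow [FiniteDimensional k V] (T : End k V)
    {F : ℕ → Submodule k V} (hF : Antitone F) (hT : ∀ i, (F i).map T ≤ F (i + 1))
    {n : ℕ} {s : Finset ℕ} (hs : s.card ≤ n) :
    ∑ i ∈ s, (finrank k (F i) - finrank k (F (i + 1))) ≤ finrank k (LinearMap.ker (T ^ n)) :=
  (sum_finrank_sub_finrank_le_finrank_inf_ker_pow T hF hT fun i _ => i.zero_le).trans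
    (Submodule.finrank_mono (inf_le_right.trans (T.iterateKer.monotone hs)))

end Filtration

theorem jordan_type_le_conjugate_hilbert_function_local_general
    {k A : Type*} [Field k] [Ring A] [Algebra k A] [FiniteDimensional k A]
    (I : Ideal A) [I.IsTwoSided] {ℓ : A} (hℓ : ℓ ∈ I) {n : ℕ} {s : Finset ℕ} (hs : s.card ≤ n) :
    ∑ i ∈ s,
      (Module.finrank k ((I ^ i).restrictScalars k) -
        Module.finrank k ((I ^ (i + 1)).restrictScalars k)) ≤
      Module.finrank k (LinearMap.ker (LinearMap.mulLeft k ℓ ^ n)) := by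
  refine sum_finrank_sub_finrank_le_finrank_ker_pow (LinearMap.mulLeft k ℓ)
    (F := fun i => (I ^ i).restrictScalars k) ?antitone ?map_le hs
  case antitone => exact fun i j hij => Ideal.pow_le_pow_right hij
  case map_le =>
    rintro i _ ⟨x, hx : x ∈ I ^ i, rfl⟩
    have mul_mem : ℓ * x ∈ I ^ (i + 1) := by
      rw [Ideal.IsTwoSided.pow_succ]
      exact Ideal.mul_mem_mul hℓ hx
    exact mul_mem

/-- **Proposition (Prop. 1.5 / prop:HFBound, local case).** For a local Artinian algebra
`(A, m, k)` with residue field `k` and Hilbert function `h_i = dim_k m^i/m^{i+1}`, and any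
`ℓ ∈ m`, the Jordan type `P_ℓ` is bounded above in the dominance order by the conjugate
`H^∨(A)` of the Hilbert function; equivalently, for every `n`, the sum of the `n` largest
values among the `h_i` is at most `dim ker((×ℓ)^n)` (i.e. the sum of any at most `n` of the
`h_i` is at most this dimension). -/
theorem jordan_type_le_conjugate_hilbert_function_local
    (k : Type*) [Field k]
    (A : Type*) [CommRing A] [Algebra k A] [FiniteDimensional k A] [IsLocalRing A]
    (hres : ∀ a : A, ∃ c : k, a - algebraMap k A c ∈ IsLocalRing.maximalIdeal A) :
    ∀ ℓ ∈ IsLocalRing.maximalIdeal A, ∀ n : ℕ, ∀ s : Finset ℕ, s.card ≤ n →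
      ∑ i ∈ s,
        (Module.finrank k ((IsLocalRing.maximalIdeal A ^ i).restrictScalars k) -
          Module.finrank k ((IsLocalRing.maximalIdeal A ^ (i + 1)).restrictScalars k)) ≤
        Module.finrank k (LinearMap.ker ((LinearMap.mulLeft k ℓ) ^ n)) := by
  intro ℓ hℓ n s hs
  exact jordan_type_le_conjugate_hilbert_function_local_general _ hℓ hs
end

section
/- Let k be a field, let W ⊂ GL_n(k) be a finite group acting on R = k[x_1,…,x_n] by linear substitutions, and let K ≤ W be a subgroup. If the invariant ring R^K is polynomial, then the coinvariant algebra R_W is a free extension of the relative coinvariant algebra R^K_W with fiber R_K: the map ι : R^K_W → R_W induced by the inclusion R^K ⊆ R is injective and makes R_W a free R^K_W-module, and the natural surjection π : R_W → R_K (induced by 𝔥(W) ⊆ 𝔥(K)) satisfies ker π = ι(m)·R_W, where m is the graded maximal ideal of R^K_W. -/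
/-- The subalgebra of `K`-invariants of a linear action of a group `G` on a `k`-algebra `R`,
for a subgroup `K ≤ G`. -/
def relInvariants (k R G : Type*) [CommSemiring k] [CommSemiring R] [Algebra k R]
    [Group G] [MulSemiringAction G R] [SMulCommClass G k R] (K : Subgroup G) :
    Subalgebra k R where
  carrier := {f | ∀ g ∈ K, g • f = f}
  mul_mem' := fun ha hb g hg => by rw [smul_mul', ha g hg, hb g hg]
  add_mem' := fun ha hb g hg => by rw [smul_add, ha g hg, hb g hg]
  algebraMap_mem' := fun c g hg => by
    rw [Algebra.algebraMap_eq_smul_one, smul_comm, smul_one]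

/-- The Hilbert ideal `𝔥(K)` of a subgroup `K`: the ideal of `R = k[x_1,…,x_n]` generated by
the `K`-invariant polynomials of positive degree (i.e. with zero constant term). -/
noncomputable def hilbertIdeal (k : Type*) [CommRing k] (n : ℕ) (G : Type*) [Group G]
    [MulSemiringAction G (MvPolynomial (Fin n) k)] (K : Subgroup G) :
    Ideal (MvPolynomial (Fin n) k) :=
  Ideal.span {f | (∀ g ∈ K, g • f = f) ∧ MvPolynomial.coeff 0 f = 0}

/-!
Write `R = k[x₁,…,xₙ]`, let `ε : R → k` be evaluation at the origin, and put `J = 𝔥(W) ∩ R^K`.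
Since `𝔥(W)` is generated by elements of `R^K`, we have `J R = 𝔥(W)`, so
`R_W = (R^K / J) ⊗ R` over `R^K`, and freeness of `R_W` is a statement about the finite
`R^K`-module `R` near the origin of `Spec R^K`.

The variables form an `R`-regular sequence in `ker ε`, and `ker ε` is the radical of `𝔥(W)`:
modulo `ker ε` the characteristic polynomial `∏ (T - g • f)` of `f ∈ ker ε` is `T ^ |W|`, so its
lower coefficients lie in `𝔥(W)`. Hence `𝔥(W)`, and by prime avoidance even `J`, contains an
`R`-regular sequence of length `n`. On the other hand the augmentation ideal of `R^K` is generated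
by `n` elements, as `R^K` is. So at the origin `R` localizes to a finite module of depth at least
`n` over a Noetherian local ring whose maximal ideal has `n` generators. Such a module is free, by
induction on `n`: divide by a regular element outside the square of the maximal ideal. As `R^K / J`
is local, it is an algebra over this localization, and freeness passes to `R_W` by base change.
-/

open scoped Pointwise
open CategoryTheory CategoryTheory.Abelian RingTheory.Sequence IsLocalRing TensorProduct

universe u v

section Regular

lemma isWeaklyRegular_replicate_of_smul_eq_self {R : Type*} [CommRing R] {e : R} (n : ℕ) :
    ∀ {M : Type*} [AddCommGroup M] [Module R M], (∀ x : M, e • x = x) →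
      IsWeaklyRegular M (List.replicate n e) := by
  induction n with
  | zero => exact fun _ ↦ .nil R _
  | succ n ih =>
    intro M _ _ he
    refine .cons (fun x y hxy ↦ ?_) (ih fun x ↦ ?_)
    · simpa only [he] using hxy
    · obtain ⟨x, rfl⟩ := Submodule.Quotient.mk_surjective _ x
      rw [← Submodule.Quotient.mk_smul, he]

lemma subsingleton_ext_quotSMulTop {R : Type u} [CommRing R] [Small.{v} R] {N M : ModuleCat.{v} R}
    {a : R} (ha : IsSMulRegular M a) {i : ℕ} (h₀ : Subsingleton (Ext N M i))
    (h₁ : Subsingleton (Ext N M (i + 1))) :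
    Subsingleton (Ext N (ModuleCat.of R (QuotSMulTop a M)) i) := by
  rw [← AddCommGrpCat.isZero_of_iff_subsingleton] at h₀ h₁
  exact AddCommGrpCat.subsingleton_of_isZero <| ShortComplex.Exact.isZero_of_both_zeros
    (Ext.covariant_sequence_exact₃' N ha.smulShortComplex_shortExact i (i + 1) rfl)
    (h₀.eq_zero_of_src _) (h₁.eq_zero_of_tgt _)

lemma isSMulRegular_iff_forall_notMem_associatedPrimes {R : Type*} [CommRing R]
    [IsNoetherianRing R] {M : Type*} [AddCommGroup M] [Module R M] {r : R} :
    IsSMulRegular M r ↔ ∀ p ∈ associatedPrimes R M, r ∉ p := by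
  have h := Set.ext_iff.mp (biUnion_associatedPrimes_eq_compl_regular R M) r
  simp only [Set.mem_iUnion, SetLike.mem_coe, exists_prop, Set.mem_compl_iff,
    Set.mem_ofPred_eq] at h
  simpa using not_congr h.symm

lemma exists_mem_isSMulRegular_of_mem_radical_map {A R : Type*} [CommRing A] [CommRing R]
    [Algebra A R] [IsNoetherianRing R] {M : Type*} [AddCommGroup M] [Module R M]
    [Module.Finite R M] {I : Ideal A} {r : R} (hr : r ∈ (I.map (algebraMap A R)).radical)
    (hreg : IsSMulRegular M r) : ∃ a ∈ I, IsSMulRegular M (algebraMap A R a) := by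
  by_contra! hI
  obtain ⟨p, hp, hIp⟩ : ∃ p ∈ associatedPrimes R M, I ≤ p.comap (algebraMap A R) := by
    refine (Ideal.subset_union_prime_finite (associatedPrimes.finite R M) ⊥ ⊥
      fun p hp _ _ ↦ have := hp.isPrime; Ideal.comap_isPrime _ p).mp fun a ha ↦ ?_
    simpa [isSMulRegular_iff_forall_notMem_associatedPrimes] using hI a ha
  have hp' : (I.map (algebraMap A R)).radical ≤ p :=
    hp.isPrime.radical_le_iff.mpr (Ideal.map_le_iff_le_comap.mpr hIp)
  exact isSMulRegular_iff_forall_notMem_associatedPrimes.mp hreg p hp (hp' hr)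

end Regular

section Depth

/-- `DepthGE I M n` says that the depth of `M` along the ideal `I` is at least `n`, i.e. that `I`
contains an `M`-regular sequence of length `n`. The sequence is only required to be weakly regular,
so that the depth of a finite module `M` with `I • M = M` is infinite. -/
def DepthGE {R : Type*} [CommRing R] (I : Ideal R) (M : Type*) [AddCommGroup M] [Module R M]
    (n : ℕ) : Prop :=
  ∃ rs : List R, rs.length = n ∧ (∀ r ∈ rs, r ∈ I) ∧ IsWeaklyRegular M rs

namespace DepthGE

variable {R : Type*} [CommRing R] {I : Ideal R} {M : Type*} [AddCommGroup M] [Module R M] {n : ℕ}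

lemma exists_mem_isSMulRegular (h : DepthGE I M (n + 1)) : ∃ r ∈ I, IsSMulRegular M r := by
  obtain ⟨_ | ⟨r, rs⟩, hlen, hmem, hreg⟩ := h
  · simp at hlen
  · exact ⟨r, hmem r (by simp), ((isWeaklyRegular_cons_iff M r rs).mp hreg).1⟩

lemma mono {J : Ideal R} (hIJ : I ≤ J) (h : DepthGE I M n) : DepthGE J M n :=
  let ⟨rs, hlen, hmem, hreg⟩ := h
  ⟨rs, hlen, fun r hr ↦ hIJ (hmem r hr), hreg⟩

lemma map {S : Type*} [CommRing S] [Algebra R S] [Module S M] [IsScalarTower R S M]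
    (h : DepthGE I M n) : DepthGE (I.map (algebraMap R S)) M n := by
  obtain ⟨rs, hlen, hmem, hreg⟩ := h
  exact ⟨rs.map (algebraMap R S), by simpa using hlen,
    List.forall_mem_map.mpr fun r hr ↦ Ideal.mem_map_of_mem _ (hmem r hr),
    (isWeaklyRegular_map_algebraMap_iff S M rs).mpr hreg⟩

lemma baseChange {S : Type*} [CommRing S] [Algebra R S] [Module.Flat R S]
    (h : DepthGE I M n) : DepthGE (I.map (algebraMap R S)) (S ⊗[R] M) n := by
  obtain ⟨rs, hlen, hmem, hreg⟩ := h
  exact ⟨rs.map (algebraMap R S), by simpa using hlen,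
    List.forall_mem_map.mpr fun r hr ↦ Ideal.mem_map_of_mem _ (hmem r hr),
    hreg.of_flat_of_isBaseChange (TensorProduct.isBaseChange R M S)⟩

lemma of_smul_top_eq_top [Module.Finite R M] (h : I • (⊤ : Submodule R M) = ⊤) (n : ℕ) :
    DepthGE I M n := by
  obtain ⟨e, heI, he⟩ := Submodule.exists_mem_and_smul_eq_self_of_fg_of_le_smul I
    (⊤ : Submodule R M) Module.Finite.fg_top h.ge
  exact ⟨List.replicate n e, List.length_replicate,
    fun r hr ↦ List.eq_of_mem_replicate hr ▸ heI,
    isWeaklyRegular_replicate_of_smul_eq_self n fun x ↦ he x trivial⟩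

lemma quotSMulTop {R : Type u} [CommRing R] [IsNoetherianRing R] [Small.{v} R] {I : Ideal R}
    {M : Type v} [AddCommGroup M] [Module R M] [Module.Finite R M] {n : ℕ}
    (h : DepthGE I M (n + 1)) {a : R} (ha : IsSMulRegular M a) :
    DepthGE I (QuotSMulTop a M) n := by
  by_cases hM' : I • (⊤ : Submodule R (QuotSMulTop a M)) = ⊤
  · exact of_smul_top_eq_top hM' n
  have hM : I • (⊤ : Submodule R M) ≠ ⊤ := fun hM ↦ hM' <| by
    simpa only [Submodule.map_smul'', Submodule.map_top, Submodule.range_mkQ] using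
      congrArg (Submodule.map (a • (⊤ : Submodule R M)).mkQ) hM
  obtain ⟨rs, hlen, hmem, hreg⟩ := h
  have hspan : Ideal.ofList rs ≤ I := Ideal.span_le.mpr hmem
  have hrs : ∃ rs : List R, rs.length = n + 1 ∧ (∀ r ∈ rs, r ∈ I) ∧ IsRegular M rs :=
    ⟨rs, hlen, hmem, hreg,
      fun h ↦ hM (top_le_iff.mp (h.le.trans (Submodule.smul_mono_left hspan)))⟩
  -- By Rees' theorem the depth is detected by the vanishing of `Ext (R ⧸ I) M`.
  have hext := ((ModuleCat.exists_isRegular_tfae I (n + 1) (ModuleCat.of R M) hM.lt_top).out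
    1 3).mpr hrs
  obtain ⟨ss, hlen', hmem', hss⟩ := ((ModuleCat.exists_isRegular_tfae I n
    (ModuleCat.of R (QuotSMulTop a M)) (lt_top_iff_ne_top.mpr hM')).out 1 3).mp
    fun i hi ↦ subsingleton_ext_quotSMulTop ha (hext i (by lia)) (hext (i + 1) (by lia))
  exact ⟨ss, hlen', hmem', hss.toIsWeaklyRegular⟩

section RadicalMap

variable {A : Type*} {R : Type u} [CommRing A] [CommRing R] [Algebra A R] [IsNoetherianRing R]
  [Small.{v} R] {I : Ideal A} {n : ℕ}

lemma exists_isWeaklyRegular_map_algebraMap {M : Type v} [AddCommGroup M] [Module R M]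
    [Module.Finite R M] (h : DepthGE (I.map (algebraMap A R)).radical M n) :
    ∃ rs : List A, rs.length = n ∧ (∀ r ∈ rs, r ∈ I) ∧
      IsWeaklyRegular M (rs.map (algebraMap A R)) := by
  induction n generalizing M with
  | zero => exact ⟨[], rfl, by simp, .nil R M⟩
  | succ n ih =>
    obtain ⟨r, hr, hreg⟩ := h.exists_mem_isSMulRegular
    obtain ⟨a, ha, hareg⟩ := exists_mem_isSMulRegular_of_mem_radical_map hr hreg
    obtain ⟨rs, hlen, hmem, hrs⟩ := ih (h.quotSMulTop hareg)
    exact ⟨a :: rs, congrArg (· + 1) hlen, List.forall_mem_cons.mpr ⟨ha, hmem⟩, hrs.cons hareg⟩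

lemma of_radical_map {M : Type v} [AddCommGroup M] [Module R M] [Module.Finite R M]
    [Module A M] [IsScalarTower A R M] (h : DepthGE (I.map (algebraMap A R)).radical M n) :
    DepthGE I M n :=
  let ⟨rs, hlen, hmem, hrs⟩ := h.exists_isWeaklyRegular_map_algebraMap
  ⟨rs, hlen, hmem, (isWeaklyRegular_map_algebraMap_iff R M rs).mp hrs⟩

end RadicalMap

end DepthGE

end Depth

section Local

variable {A : Type u} [CommRing A] [IsLocalRing A]

lemma exists_mem_maximalIdeal_notMem_sq_isSMulRegular [IsNoetherianRing A] {M : Type*}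
    [AddCommGroup M] [Module A M] [Module.Finite A M] [Nontrivial M] {r : A}
    (hr : r ∈ maximalIdeal A) (hreg : IsSMulRegular M r) :
    ∃ a ∈ maximalIdeal A, a ∉ maximalIdeal A ^ 2 ∧ IsSMulRegular M a := by
  by_contra! h
  obtain ⟨I, hI, hle⟩ : ∃ I ∈ insert (maximalIdeal A ^ 2) (associatedPrimes A M),
      maximalIdeal A ≤ I := by
    refine (Ideal.subset_union_prime_finite ((associatedPrimes.finite A M).insert _)
      (maximalIdeal A ^ 2) (maximalIdeal A ^ 2) fun I hI hne _ ↦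
        (hI.resolve_left hne).isPrime).mp fun a ha ↦ ?_
    rw [Set.biUnion_insert]
    simpa [isSMulRegular_iff_forall_notMem_associatedPrimes] using or_iff_not_imp_left.mpr (h a ha)
  obtain rfl | hI := hI
  · have hbot : maximalIdeal A = ⊥ :=
      Submodule.eq_bot_of_le_smul_of_le_jacobson_bot (maximalIdeal A) _
        (IsNoetherian.noetherian _) (hle.trans_eq (pow_two _)) (maximalIdeal_le_jacobson _)
    obtain rfl : r = 0 := by simpa [hbot] using hr
    exact not_subsingleton M (IsSMulRegular.zero_iff_subsingleton.mp hreg)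
  · exact isSMulRegular_iff_forall_notMem_associatedPrimes.mp hreg I hI (hle hr)

lemma exists_maximalIdeal_eq_span_sup_span_succAbove {n : ℕ} {t : Fin (n + 1) → A}
    (ht : maximalIdeal A = Ideal.span (Set.range t)) {a : A} (ha : a ∈ maximalIdeal A)
    (ha2 : a ∉ maximalIdeal A ^ 2) :
    ∃ i : Fin (n + 1),
      maximalIdeal A = Ideal.span {a} ⊔ Ideal.span (Set.range (t ∘ i.succAbove)) := by
  have htm (i) : t i ∈ maximalIdeal A := ht ▸ Ideal.subset_span ⟨i, rfl⟩
  obtain ⟨c, hc⟩ := Ideal.mem_span_range_iff_exists_fun.mp (ht ▸ ha)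
  obtain ⟨i, hi⟩ : ∃ i, IsUnit (c i) := by
    by_contra! hcon
    refine ha2 (hc ▸ pow_two (maximalIdeal A) ▸ Ideal.sum_mem _ fun i _ ↦ ?_)
    exact Ideal.mul_mem_mul ((mem_maximalIdeal _).mpr (hcon i)) (htm i)
  refine ⟨i, le_antisymm ?_ (sup_le (by simpa using ha) ?_)⟩
  · have hsub (j) :
        t (i.succAbove j) ∈ Ideal.span {a} ⊔ Ideal.span (Set.range (t ∘ i.succAbove)) :=
      Ideal.mem_sup_right (Ideal.subset_span ⟨j, rfl⟩)
    rw [ht, Ideal.span_le, Set.range_subset_iff, Fin.forall_iff_succAbove i]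
    refine ⟨?_, hsub⟩
    rw [Fin.sum_univ_succAbove _ i] at hc
    rw [SetLike.mem_coe, ← Ideal.unit_mul_mem_iff_mem _ hi, eq_sub_of_add_eq hc]
    exact sub_mem (Ideal.mem_sup_left (Ideal.mem_span_singleton_self a))
      (Ideal.sum_mem _ fun j _ ↦ Ideal.mul_mem_left _ _ (hsub j))
  · exact Ideal.span_le.mpr (Set.range_subset_iff.mpr fun j ↦ htm _)

theorem free_of_depthGE_maximalIdeal [IsNoetherianRing A] [Small.{v} A] {M : Type v}
    [AddCommGroup M] [Module A M] [Module.Finite A M] {n : ℕ} {t : Fin n → A}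
    (ht : maximalIdeal A = Ideal.span (Set.range t)) (h : DepthGE (maximalIdeal A) M n) :
    Module.Free A M := by
  induction n generalizing A M with
  | zero =>
    have := Module.finitePresentation_of_finite A M
    have : Subsingleton (maximalIdeal A) := by
      rw [ht, Set.range_eq_empty, Ideal.span_empty]
      infer_instance
    exact Module.free_of_maximalIdeal_rTensor_injective (Function.injective_of_subsingleton _)
  | succ n ih =>
    rcases subsingleton_or_nontrivial M with hM | hM
    · exact Module.Free.of_subsingleton A M
    obtain ⟨r, hr, hreg⟩ := h.exists_mem_isSMulRegular
    obtain ⟨a, ha, ha2, hareg⟩ := exists_mem_maximalIdeal_notMem_sq_isSMulRegular hr hreg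
    obtain ⟨i, hi⟩ := exists_maximalIdeal_eq_span_sup_span_succAbove ht ha ha2
    let Q := A ⧸ Ideal.span {a}
    have : Nontrivial Q := Ideal.Quotient.nontrivial_iff.mpr <|
      ne_top_of_le_ne_top Ideal.IsPrime.ne_top' (show _ ≤ maximalIdeal A by simpa using ha)
    have : IsLocalRing Q := .of_surjective' (Ideal.Quotient.mk _) Ideal.Quotient.mk_surjective
    have : Module.Finite Q (QuotSMulTop a M) := .of_restrictScalars_finite A Q _
    have hmQ : maximalIdeal Q = (maximalIdeal A).map (algebraMap A Q) :=
      (map_maximalIdeal_of_surjective _ Ideal.Quotient.mk_surjective).symm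
    have hQ : Module.Free Q (QuotSMulTop a M) := by
      refine ih (t := algebraMap A Q ∘ t ∘ i.succAbove) ?_ (hmQ ▸ (h.quotSMulTop hareg).map)
      rw [hmQ, hi, Ideal.map_sup, Ideal.map_span, Ideal.map_span, ← Set.range_comp]
      simp [Q]
    have := Module.finitePresentation_of_finite A M
    exact (Module.free_quotSMulTop_iff_free A M (maximalIdeal_le_jacobson _ ha) hareg).mp hQ

end Local

lemma free_tensorProduct_of_depthGE_prime {A : Type u} [CommRing A] [IsNoetherianRing A]
    [Small.{v} A] {M : Type v} [AddCommGroup M] [Module A M] [Module.Finite A M] {m : Ideal A}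
    [m.IsPrime] {n : ℕ} {t : Fin n → A} (ht : m = Ideal.span (Set.range t)) (hM : DepthGE m M n)
    (B : Type*) [CommRing B] [Algebra A B] (hB : ∀ a ∉ m, IsUnit (algebraMap A B a)) :
    Module.Free B (B ⊗[A] M) := by
  let L := Localization.AtPrime m
  have : IsNoetherianRing L := IsLocalization.isNoetherianRing m.primeCompl L ‹_›
  have : Module.Flat A L := IsLocalization.flat L m.primeCompl
  have hmax : m.map (algebraMap A L) = maximalIdeal L := Localization.AtPrime.map_eq_maximalIdeal
  have hgen : maximalIdeal L = Ideal.span (Set.range (algebraMap A L ∘ t)) := by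
    rw [← hmax, Set.range_comp, ← Ideal.map_span, ← ht]
  have : Module.Free L (L ⊗[A] M) := free_of_depthGE_maximalIdeal hgen (hmax ▸ hM.baseChange)
  let φ : L →+* B := IsLocalization.lift (M := m.primeCompl) fun a ↦ hB a a.2
  let : Algebra L B := φ.toAlgebra
  have : IsScalarTower A L B := .of_algebraMap_eq fun a ↦ (IsLocalization.lift_eq _ a).symm
  exact .of_equiv (AlgebraTensorModule.cancelBaseChange A L B B M)

section Variables

variable {σ R : Type*} [CommRing R]

lemma mvPolynomial_isWeaklyRegular_map_X {l : List σ} (hl : l.Nodup) :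
    IsWeaklyRegular (MvPolynomial σ R) (l.map (MvPolynomial.X (R := R))) := by
  refine ⟨fun i hi ↦ ?_⟩
  rw [List.length_map] at hi
  have hspan : Ideal.ofList ((l.take i).map (MvPolynomial.X (R := R))) •
      (⊤ : Submodule (MvPolynomial σ R) (MvPolynomial σ R)) =
      Ideal.span ((MvPolynomial.X (R := R)) '' {j : σ | j ∈ l.take i}) := by
    rw [smul_eq_mul, Ideal.mul_top, Ideal.ofList]
    simp only [List.mem_map]
    rfl
  rw [← List.map_take, hspan, List.getElem_map, isSMulRegular_quotient_iff_mem_of_smul_mem]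
  intro f hf
  rw [MvPolynomial.mem_ideal_span_X_image] at hf ⊢
  intro s hs
  obtain ⟨j, hj, hsj⟩ := hf (Finsupp.single l[i] 1 + s) <| by
    simpa [MvPolynomial.mem_support_iff, MvPolynomial.coeff_X_mul] using hs
  have hij : l[i] ≠ j := by
    rintro rfl
    obtain ⟨j, hji, hj⟩ := List.mem_take_iff_getElem.mp hj
    exact (lt_min_iff.mp hji).1.ne (hl.getElem_inj_iff.mp hj)
  exact ⟨j, hj, by simpa [Finsupp.single_apply, hij] using hsj⟩

lemma depthGE_card_of_forall_X_mem [Fintype σ] {I : Ideal (MvPolynomial σ R)}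
    (hI : ∀ i, MvPolynomial.X i ∈ I) : DepthGE I (MvPolynomial σ R) (Fintype.card σ) :=
  ⟨Finset.univ.toList.map MvPolynomial.X, by simp, by simpa using hI,
    mvPolynomial_isWeaklyRegular_map_X Finset.univ.nodup_toList⟩

end Variables

section Ideals

lemma map_comap_span_of_subset_range {A R : Type*} [CommRing A] [CommRing R] {f : A →+* R}
    {s : Set R} (hs : s ⊆ Set.range f) : ((Ideal.span s).comap f).map f = Ideal.span s := by
  refine le_antisymm Ideal.map_comap_le (Ideal.span_le.mpr fun x hx ↦ ?_)
  obtain ⟨a, rfl⟩ := hs hx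
  exact Ideal.mem_map_of_mem f (Ideal.subset_span hx)

variable {A R : Type*} [CommRing A] [CommRing R] [Algebra A R]

lemma isUnit_quotient_mk_of_notMem {m J : Ideal A} [hm : m.IsMaximal] (h : m ≤ J.radical) {a : A}
    (ha : a ∉ m) : IsUnit (Ideal.Quotient.mk J a) := by
  obtain ⟨b, c, hc, hbc⟩ := hm.exists_inv ha
  have hnil : IsNilpotent (Ideal.Quotient.mk J c) := by
    obtain ⟨N, hN⟩ := h hc
    exact ⟨N, by rwa [← map_pow, Ideal.Quotient.eq_zero_iff_mem]⟩
  have hunit : IsUnit (Ideal.Quotient.mk J (b * a)) := by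
    rw [eq_sub_of_add_eq hbc, map_sub, map_one]
    exact hnil.isUnit_one_sub
  rw [map_mul] at hunit
  exact isUnit_of_mul_isUnit_right hunit

lemma ker_eq_span_of_adjoin_eq_top {k ι : Type*} [CommRing k] [Algebra k A] {p : ι → A}
    (hp : Algebra.adjoin k (Set.range p) = ⊤) (ε : A →ₐ[k] k) :
    RingHom.ker ε = Ideal.span (Set.range fun i ↦ p i - algebraMap k A (ε (p i))) := by
  set I := Ideal.span (Set.range fun i ↦ p i - algebraMap k A (ε (p i)))
  refine le_antisymm (fun a ha ↦ ?_) (Ideal.span_le.mpr ?_)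
  · have hmk : Ideal.Quotient.mkₐ k I = (Algebra.ofId k (A ⧸ I)).comp ε := by
      refine AlgHom.ext_of_adjoin_eq_top hp (Set.forall_mem_range.mpr fun i ↦ ?_)
      exact Ideal.Quotient.eq.mpr (Ideal.subset_span ⟨i, rfl⟩)
    rw [← Ideal.Quotient.eq_zero_iff_mem, ← Ideal.Quotient.mkₐ_eq_mk k, hmk, AlgHom.comp_apply,
      RingHom.mem_ker.mp ha, map_zero]
  · rintro _ ⟨i, rfl⟩
    simp [RingHom.mem_ker]

lemma free_quotientMap_of_free_tensorProduct {J : Ideal A} {h : Ideal R}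
    (hJ : J.map (algebraMap A R) = h) (hfree : Module.Free (A ⧸ J) ((A ⧸ J) ⊗[A] R)) :
    @Module.Free (A ⧸ J) (R ⧸ h) _ _ (Module.compHom _
      (Ideal.quotientMap h (algebraMap A R) (Ideal.map_le_iff_le_comap.mp hJ.le))) := by
  let _ := Module.compHom (R ⧸ h)
    (Ideal.quotientMap h (algebraMap A R) (Ideal.map_le_iff_le_comap.mp hJ.le))
  have : IsScalarTower A (A ⧸ J) (R ⧸ h) := .of_algebraMap_smul fun a x ↦
    (Algebra.smul_def a x).symm
  have hsmul : J • (⊤ : Submodule A R) = h.restrictScalars A := by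
    rw [Ideal.smul_top_eq_map, hJ]
  let e : (A ⧸ J) ⊗[A] R ≃ₗ[A] R ⧸ h :=
    TensorProduct.quotTensorEquivQuotSMul R J ≪≫ₗ Submodule.quotEquivOfEq _ _ hsmul ≪≫ₗ
      Submodule.Quotient.restrictScalarsEquiv A h
  exact .of_equiv (e.extendScalarsOfSurjective Ideal.Quotient.mk_surjective)

end Ideals

lemma exists_adjoin_range_subalgebra_eq_top {k R ι : Type*} [CommSemiring k] [Semiring R]
    [Algebra k R] {S : Subalgebra k R} {p : ι → R} (hp : Algebra.adjoin k (Set.range p) = S) :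
    ∃ q : ι → S, Algebra.adjoin k (Set.range q) = ⊤ := by
  subst hp
  refine ⟨fun i ↦ ⟨p i, Algebra.subset_adjoin ⟨i, rfl⟩⟩, ?_⟩
  rw [← Algebra.adjoin_adjoin_coe_preimage]
  congr 1
  ext x
  simp [Subtype.ext_iff]

theorem free_tensorProduct_quotient_of_depthGE {k : Type*} [Field k] {A : Type u} [CommRing A]
    [Algebra k A] [Small.{v} A] {M : Type v} [AddCommGroup M] [Module A M] [Module.Finite A M]
    {n : ℕ} {p : Fin n → A} (hp : Algebra.adjoin k (Set.range p) = ⊤) {ε : A →ₐ[k] k} {J : Ideal A}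
    (hJ : J.radical = RingHom.ker ε) (hM : DepthGE J M n) :
    Module.Free (A ⧸ J) ((A ⧸ J) ⊗[A] M) := by
  have : Algebra.FiniteType k A := ⟨Subalgebra.fg_def.mpr ⟨_, Set.finite_range p, hp⟩⟩
  have : IsNoetherianRing A := Algebra.FiniteType.isNoetherianRing k A
  have : (RingHom.ker ε).IsMaximal :=
    RingHom.ker_isMaximal_of_surjective _ fun c ↦ ⟨algebraMap k A c, AlgHom.commutes _ c⟩
  exact free_tensorProduct_of_depthGE_prime (ker_eq_span_of_adjoin_eq_top hp ε)
    (hM.mono (Ideal.le_radical.trans_eq hJ)) _ fun a ha ↦ isUnit_quotient_mk_of_notMem hJ.ge ha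

lemma mem_radical_span_invariants {A G k : Type*} [CommRing A] [CommRing k] [Group G] [Finite G]
    [MulSemiringAction G A] {φ : A →+* k} {b : A} (hb : ∀ g : G, φ (g • b) = 0) :
    b ∈ (Ideal.span {f | (∀ g : G, g • f = f) ∧ φ f = 0}).radical := by
  nontriviality A
  have := Fintype.ofFinite G
  set P := MulSemiringAction.charpoly G b with hP
  have hmap : P.map φ = Polynomial.X ^ Fintype.card G := by
    simp [hP, MulSemiringAction.charpoly_eq, Polynomial.map_prod, hb]
  have hdeg : P.natDegree = Fintype.card G := Polynomial.natDegree_finsetProd_X_sub_C_eq_card _ _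
  have hmem : P.IsWeaklyEisensteinAt (Ideal.span {f | (∀ g : G, g • f = f) ∧ φ f = 0}) := by
    refine ⟨fun {i} hi ↦ Ideal.subset_span ⟨MulSemiringAction.smul_coeff_charpoly b i, ?_⟩⟩
    rw [← Polynomial.coeff_map, hmap, Polynomial.coeff_X_pow, if_neg (hdeg ▸ hi.ne)]
  exact ⟨_, hmem.pow_natDegree_le_of_root_of_monic_mem (MulSemiringAction.eval_charpoly G b)
    (MulSemiringAction.monic_charpoly G b) _ le_rfl⟩

lemma finite_relInvariants {k R G : Type*} [CommRing k] [CommRing R] [Algebra k R]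
    [Algebra.FiniteType k R] [Group G] [MulSemiringAction G R] [SMulCommClass G k R]
    (H : Subgroup G) [Finite H] : Module.Finite (relInvariants k R G H) R := by
  have : Algebra.IsInvariant (relInvariants k R G H) R H :=
    ⟨fun b hb ↦ ⟨⟨b, fun g hg ↦ hb ⟨g, hg⟩⟩, rfl⟩⟩
  have : SMulCommClass H (relInvariants k R G H) R := ⟨fun g a b ↦ by
    rw [Subalgebra.smul_def, Subalgebra.smul_def, smul_eq_mul, smul_eq_mul, smul_mul',
      Subgroup.smul_def, a.2 g g.2, Subgroup.smul_def]⟩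
  have := Algebra.IsInvariant.isIntegral (relInvariants k R G H) R H
  have : Algebra.FiniteType (relInvariants k R G H) R := .of_restrictScalars_finiteType k _ _
  exact Algebra.IsIntegral.finite

section HilbertIdeal

open MvPolynomial

lemma coeff_zero_smul {σ k G : Type*} [CommSemiring k] [Monoid G]
    [MulSemiringAction G (MvPolynomial σ k)] [SMulCommClass G k (MvPolynomial σ k)]
    (hlin : ∀ (g : G) (d : ℕ) (f : MvPolynomial σ k),
      f.IsHomogeneous d → (g • f).IsHomogeneous d) (g : G) (f : MvPolynomial σ k) :
    coeff 0 (g • f) = coeff 0 f := by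
  have hsmul (d : ℕ) : coeff 0 (g • homogeneousComponent d f) =
      coeff 0 (homogeneousComponent d f) := by
    obtain rfl | hd := eq_or_ne d 0
    · rw [homogeneousComponent_zero, ← algebraMap_eq, smul_algebraMap]
    · have hhom := homogeneousComponent_isHomogeneous d f
      rw [hhom.coeff_eq_zero (by simpa using hd.symm),
        (hlin g d _ hhom).coeff_eq_zero (by simpa using hd.symm)]
  conv_rhs => rw [← sum_homogeneousComponent f]
  conv_lhs => rw [← sum_homogeneousComponent f]
  simp only [Finset.smul_sum, coeff_sum, hsmul]

variable {k : Type*} [CommRing k] {n : ℕ} {G : Type*} [Group G]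
  [MulSemiringAction G (MvPolynomial (Fin n) k)]

lemma radical_hilbertIdeal [IsDomain k] [Finite G]
    (hfix : ∀ (g : G) (f : MvPolynomial (Fin n) k), coeff 0 (g • f) = coeff 0 f) (H : Subgroup G) :
    (hilbertIdeal k n G H).radical = RingHom.ker (aeval (0 : Fin n → k)) := by
  have hmem (f : MvPolynomial (Fin n) k) :
      f ∈ RingHom.ker (aeval (0 : Fin n → k)) ↔ coeff 0 f = 0 := by
    simp [RingHom.mem_ker, constantCoeff_eq]
  refine le_antisymm ?_ fun f hf ↦ ?_
  · exact (RingHom.ker_isPrime _).radical_le_iff.mpr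
      (Ideal.span_le.mpr fun f hf ↦ (hmem f).mpr hf.2)
  · have hpow := mem_radical_span_invariants (G := H) (φ := constantCoeff (R := k) (σ := Fin n))
      fun g ↦ (hfix g f).trans ((hmem f).mp hf)
    refine Ideal.radical_mono (Ideal.span_mono ?_) hpow
    rintro f ⟨hfG, hf0⟩
    exact ⟨fun g hg ↦ hfG ⟨g, hg⟩, hf0⟩

variable [SMulCommClass G k (MvPolynomial (Fin n) k)]

lemma map_comap_hilbertIdeal {H : Subgroup G} {A : Subalgebra k (MvPolynomial (Fin n) k)}
    (hA : relInvariants k (MvPolynomial (Fin n) k) G H ≤ A) :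
    ((hilbertIdeal k n G H).comap A.val).map A.val = hilbertIdeal k n G H :=
  map_comap_span_of_subset_range (f := A.val.toRingHom) fun f hf ↦ ⟨⟨f, hA hf.1⟩, rfl⟩

theorem free_quotient_hilbertIdeal {k : Type*} [Field k] {G : Type*} [Group G] [Finite G]
    [MulSemiringAction G (MvPolynomial (Fin n) k)] [SMulCommClass G k (MvPolynomial (Fin n) k)]
    (hfix : ∀ (g : G) (f : MvPolynomial (Fin n) k), coeff 0 (g • f) = coeff 0 f)
    {H : Subgroup G} {A : Subalgebra k (MvPolynomial (Fin n) k)}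
    [Module.Finite A (MvPolynomial (Fin n) k)]
    (hA : relInvariants k (MvPolynomial (Fin n) k) G H ≤ A) {p : Fin n → MvPolynomial (Fin n) k}
    (hp : Algebra.adjoin k (Set.range p) = A) :
    @Module.Free (A ⧸ (hilbertIdeal k n G H).comap A.val)
      (MvPolynomial (Fin n) k ⧸ hilbertIdeal k n G H) _ _
      (Module.compHom _ (Ideal.quotientMap (hilbertIdeal k n G H) A.val.toRingHom le_rfl)) := by
  obtain ⟨q, hq⟩ := exists_adjoin_range_subalgebra_eq_top hp
  set J := (hilbertIdeal k n G H).comap A.val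
  have hmap : J.map (algebraMap A _) = hilbertIdeal k n G H := map_comap_hilbertIdeal hA
  have hrad : J.radical = RingHom.ker ((aeval (0 : Fin n → k)).comp A.val) := by
    rw [← Ideal.comap_radical, radical_hilbertIdeal hfix]
    rfl
  have hdepth : DepthGE J (MvPolynomial (Fin n) k) n := by
    refine DepthGE.of_radical_map (R := MvPolynomial (Fin n) k) ?_
    rw [hmap, radical_hilbertIdeal hfix]
    simpa using depthGE_card_of_forall_X_mem (σ := Fin n) fun i ↦ by simp [RingHom.mem_ker]
  exact free_quotientMap_of_free_tensorProduct hmap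
    (free_tensorProduct_quotient_of_depthGE hq hrad hdepth)

end HilbertIdeal

theorem coinvariants_free_extension_of_relative_coinvariants_general
    (k : Type*) [Field k] (n : ℕ) (G : Type*) [Group G] [Finite G]
    [MulSemiringAction G (MvPolynomial (Fin n) k)]
    [SMulCommClass G k (MvPolynomial (Fin n) k)]
    (hfix : ∀ (g : G) (f : MvPolynomial (Fin n) k),
      MvPolynomial.coeff 0 (g • f) = MvPolynomial.coeff 0 f)
    (K : Subgroup G)
    (hKpoly : ∃ p : Fin n → MvPolynomial (Fin n) k,
      Algebra.adjoin k (Set.range p) = relInvariants k (MvPolynomial (Fin n) k) G K) :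
    Function.Injective
      (Ideal.quotientMap (hilbertIdeal k n G ⊤)
        (relInvariants k (MvPolynomial (Fin n) k) G K).val.toRingHom
        le_rfl) ∧
    (@Module.Free
      ((relInvariants k (MvPolynomial (Fin n) k) G K) ⧸
        Ideal.comap (relInvariants k (MvPolynomial (Fin n) k) G K).val (hilbertIdeal k n G ⊤))
      (MvPolynomial (Fin n) k ⧸ hilbertIdeal k n G ⊤) _ _
      (Module.compHom _
        (Ideal.quotientMap (hilbertIdeal k n G ⊤)
          (relInvariants k (MvPolynomial (Fin n) k) G K).val.toRingHom
          le_rfl))) ∧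
    Function.Surjective
      (Ideal.Quotient.factor (S := hilbertIdeal k n G ⊤) (T := hilbertIdeal k n G K)
        (Ideal.span_mono fun f hf => ⟨fun g _ => hf.1 g (Subgroup.mem_top g), hf.2⟩)) ∧
    RingHom.ker
        (Ideal.Quotient.factor (S := hilbertIdeal k n G ⊤) (T := hilbertIdeal k n G K)
          (Ideal.span_mono fun f hf => ⟨fun g _ => hf.1 g (Subgroup.mem_top g), hf.2⟩)) =
      Ideal.span ((Ideal.Quotient.mk (hilbertIdeal k n G ⊤)) ''
        {f | (∀ g ∈ K, g • f = f) ∧ MvPolynomial.coeff 0 f = 0}) := by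
  obtain ⟨p, hp⟩ := hKpoly
  have : Module.Finite (relInvariants k (MvPolynomial (Fin n) k) G K) (MvPolynomial (Fin n) k) :=
    finite_relInvariants K
  refine ⟨Ideal.quotientMap_injective' le_rfl, ?_, Ideal.Quotient.factor_surjective _,
    (Ideal.Quotient.factor_ker _).trans (Ideal.map_span _ _)⟩
  exact free_quotient_hilbertIdeal hfix (fun f hf g _ ↦ hf g (Subgroup.mem_top g)) hp

/-- **Lemma (Lemma 3.1 / lem:RelCoin, first part).** Let `W = G` be a finite group acting on
`R = k[x_1,…,x_n]` by linear substitutions and `K ≤ G` a subgroup.  If `R^K` is polynomial,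
then the coinvariant algebra `R_W` is a free extension of the relative coinvariant algebra
`R^K_W` with fiber `R_K`, via the map `ι` induced by the inclusion `R^K ⊆ R` and the natural
surjection `π : R_W → R_K`; here `ker π = ι(m)·R_W`, where `m`, the graded maximal ideal of
`R^K_W`, is generated by the classes of the `K`-invariants with zero constant term. -/
theorem coinvariants_free_extension_of_relative_coinvariants
    (k : Type*) [Field k] (n : ℕ) (G : Type*) [Group G] [Finite G]
    [MulSemiringAction G (MvPolynomial (Fin n) k)]
    [SMulCommClass G k (MvPolynomial (Fin n) k)]
    (hlin : ∀ (g : G) (d : ℕ) (f : MvPolynomial (Fin n) k),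
      f.IsHomogeneous d → (g • f).IsHomogeneous d)
    (hfaithful : ∀ g : G, (∀ f : MvPolynomial (Fin n) k, g • f = f) → g = 1)
    (K : Subgroup G)
    (hKpoly : ∃ p : Fin n → MvPolynomial (Fin n) k,
      (∀ i, ∀ g ∈ K, g • p i = p i) ∧ (∀ i, ∃ d : ℕ, (p i).IsHomogeneous d) ∧
      AlgebraicIndependent k p ∧
      Algebra.adjoin k (Set.range p) = relInvariants k (MvPolynomial (Fin n) k) G K) :
    Function.Injective
      (Ideal.quotientMap (hilbertIdeal k n G ⊤)
        (relInvariants k (MvPolynomial (Fin n) k) G K).val.toRingHom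
        le_rfl) ∧
    (@Module.Free
      ((relInvariants k (MvPolynomial (Fin n) k) G K) ⧸
        Ideal.comap (relInvariants k (MvPolynomial (Fin n) k) G K).val (hilbertIdeal k n G ⊤))
      (MvPolynomial (Fin n) k ⧸ hilbertIdeal k n G ⊤) _ _
      (Module.compHom _
        (Ideal.quotientMap (hilbertIdeal k n G ⊤)
          (relInvariants k (MvPolynomial (Fin n) k) G K).val.toRingHom
          le_rfl))) ∧
    Function.Surjective
      (Ideal.Quotient.factor (S := hilbertIdeal k n G ⊤) (T := hilbertIdeal k n G K)
        (Ideal.span_mono fun f hf => ⟨fun g _ => hf.1 g (Subgroup.mem_top g), hf.2⟩)) ∧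
    RingHom.ker
        (Ideal.Quotient.factor (S := hilbertIdeal k n G ⊤) (T := hilbertIdeal k n G K)
          (Ideal.span_mono fun f hf => ⟨fun g _ => hf.1 g (Subgroup.mem_top g), hf.2⟩)) =
      Ideal.span ((Ideal.Quotient.mk (hilbertIdeal k n G ⊤)) ''
        {f | (∀ g ∈ K, g • f = f) ∧ MvPolynomial.coeff 0 f = 0}) := by
  obtain ⟨p, -, -, -, hp⟩ := hKpoly
  exact coinvariants_free_extension_of_relative_coinvariants_general k n G (coeff_zero_smul hlin) K
    ⟨p, hp⟩
end

section
/- Let k be a field, R = k[x_1,…,x_r], S = R[t] = k[x_1,…,x_r,t], and let S act on Q_S = k[X_1,…,X_r,T] by contraction. Let F_B ∈ k[X_1,…,X_r] be homogeneous of degree j_B such that I_B = Ann_R(F_B) has finite colength, and set B = R/I_B. Fix m ≥ 0, set A = k[t]/(t^{m+1}), let G ∈ k[X_1,…,X_r] be homogeneous of degree j_B + m, put F = T^m·F_B + G ∈ Q_S, and C = S/Ann_S(F). If C is a free extension of A with fiber B via ι : A → C induced by t ↦ t and π : C → B induced by x_i ↦ x_i, t ↦ 0, then (I_B)^2 ∘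 G = 0. -/
set_option synthInstance.maxHeartbeats 1000000
set_option maxHeartbeats 1000000

open Classical in
/-- Contraction action of `k[x_1,…]` on `k[X_1,…]` (the two polynomial rings being
identified): determined on monomials by `x^a ∘ X^b = X^{b-a}` if `a ≤ b` componentwise,
and `0` otherwise. -/
noncomputable def contract {k : Type*} [CommRing k] {σ : Type*}
    (f F : MvPolynomial σ k) : MvPolynomial σ k :=
  ∑ b ∈ F.support, ∑ a ∈ f.support,
    if a ≤ b then
      MvPolynomial.monomial (b - a) (MvPolynomial.coeff a f * MvPolynomial.coeff b F)
    else 0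

/-- The annihilator `Ann F = {f : f ∘ F = 0}` of `F` under contraction, as an ideal
(it is closed under multiplication by ring elements, so it coincides with the ideal it
spans). -/
noncomputable def annIdeal {k : Type*} [CommRing k] {σ : Type*}
    (F : MvPolynomial σ k) : Ideal (MvPolynomial σ k) :=
  Ideal.span {f | contract f F = 0}

/-- `A = k[t]/(t^{m+1})`. -/
abbrev truncPoly (k : Type*) [Field k] (m : ℕ) : Type _ :=
  Polynomial k ⧸ Ideal.span {(Polynomial.X : Polynomial k) ^ (m + 1)}

/-- `F = Tᵐ·F_B + G ∈ Q_S`, where `S = R[t]` and the variables of `R` are embedded via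
`Fin.castSucc` with `t` the last variable. -/
noncomputable def dualGen {k : Type*} [Field k] {r : ℕ} (m : ℕ)
    (FB G : MvPolynomial (Fin r) k) : MvPolynomial (Fin (r + 1)) k :=
  (MvPolynomial.X (Fin.last r)) ^ m * MvPolynomial.rename Fin.castSucc FB +
    MvPolynomial.rename Fin.castSucc G

/-!
Write `F = H F_B + G`, where `H = T^m`, or any polynomial in variables `T` disjoint from those of
`F_B` and `G`. Since `ker π` is generated by the dual variables `t`, every `f ∈ I_B` agrees modulo
`Ann F` with some `v ∈ (t)`. Contraction by `g ∈ I_B` kills `H F_B`, so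
`(f g) ∘ G = (f g) ∘ F = v ∘ (g ∘ F) = v ∘ (g ∘ G)`, which vanishes because `g ∘ G` does not
involve `T`.
-/

open MvPolynomial

section Contraction

variable {k σ τ : Type*} [CommSemiring k]

/-- The contraction action as a representation of the polynomial ring on itself, in which
`monomial a 1` acts by `F ↦ F.divMonomial a`. It is the bundled form of `contract`, making
multiplicativity and bilinearity available through the `AlgHom` and `LinearMap` API. -/
noncomputable def contraction : MvPolynomial σ k →ₐ[k] Module.End k (MvPolynomial σ k) :=
  AddMonoidAlgebra.lift k (Module.End k (MvPolynomial σ k)) (σ →₀ ℕ)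
    { toFun a :=
        { toFun F := F.divMonomial a.toAdd
          map_add' F G := add_divMonomial F G a.toAdd
          map_smul' x F := by ext; simp }
      map_one' := LinearMap.ext divMonomial_zero
      map_mul' a b := LinearMap.ext fun F => by
        rw [mul_comm a b]
        exact divMonomial_add b.toAdd a.toAdd F }

theorem contraction_monomial (a : σ →₀ ℕ) (x : k) (F : MvPolynomial σ k) :
    contraction (monomial a x) F = x • F.divMonomial a :=
  LinearMap.congr_fun (AddMonoidAlgebra.lift_single _ a x) F

theorem contraction_apply (f F : MvPolynomial σ k) :
    contraction f F = ∑ a ∈ f.support, coeff a f • F.divMonomial a := by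
  conv_lhs => rw [f.as_sum, map_sum, LinearMap.sum_apply]
  simp only [contraction_monomial]

theorem contraction_C (x : k) (F : MvPolynomial σ k) : contraction (C x) F = x • F := by
  rw [C_apply, contraction_monomial, divMonomial_zero]

theorem contraction_X (i : σ) (F : MvPolynomial σ k) :
    contraction (X i) F = F.divMonomial (Finsupp.single i 1) := by
  rw [X, contraction_monomial, one_smul]

theorem contraction_X_C (i : σ) (x : k) : contraction (X i) (C x : MvPolynomial σ k) = 0 := by
  classical
  ext c
  rw [contraction_X, coeff_divMonomial, coeff_C, if_neg, coeff_zero]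
  exact fun h => by simpa [add_comm 1] using DFunLike.congr_fun h i

theorem contraction_X_X_mul_self (i : σ) (F : MvPolynomial σ k) :
    contraction (X i) (X i * F) = F := by
  rw [contraction_X, X_mul_divMonomial]

theorem contraction_X_X_mul_of_ne {i j : σ} (hij : i ≠ j) (F : MvPolynomial σ k) :
    contraction (X i) (X j * F) = X j * contraction (X i) F := by
  classical
  ext c
  simp only [contraction_X, coeff_divMonomial, coeff_X_mul', Finsupp.mem_support_iff,
    Finsupp.add_apply, Finsupp.single_apply, if_neg hij, zero_add]
  split_ifs with hc
  · have hle : Finsupp.single j 1 ≤ c := Finsupp.single_le_iff.2 (Nat.one_le_iff_ne_zero.2 hc)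
    rw [add_tsub_assoc_of_le hle]
  · rfl

theorem contraction_mul_of_mem_supported {s t : Set σ} (hst : Disjoint s t)
    {f P : MvPolynomial σ k} (hf : f ∈ supported k s) (hP : P ∈ supported k t)
    (F : MvPolynomial σ k) : contraction f (P * F) = P * contraction f F := by
  suffices h : Commute (contraction f) (Algebra.lmul k _ P) from LinearMap.congr_fun h F
  have commute_X : ∀ i ∈ s, Commute (contraction (X i)) (Algebra.lmul k _ P) := by
    intro i hi
    induction hP using Algebra.adjoin_induction with
    | mem _ hX =>
      obtain ⟨j, hj, rfl⟩ := hX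
      exact LinearMap.ext (contraction_X_X_mul_of_ne (hst.ne_of_mem hi hj))
    | algebraMap x => exact LinearMap.ext fun F => by simp [algebraMap_eq]
    | add P Q _ _ hP hQ => exact (map_add (Algebra.lmul k _) P Q).symm ▸ hP.add_right hQ
    | mul P Q _ _ hP hQ => exact (map_mul (Algebra.lmul k _) P Q).symm ▸ hP.mul_right hQ
  induction hf using Algebra.adjoin_induction with
  | mem _ hX =>
    obtain ⟨i, hi, rfl⟩ := hX
    exact commute_X i hi
  | algebraMap x => exact (AlgHom.commutes contraction x).symm ▸ Algebra.commutes x _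
  | add f g _ _ hf hg => exact (map_add contraction f g).symm ▸ hf.add_left hg
  | mul f g _ _ hf hg => exact (map_mul contraction f g).symm ▸ hf.mul_left hg

theorem contraction_X_eq_zero_of_mem_supported {s : Set σ} {i : σ} (hi : i ∉ s)
    {F : MvPolynomial σ k} (hF : F ∈ supported k s) : contraction (X i) F = 0 := by
  have hX : (X i : MvPolynomial σ k) ∈ supported k {i} := Algebra.subset_adjoin ⟨i, rfl, rfl⟩
  rw [← mul_one F, contraction_mul_of_mem_supported (Set.disjoint_singleton_left.2 hi) hX hF,
    ← C_1, contraction_X_C, mul_zero]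

theorem contraction_X_rename {e : σ → τ} (he : Function.Injective e) (i : σ)
    (F : MvPolynomial σ k) :
    contraction (X (e i)) (rename e F) = rename e (contraction (X i) F) := by
  induction F using MvPolynomial.induction_on with
  | C x => rw [rename_C, contraction_X_C, contraction_X_C, map_zero]
  | add F G hF hG => simp only [map_add, hF, hG]
  | mul_X F j hF =>
    rw [mul_comm, map_mul, rename_X]
    obtain rfl | hij := eq_or_ne i j
    · rw [contraction_X_X_mul_self, contraction_X_X_mul_self]
    · rw [contraction_X_X_mul_of_ne (he.ne hij), hF, contraction_X_X_mul_of_ne hij, map_mul,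
        rename_X]

theorem contraction_rename {e : σ → τ} (he : Function.Injective e) (f F : MvPolynomial σ k) :
    contraction (rename e f) (rename e F) = rename e (contraction f F) := by
  induction f using MvPolynomial.induction_on generalizing F with
  | C x => rw [rename_C, contraction_C, contraction_C, map_smul]
  | add f g hf hg => simp only [map_add, LinearMap.add_apply, hf, hg]
  | mul_X f i hf =>
    simp only [map_mul, rename_X, Module.End.mul_apply, contraction_X_rename he, hf]

theorem rename_mem_supported_range (e : σ → τ) (F : MvPolynomial σ k) :
    rename e F ∈ supported k (Set.range e) := by
  classical
  exact mem_supported.2 fun _ hi =>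
    let ⟨j, _, hj⟩ := Finset.mem_image.1 (vars_rename e F hi)
    ⟨j, hj⟩

theorem contraction_rename_mul_rename {e : σ → τ} (he : Function.Injective e)
    {H : MvPolynomial τ k} (hH : H ∈ supported k (Set.range e)ᶜ) (f F : MvPolynomial σ k) :
    contraction (rename e f) (H * rename e F) = H * rename e (contraction f F) := by
  rw [contraction_mul_of_mem_supported disjoint_compl_right (rename_mem_supported_range e f) hH,
    contraction_rename he]

end Contraction

section Annihilator

variable {k σ τ : Type*} [CommRing k]

theorem contract_eq_contraction (f F : MvPolynomial σ k) : contract f F = contraction f F := by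
  classical
  rw [contraction_apply, contract, Finset.sum_comm]
  refine Finset.sum_congr rfl fun a _ => ?_
  ext c
  rw [coeff_sum, coeff_smul, coeff_divMonomial, Finset.sum_eq_single (a + c)]
  · simp
  · intro b _ hb
    split_ifs with hab
    · rw [coeff_monomial, if_neg]
      rintro rfl
      exact hb (add_tsub_cancel_of_le hab).symm
    · rfl
  · intro h
    simp [notMem_support_iff.1 h]

theorem mem_annIdeal {f F : MvPolynomial σ k} : f ∈ annIdeal F ↔ contraction f F = 0 := by
  simp only [annIdeal, contract_eq_contraction]
  refine ⟨fun h => ?_, fun h => Ideal.subset_span h⟩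
  induction h using Submodule.span_induction with
  | mem _ hf => exact hf
  | zero => rw [map_zero, LinearMap.zero_apply]
  | add f g _ _ hf hg => rw [map_add, LinearMap.add_apply, hf, hg, add_zero]
  | smul a f _ hf => rw [smul_eq_mul, map_mul, Module.End.mul_apply, hf, map_zero]

theorem span_X_compl_le_annIdeal {s : Set σ} {F : MvPolynomial σ k} (hF : F ∈ supported k s) :
    Ideal.span (X '' sᶜ) ≤ annIdeal F := by
  rw [Ideal.span_le]
  rintro _ ⟨i, hi, rfl⟩
  exact mem_annIdeal.2 (contraction_X_eq_zero_of_mem_supported hi hF)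

theorem contraction_rename_of_mem_annIdeal {e : σ → τ} (he : Function.Injective e)
    {H : MvPolynomial τ k} (hH : H ∈ supported k (Set.range e)ᶜ) {f FB : MvPolynomial σ k}
    (hf : f ∈ annIdeal FB) (G : MvPolynomial σ k) :
    contraction (rename e f) (H * rename e FB + rename e G) = rename e (contraction f G) := by
  rw [map_add, contraction_rename_mul_rename he hH, mem_annIdeal.1 hf, map_zero, mul_zero,
    zero_add, contraction_rename he]

end Annihilator

theorem ideal_map_le_sup_of_ker_le_map {R S : Type*} [CommRing R] [CommRing S] {I K : Ideal S}
    {J : Ideal R} {φ : S → R} {π : S ⧸ I →+* R ⧸ J}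
    (hπ : ∀ x, π (Ideal.Quotient.mk I x) = Ideal.Quotient.mk J (φ x))
    (hker : RingHom.ker π ≤ K.map (Ideal.Quotient.mk I)) {ψ : R →+* S}
    (hψ : Function.LeftInverse φ ψ) : J.map ψ ≤ I ⊔ K := by
  rw [Ideal.map_le_iff_le_comap]
  intro x hx
  have hmem : Ideal.Quotient.mk I (ψ x) ∈ RingHom.ker π := by
    rw [RingHom.mem_ker, hπ, hψ x, Ideal.Quotient.eq_zero_iff_mem.2 hx]
  have hcomap := Ideal.mem_comap.2 (hker hmem)
  rwa [Ideal.comap_map_quotientMk] at hcomap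

theorem compl_range_castSucc (n : ℕ) :
    (Set.range (Fin.castSucc : Fin n → Fin (n + 1)))ᶜ = {Fin.last n} := by
  rw [← Fin.succAbove_last, Fin.range_succAbove, compl_compl]

theorem aeval_lastCases_rename_castSucc {k : Type*} [CommSemiring k] {n : ℕ}
    (x : MvPolynomial (Fin n) k) (f : MvPolynomial (Fin n) k) :
    aeval (fun i => Fin.lastCases x X i : Fin (n + 1) → MvPolynomial (Fin n) k)
      (rename Fin.castSucc f) = f := by
  have hX : (fun i => Fin.lastCases x X i : Fin (n + 1) → MvPolynomial (Fin n) k) ∘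
      Fin.castSucc = X := by ext1 i; simp
  rw [aeval_rename, hX, aeval_X_left_apply]

theorem map_rename_castSucc_le_sup_of_ker_le_span_X {k : Type*} [CommRing k] {n : ℕ}
    {I : Ideal (MvPolynomial (Fin (n + 1)) k)} {J : Ideal (MvPolynomial (Fin n) k)}
    {π : MvPolynomial (Fin (n + 1)) k ⧸ I →+* MvPolynomial (Fin n) k ⧸ J}
    (hπ : ∀ f, π (Ideal.Quotient.mk I f) =
      Ideal.Quotient.mk J (aeval (fun i => Fin.lastCases 0 X i) f))
    (hker : RingHom.ker π ≤ Ideal.span {Ideal.Quotient.mk I (X (Fin.last n))}) :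
    J.map (rename Fin.castSucc) ≤ I ⊔ Ideal.span (X '' (Set.range Fin.castSucc)ᶜ) := by
  rw [compl_range_castSucc, Set.image_singleton]
  refine ideal_map_le_sup_of_ker_le_map (ψ := (rename Fin.castSucc).toRingHom) hπ ?_
    (aeval_lastCases_rename_castSucc 0)
  rwa [Ideal.map_span, Set.image_singleton]

theorem dual_generator_sq_ann_of_free_extension_general {k σ τ : Type*} [CommRing k] {e : σ → τ}
    (he : Function.Injective e) (FB G : MvPolynomial σ k) {H : MvPolynomial τ k}
    (hH : H ∈ supported k (Set.range e)ᶜ)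
    (hfiber : (annIdeal FB).map (rename e) ≤
      annIdeal (H * rename e FB + rename e G) ⊔ Ideal.span (X '' (Set.range e)ᶜ)) :
    ∀ f ∈ annIdeal FB, ∀ g ∈ annIdeal FB, contract (f * g) G = 0 := by
  intro f hf g hg
  obtain ⟨u, hu, v, hv, huv⟩ := Submodule.mem_sup.1 (hfiber (Ideal.mem_map_of_mem _ hf))
  set F := H * rename e FB + rename e G
  apply rename_injective e he
  calc rename e (contract (f * g) G)
      = contraction (rename e (f * g)) F := by
        rw [contract_eq_contraction,
          contraction_rename_of_mem_annIdeal he hH (Ideal.mul_mem_left _ f hg)]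
    _ = contraction (rename e g) (contraction u F) +
          contraction v (contraction (rename e g) F) := by
        rw [map_mul, ← huv, add_mul, mul_comm u, map_add contraction, map_mul, map_mul,
          LinearMap.add_apply, Module.End.mul_apply, Module.End.mul_apply]
    _ = contraction v (rename e (contraction g G)) := by
        rw [mem_annIdeal.1 hu, map_zero, zero_add, contraction_rename_of_mem_annIdeal he hH hg]
    _ = rename e 0 := by
        rw [map_zero, mem_annIdeal.1 (span_X_compl_le_annIdeal (rename_mem_supported_range e _) hv)]

/-- **Lemma (Lemma 3.5 / specialdualgen-lem, direction `⟹`).** With `B = R/Ann(F_B)`,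
`A = k[t]/(t^{m+1})`, `G` homogeneous of degree `j_B + m`, and `F = Tᵐ·F_B + G`, if
`C = S/Ann_S(F)` is a free extension of `A` with fiber `B` via `ι : t ↦ t` and
`π : x_i ↦ x_i, t ↦ 0` (so that `ι(m_A)·C` is generated by the class of `t`), then
`(I_B)² ∘ G = 0`. -/
theorem dual_generator_sq_ann_of_free_extension
    (k : Type*) [Field k] (r m jB : ℕ)
    (FB : MvPolynomial (Fin r) k) (hFB : FB.IsHomogeneous jB)
    [FiniteDimensional k (MvPolynomial (Fin r) k ⧸ annIdeal FB)]
    (G : MvPolynomial (Fin r) k) (hG : G.IsHomogeneous (jB + m))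
    (hι : ∃ ι : truncPoly k m →+*
        (MvPolynomial (Fin (r + 1)) k ⧸ annIdeal (dualGen m FB G)),
      (∀ p : Polynomial k,
        ι (Ideal.Quotient.mk (Ideal.span {(Polynomial.X : Polynomial k) ^ (m + 1)}) p) =
          Ideal.Quotient.mk (annIdeal (dualGen m FB G)) (Polynomial.aeval
            (MvPolynomial.X (Fin.last r) : MvPolynomial (Fin (r + 1)) k) p)) ∧
      Function.Injective ι ∧
      @Module.Free (truncPoly k m)
        (MvPolynomial (Fin (r + 1)) k ⧸ annIdeal (dualGen m FB G)) _ _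
        (Module.compHom (MvPolynomial (Fin (r + 1)) k ⧸ annIdeal (dualGen m FB G)) ι))
    (hπ : ∃ π : (MvPolynomial (Fin (r + 1)) k ⧸ annIdeal (dualGen m FB G)) →+*
        (MvPolynomial (Fin r) k ⧸ annIdeal FB),
      (∀ f : MvPolynomial (Fin (r + 1)) k,
        π (Ideal.Quotient.mk (annIdeal (dualGen m FB G)) f) =
          Ideal.Quotient.mk (annIdeal FB)
            (MvPolynomial.aeval (fun i => Fin.lastCases 0 MvPolynomial.X i) f)) ∧
      Function.Surjective π ∧
      RingHom.ker π =
        Ideal.span {Ideal.Quotient.mk (annIdeal (dualGen m FB G))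
          (MvPolynomial.X (Fin.last r) : MvPolynomial (Fin (r + 1)) k)}) :
    ∀ f ∈ annIdeal FB, ∀ g ∈ annIdeal FB, contract (f * g) G = 0 := by
  obtain ⟨π, hπ, -, hker⟩ := hπ
  have hT : X (Fin.last r) ∈ supported k (Set.range Fin.castSucc)ᶜ :=
    X_mem_supported.2 ((compl_range_castSucc r).ge rfl)
  exact dual_generator_sq_ann_of_free_extension_general (Fin.castSucc_injective r) FB G
    (pow_mem hT m) (map_rename_castSucc_le_sup_of_ker_le_span_X hπ hker.le)
end

section
/- Let A, B, C be graded Artinian algebras over a field k and suppose C is a free extension of A with fiber B. Then the Hilbert function of C equals that of the tensor product A ⊗_k B: for every degree d, dim_k C_d = Σ_{i+e=d} (dim_k A_i)·(dim_k B_e). In particular dim_k C = (dim_k A)·(dim_k B). -/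
/-!
Let `𝒜₊` be the irrelevant ideal of `A`. A homogeneous `k`-basis of the fiber lifts to homogeneous
elements of `C`. These generate `C` over `A` by the graded Nakayama lemma. They are linearly
independent: by flatness, the coefficients of a linear relation that lie in `𝒜₊ ^ n` already lie in
`𝒜₊ ^ (n + 1)`, and the powers of `𝒜₊` intersect in `0`. The products of this `A`-basis of `C`
with a homogeneous `k`-basis of `A` form a homogeneous `k`-basis of `C`, whose elements of each
degree can be counted.
-/

open DirectSum TensorProduct
open Finset.HasAntidiagonal (antidiagonal mem_antidiagonal)
open scoped HomogeneousIdeal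

section SMul

variable {ν A M σ τ : Type*} [AddMonoid ν] [DecidableEq ν] [Finset.HasAntidiagonal ν]
  [Semiring A] [AddCommMonoid M] [Module A M]
  [SetLike σ A] [AddSubmonoidClass σ A] [SetLike τ M] [AddSubmonoidClass τ M]
  (𝒜 : ν → σ) [GradedRing 𝒜] (ℳ : ν → τ) [Decomposition ℳ] [SetLike.GradedSMul 𝒜 ℳ]

theorem coe_decompose_smul_eq_sum_antidiagonal (a : A) (m : M) (n : ν) :
    (decompose ℳ (a • m) n : M) = ∑ p ∈ antidiagonal n,
      (decompose 𝒜 a p.1 : A) • (decompose ℳ m p.2 : M) := by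
  induction a using Decomposition.inductionOn 𝒜 with
  | zero => simp
  | add a a' ha ha' => simp [add_smul, Finset.sum_add_distrib, ha, ha']
  | @homogeneous i a =>
    induction m using Decomposition.inductionOn ℳ with
    | zero => simp
    | add m m' hm hm' => simp [smul_add, Finset.sum_add_distrib, hm, hm']
    | @homogeneous j m =>
      have smul_mem : (a : A) • (m : M) ∈ ℳ (i + j) := SetLike.GradedSMul.smul_mem a.2 m.2
      have term_eq_zero : ∀ p : ν × ν, p ≠ (i, j) →
          (decompose 𝒜 (a : A) p.1 : A) • (decompose ℳ (m : M) p.2 : M) = 0 := by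
        intro p hp
        rcases not_and_or.1 (mt Prod.ext_iff.2 hp) with h | h
        · rw [decompose_of_mem_ne 𝒜 a.2 (Ne.symm h), zero_smul]
        · rw [decompose_of_mem_ne ℳ m.2 (Ne.symm h), smul_zero]
      rcases eq_or_ne (i + j) n with rfl | hn
      · rw [decompose_of_mem_same ℳ smul_mem, Finset.sum_eq_single (i, j)
          (fun p _ hp => term_eq_zero p hp) (by simp),
          decompose_of_mem_same 𝒜 a.2, decompose_of_mem_same ℳ m.2]
      · rw [decompose_of_mem_ne ℳ smul_mem hn, Finset.sum_eq_zero]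
        rintro p hp
        refine term_eq_zero p ?_
        rintro rfl
        exact hn (mem_antidiagonal.1 hp)

include 𝒜 in
theorem isHomogeneous_span {S : Set M} (hS : ∀ s ∈ S, SetLike.IsHomogeneousElem ℳ s) :
    (Submodule.span A S).IsHomogeneous ℳ := by
  intro i x hx
  induction hx using Submodule.span_induction generalizing i with
  | mem s hs =>
    obtain ⟨j, hj⟩ := hS s hs
    rcases eq_or_ne j i with rfl | hji
    · rw [decompose_of_mem_same ℳ hj]
      exact Submodule.subset_span hs
    · rw [decompose_of_mem_ne ℳ hj hji]
      exact zero_mem _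
  | zero => simp
  | add x y _ _ hx hy =>
    rw [decompose_add, DirectSum.add_apply, AddMemClass.coe_add]
    exact add_mem (hx i) (hy i)
  | smul a x _ hx =>
    rw [coe_decompose_smul_eq_sum_antidiagonal 𝒜 ℳ]
    exact Submodule.sum_mem _ fun p _ => Submodule.smul_mem _ _ (hx p.2)

end SMul

section IrrelevantComponents

variable {A σ : Type*} [Semiring A] [SetLike σ A] [AddSubmonoidClass σ A]
  (𝒜 : ℕ → σ) [GradedRing 𝒜]

theorem span_iUnion_succ_eq_irrelevant :
    Ideal.span (⋃ i : ℕ, (𝒜 (i + 1) : Set A)) = 𝒜₊.toIdeal :=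
  ((HomogeneousIdeal.irrelevant_eq_span 𝒜).trans (congrArg _ (iSup_nat_gt_zero_eq _))).symm

theorem coe_decompose_zero_of_mem_irrelevant {a : A} (ha : a ∈ 𝒜₊.toIdeal) :
    (decompose 𝒜 a 0 : A) = 0 :=
  (HomogeneousIdeal.mem_irrelevant_iff 𝒜 a).1 ha

end IrrelevantComponents

section IrrelevantPow

variable {A σ : Type*} [CommSemiring A] [SetLike σ A] [AddSubmonoidClass σ A]
  (𝒜 : ℕ → σ) [GradedRing 𝒜]

theorem coe_decompose_eq_zero_of_mem_irrelevant_pow {n : ℕ} {a : A} (ha : a ∈ 𝒜₊.toIdeal ^ n)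
    {i : ℕ} (hi : i < n) : (decompose 𝒜 a i : A) = 0 := by
  induction n generalizing a i with
  | zero => omega
  | succ n ih =>
    rw [pow_succ'] at ha
    induction ha using Submodule.mul_induction_on' with
    | mem_mul_mem x hx y hy =>
      rw [← smul_eq_mul, coe_decompose_smul_eq_sum_antidiagonal 𝒜 𝒜]
      refine Finset.sum_eq_zero fun ⟨j, l⟩ hjl => ?_
      rw [mem_antidiagonal] at hjl
      rcases Nat.eq_zero_or_pos j with rfl | hj
      · rw [coe_decompose_zero_of_mem_irrelevant 𝒜 hx, zero_smul]
      · rw [ih hy (by omega), smul_zero]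
    | add x _ y _ hx hy =>
      rw [decompose_add, DirectSum.add_apply, AddMemClass.coe_add, hx, hy, add_zero]

theorem iInf_irrelevant_pow_eq_bot : ⨅ n : ℕ, 𝒜₊.toIdeal ^ n = ⊥ := by
  refine (Submodule.eq_bot_iff _).2 fun a ha => ?_
  refine (decompose 𝒜).injective (DFinsupp.ext fun i => Subtype.ext ?_)
  simpa using coe_decompose_eq_zero_of_mem_irrelevant_pow 𝒜
    ((Submodule.mem_iInf _).1 ha (i + 1)) i.lt_succ_self

end IrrelevantPow

section GradedNakayama

variable {A M σ τ : Type*} [Semiring A] [AddCommMonoid M] [Module A M]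
  [SetLike σ A] [AddSubmonoidClass σ A] [SetLike τ M] [AddSubmonoidClass τ M]
  (𝒜 : ℕ → σ) [GradedRing 𝒜] {ℳ : ℕ → τ} [Decomposition ℳ] [SetLike.GradedSMul 𝒜 ℳ]

-- Graded Nakayama: modulo `N`, the degree `d` component of `m` is a combination of components of
-- smaller degree, and degrees are bounded below.
theorem eq_top_of_irrelevant_smul_top_sup_eq_top {N : Submodule A M} (hN : N.IsHomogeneous ℳ)
    (h : 𝒜₊.toIdeal • ⊤ ⊔ N = ⊤) : N = ⊤ := by
  suffices decompose_mem : ∀ d, ∀ m : M, (decompose ℳ m d : M) ∈ N from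
    eq_top_iff.2 fun m _ => (hN.mem_iff ℳ).2 fun d => decompose_mem d m
  intro d
  induction d using Nat.strong_induction_on with
  | _ d ih =>
    have decompose_smul_mem : ∀ a ∈ 𝒜₊.toIdeal, ∀ m : M, (decompose ℳ (a • m) d : M) ∈ N := by
      intro a ha m
      rw [coe_decompose_smul_eq_sum_antidiagonal 𝒜 ℳ]
      refine sum_mem fun ⟨j, l⟩ hjl => ?_
      rw [mem_antidiagonal] at hjl
      rcases Nat.eq_zero_or_pos j with rfl | hj
      · rw [coe_decompose_zero_of_mem_irrelevant 𝒜 ha, zero_smul]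
        exact zero_mem N
      · exact N.smul_mem _ (ih l (by omega) m)
    intro m
    obtain ⟨x, hx, n, hn, rfl⟩ := Submodule.mem_sup.1 (h ▸ Submodule.mem_top : m ∈ _ ⊔ N)
    rw [decompose_add, DirectSum.add_apply, AddMemClass.coe_add]
    refine add_mem ?_ (hN d hn)
    refine Submodule.smul_induction_on hx (fun a ha y _ => decompose_smul_mem a ha y) ?_
    intro y z hy hz
    rw [decompose_add, DirectSum.add_apply, AddMemClass.coe_add]
    exact add_mem hy hz

end GradedNakayama

section Flat

variable {R M κ : Type*} [CommRing R] [AddCommGroup M] [Module R M] [Module.Flat R M] {I : Ideal R}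

-- By flatness `∑ j, a j ⊗ v j` vanishes already in `J ⊗ M`; mapping it by `f` leaves `a i ⊗ 1`,
-- the class of `a i` in `J ⊗ R ⧸ I ≃ J ⧸ I J`.
theorem mem_mul_of_linearCombination_eq_zero_of_flat {J : Ideal R} {v : κ → M} {i : κ}
    {f : M →ₗ[R] R ⧸ I} (hi : f (v i) = 1) (hne : ∀ j, j ≠ i → f (v j) = 0)
    {a : κ →₀ R} (haJ : ∀ j, a j ∈ J) (ha : Finsupp.linearCombination R v a = 0) :
    a i ∈ I * J := by
  have tensor_eq_zero : ∑ j ∈ a.support, (⟨a j, haJ j⟩ : J) ⊗ₜ[R] v j = 0 := by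
    apply Module.Flat.rTensor_preserves_injective_linearMap (M := M) J.subtype J.subtype_injective
    apply (TensorProduct.lid R M).injective
    simpa [Finsupp.linearCombination_apply, Finsupp.sum] using ha
  have tmul_one_eq_zero : (⟨a i, haJ i⟩ : J) ⊗ₜ[R] (1 : R ⧸ I) = 0 := by
    have := congrArg (f.lTensor J) tensor_eq_zero
    rw [map_sum, map_zero, Finset.sum_eq_single i] at this
    · simpa [hi] using this
    · intro j _ hj
      simp [hne j hj]
    · intro h
      have : (⟨a i, haJ i⟩ : J) = 0 := Subtype.ext (Finsupp.notMem_support_iff.1 h)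
      rw [this, TensorProduct.zero_tmul, map_zero]
  have mem_smul_top : (⟨a i, haJ i⟩ : J) ∈ I • (⊤ : Submodule R J) := by
    have := congrArg (tensorQuotEquivQuotSMul J I) tmul_one_eq_zero
    rwa [← map_one (Ideal.Quotient.mk I), tensorQuotEquivQuotSMul_tmul_mk, one_smul, map_zero,
      Submodule.Quotient.mk_eq_zero] at this
  simpa using Submodule.mem_map_of_mem (f := J.subtype) mem_smul_top

theorem linearIndependent_of_flat_of_mkQ_eq_basis (hI : ⨅ n : ℕ, I ^ n = ⊥)
    (b : Module.Basis κ (R ⧸ I) (M ⧸ I • (⊤ : Submodule R M))) {v : κ → M}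
    (hv : ∀ j, (I • (⊤ : Submodule R M)).mkQ (v j) = b j) : LinearIndependent R v := by
  rw [linearIndependent_iff]
  intro a ha
  have mem_pow : ∀ n i, a i ∈ I ^ n := by
    intro n
    induction n with
    | zero => simp
    | succ n ih =>
      intro i
      rw [pow_succ']
      refine mem_mul_of_linearCombination_eq_zero_of_flat
        (f := (b.coord i).restrictScalars R ∘ₗ (I • (⊤ : Submodule R M)).mkQ) ?_ ?_ ih ha
      · simp [hv]
      · intro j hj
        simp [hv, hj]
  ext i
  simpa [hI] using (Submodule.mem_iInf _).2 fun n => mem_pow n i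

end Flat

section GradedModule

variable {A M κ σ τ : Type*} [CommRing A] [AddCommGroup M] [Module A M]
  [SetLike σ A] [AddSubmonoidClass σ A] [SetLike τ M] [AddSubmonoidClass τ M]
  (𝒜 : ℕ → σ) [GradedRing 𝒜] (ℳ : ℕ → τ) [Decomposition ℳ] [SetLike.GradedSMul 𝒜 ℳ]

theorem span_eq_top_of_span_image_mkQ_eq_top {S : Set M}
    (hS : ∀ s ∈ S, SetLike.IsHomogeneousElem ℳ s)
    (h : Submodule.span A ((𝒜₊.toIdeal • (⊤ : Submodule A M)).mkQ '' S) = ⊤) :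
    Submodule.span A S = ⊤ :=
  eq_top_of_irrelevant_smul_top_sup_eq_top 𝒜 (isHomogeneous_span 𝒜 ℳ hS) <| by
    rwa [← Submodule.map_mkQ_eq_top, Submodule.map_span]

theorem exists_basis_of_mkQ_eq_basis [Module.Flat A M]
    (b : Module.Basis κ (A ⧸ 𝒜₊.toIdeal) (M ⧸ 𝒜₊.toIdeal • (⊤ : Submodule A M))) {v : κ → M}
    (hv : ∀ j, SetLike.IsHomogeneousElem ℳ (v j))
    (hvb : ∀ j, (𝒜₊.toIdeal • (⊤ : Submodule A M)).mkQ (v j) = b j) :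
    ∃ c : Module.Basis κ A M, ⇑c = v := by
  have span_eq_top : Submodule.span A (Set.range v) = ⊤ := by
    apply span_eq_top_of_span_image_mkQ_eq_top 𝒜 ℳ (Set.forall_mem_range.2 hv)
    rw [← Set.range_comp, show (𝒜₊.toIdeal • (⊤ : Submodule A M)).mkQ ∘ v = b from funext hvb,
      ← Submodule.restrictScalars_span A (A ⧸ 𝒜₊.toIdeal) Ideal.Quotient.mk_surjective, b.span_eq,
      Submodule.restrictScalars_top]
  exact ⟨.mk (linearIndependent_of_flat_of_mkQ_eq_basis (iInf_irrelevant_pow_eq_bot 𝒜) b hvb)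
    span_eq_top.ge, Module.Basis.coe_mk _ _⟩

end GradedModule

section HomogeneousBasis

variable {ι κ R M N : Type*} [DecidableEq ι] [Ring R] [AddCommGroup M] [Module R M]
  [AddCommGroup N] [Module R N] (ℳ : ι → Submodule R M) [Decomposition ℳ]
  (𝒩 : ι → Submodule R N) [Decomposition 𝒩]

theorem eq_component_of_le_of_iSup_eq_top {p : ι → Submodule R M} (hle : ∀ i, p i ≤ ℳ i)
    (htop : ⨆ i, p i = ⊤) (i : ι) : p i = ℳ i :=
  congrFun (((Decomposition.isInternal ℳ).submodule_iSupIndep.le_iff_eq_of_iSup_eq_top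
    htop).1 hle) i

variable {ℳ} in
theorem map_component_eq_of_surjective {f : M →ₗ[R] N} (hfgr : ∀ i, ∀ m ∈ ℳ i, f m ∈ 𝒩 i)
    (hf : Function.Surjective f) (i : ι) : (ℳ i).map f = 𝒩 i := by
  refine eq_component_of_le_of_iSup_eq_top (p := fun i => (ℳ i).map f) 𝒩
    (fun i => Submodule.map_le_iff_le_comap.2 (hfgr i)) ?_ i
  rw [← Submodule.map_iSup, (Decomposition.isInternal ℳ).submodule_iSup_eq_top,
    Submodule.map_top, LinearMap.range_eq_top.2 hf]

variable {ℳ}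

theorem span_image_fiber_eq_component {v : κ → M} (hv : Submodule.span R (Set.range v) = ⊤)
    {deg : κ → ι} (hdeg : ∀ x, v x ∈ ℳ (deg x)) (i : ι) :
    Submodule.span R (v '' (deg ⁻¹' {i})) = ℳ i := by
  refine eq_component_of_le_of_iSup_eq_top (p := fun i => Submodule.span R (v '' (deg ⁻¹' {i}))) ℳ
    (fun i => Submodule.span_le.2 ?_) ?_ i
  · rintro _ ⟨x, rfl, rfl⟩
    exact hdeg x
  · rw [← Submodule.span_iUnion, ← Set.image_iUnion, ← Set.preimage_iUnion,
      Set.iUnion_of_singleton, Set.preimage_univ, Set.image_univ, hv]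

/-- The members of degree `i` of a homogeneous basis, as a basis of the graded piece of
degree `i`. -/
noncomputable def fiberBasis (b : Module.Basis κ R M) {deg : κ → ι} (hdeg : ∀ x, b x ∈ ℳ (deg x))
    (i : ι) : Module.Basis (deg ⁻¹' {i}) R (ℳ i) :=
  (Module.Basis.span (b.linearIndependent.comp _ Subtype.val_injective)).map <|
    LinearEquiv.ofEq _ _ <| by
      rw [Set.range_comp, Subtype.range_coe, span_image_fiber_eq_component b.span_eq hdeg]

end HomogeneousBasis

theorem natCard_add_fiber {κ κ' ν : Type*} [AddMonoid ν] [Finset.HasAntidiagonal ν]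
    (f : κ → ν) (g : κ' → ν) [∀ i, Finite (f ⁻¹' {i})] [∀ i, Finite (g ⁻¹' {i})] (n : ν) :
    Nat.card ((fun p : κ × κ' => f p.1 + g p.2) ⁻¹' {n}) =
      ∑ q ∈ antidiagonal n, Nat.card (f ⁻¹' {q.1}) * Nat.card (g ⁻¹' {q.2}) := by
  let e : ((fun p : κ × κ' => f p.1 + g p.2) ⁻¹' {n}) ≃
      Σ q : antidiagonal n, (f ⁻¹' {q.1.1}) × (g ⁻¹' {q.1.2}) :=
    { toFun p := ⟨⟨(f p.1.1, g p.1.2), mem_antidiagonal.2 p.2⟩, ⟨p.1.1, rfl⟩, ⟨p.1.2, rfl⟩⟩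
      invFun q := ⟨(q.2.1, q.2.2), (congrArg₂ (· + ·) q.2.1.2 q.2.2.2).trans
        (mem_antidiagonal.1 q.1.2)⟩
      right_inv := by
        rintro ⟨⟨⟨i, j⟩, hij⟩, ⟨x, hx⟩, ⟨y, hy⟩⟩
        cases hx
        cases hy
        rfl }
  rw [Nat.card_congr e, Nat.card_sigma,
    ← Finset.sum_coe_sort (antidiagonal n) fun q =>
      Nat.card (f ⁻¹' {q.1}) * Nat.card (g ⁻¹' {q.2})]
  simp only [Nat.card_prod]

section HomogeneousBasisOverExtension

variable {k A M V κ κ' : Type*} [CommRing k] [CommRing A] [Algebra k A]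
  [AddCommGroup M] [Module k M] [Module A M] [IsScalarTower k A M] [AddCommGroup V] [Module k V]
  {𝒜 : ℕ → Submodule k A} [GradedAlgebra 𝒜] {ℳ : ℕ → Submodule k M} [Decomposition ℳ]
  [SetLike.GradedSMul 𝒜 ℳ]

theorem finrank_component_eq_sum_antidiagonal [Nontrivial k]
    [∀ i, Module.Finite k (𝒜 i)] (α : Module.Basis κ k A) {degα : κ → ℕ}
    (hα : ∀ x, α x ∈ 𝒜 (degα x)) (c : Module.Basis κ' A M) {degc : κ' → ℕ}
    (hc : ∀ y, c y ∈ ℳ (degc y)) [∀ i, Finite (degc ⁻¹' {i})] (n : ℕ) :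
    Module.finrank k (ℳ n) =
      ∑ p ∈ antidiagonal n, Module.finrank k (𝒜 p.1) * Nat.card (degc ⁻¹' {p.2}) := by
  have (i : ℕ) : Finite (degα ⁻¹' {i}) := Module.Finite.finite_basis (fiberBasis α hα i)
  have hαc : ∀ p, α.smulTower c p ∈ ℳ (degα p.1 + degc p.2) := fun p => by
    rw [Module.Basis.smulTower_apply]
    exact SetLike.GradedSMul.smul_mem (hα p.1) (hc p.2)
  rw [Module.finrank_eq_nat_card_basis (fiberBasis (α.smulTower c) hαc n), natCard_add_fiber]
  simp only [Module.finrank_eq_nat_card_basis (fiberBasis α hα _)]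

theorem exists_basis_of_map_eq_basis {I : Ideal A} {π : M →ₗ[k] V} (hπ : Function.Surjective π)
    (hker : π.ker = (I • (⊤ : Submodule A M)).restrictScalars k)
    (hk : Function.Bijective (algebraMap k (A ⧸ I))) (b : Module.Basis κ k V) {v : κ → M}
    (hvb : ∀ j, π (v j) = b j) :
    ∃ b' : Module.Basis κ (A ⧸ I) (M ⧸ I • (⊤ : Submodule A M)),
      ∀ j, (I • (⊤ : Submodule A M)).mkQ (v j) = b' j := by
  let e : (M ⧸ I • (⊤ : Submodule A M)) ≃ₗ[k] V :=
    (Submodule.Quotient.restrictScalarsEquiv k _).symm ≪≫ₗ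
      Submodule.quotEquivOfEq _ _ hker.symm ≪≫ₗ π.quotKerEquivOfSurjective hπ
  have smul_eq (r : k) (x : M ⧸ I • (⊤ : Submodule A M)) :
      RingEquiv.ofBijective _ hk r • x = r • x := algebraMap_smul (A ⧸ I) r x
  refine ⟨(b.map e.symm).mapCoeffs (RingEquiv.ofBijective _ hk) smul_eq, fun j => ?_⟩
  rw [Module.Basis.mapCoeffs_apply, Module.Basis.map_apply, LinearEquiv.eq_symm_apply, ← hvb]
  rfl

end HomogeneousBasisOverExtension

section ConnectedGraded

variable {k A M V κ : Type*} [Field k] [CommRing A] [Algebra k A]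
  {𝒜 : ℕ → Submodule k A} [GradedAlgebra 𝒜]

theorem algebraMap_quotient_irrelevant_bijective [Nontrivial A] (hA0 : 𝒜 0 = 1) :
    Function.Bijective (algebraMap k (A ⧸ 𝒜₊.toIdeal)) := by
  have irrelevant_ne_top : 𝒜₊.toIdeal ≠ ⊤ := fun h => one_ne_zero (α := A) <| by
    rw [← decompose_of_mem_same 𝒜 (SetLike.GradedOne.one_mem : (1 : A) ∈ 𝒜 0)]
    exact coe_decompose_zero_of_mem_irrelevant 𝒜 ((Ideal.eq_top_iff_one _).1 h)
  have := Ideal.Quotient.nontrivial_iff.2 irrelevant_ne_top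
  refine ⟨(algebraMap k _).injective, fun x => ?_⟩
  obtain ⟨a, rfl⟩ := Ideal.Quotient.mk_surjective x
  obtain ⟨r, hr⟩ := Submodule.mem_one.1 (hA0 ▸ (decompose 𝒜 a 0).2 :
    (decompose 𝒜 a 0 : A) ∈ (1 : Submodule k A))
  have algebraMap_mem : algebraMap k A r ∈ 𝒜 0 := hr ▸ (decompose 𝒜 a 0).2
  refine ⟨r, Ideal.Quotient.eq.2 <| (HomogeneousIdeal.mem_irrelevant_iff 𝒜 _).2 ?_⟩
  rw [map_sub, GradedRing.proj_apply, GradedRing.proj_apply,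
    decompose_of_mem_same 𝒜 algebraMap_mem, hr, sub_self]

theorem exists_homogeneous_basis_lift [Nontrivial A] (hA0 : 𝒜 0 = 1)
    [AddCommGroup M] [Module k M] [Module A M] [IsScalarTower k A M] [Module.Flat A M]
    [AddCommGroup V] [Module k V] {ℳ : ℕ → Submodule k M} [Decomposition ℳ]
    [SetLike.GradedSMul 𝒜 ℳ] {𝒱 : ℕ → Submodule k V} [Decomposition 𝒱] {π : M →ₗ[k] V}
    (hπgr : ∀ i, ∀ m ∈ ℳ i, π m ∈ 𝒱 i) (hπ : Function.Surjective π)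
    (hker : π.ker = (𝒜₊.toIdeal • (⊤ : Submodule A M)).restrictScalars k)
    (b : Module.Basis κ k V) {deg : κ → ℕ} (hdeg : ∀ j, b j ∈ 𝒱 (deg j)) :
    ∃ c : Module.Basis κ A M, ∀ j, c j ∈ ℳ (deg j) := by
  have exists_lift : ∀ j, ∃ m ∈ ℳ (deg j), π m = b j := fun j =>
    Submodule.mem_map.1 (map_component_eq_of_surjective 𝒱 hπgr hπ (deg j) ▸ hdeg j)
  choose v hv hvb using exists_lift
  obtain ⟨b', hb'⟩ := exists_basis_of_map_eq_basis hπ hker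
    (algebraMap_quotient_irrelevant_bijective hA0) b hvb
  obtain ⟨c, rfl⟩ := exists_basis_of_mkQ_eq_basis 𝒜 ℳ b' (fun j => ⟨deg j, hv j⟩) hb'
  exact ⟨c, hv⟩

end ConnectedGraded

-- `M` and `V` stand for `C` and the fiber `B`.
theorem free_extension_hilbert_function_eq_tensor_product_general
    {k A M V : Type*} [Field k] [CommRing A] [Algebra k A]
    [AddCommGroup M] [Module k M] [Module A M] [IsScalarTower k A M] [Module.Flat A M]
    [AddCommGroup V] [Module k V]
    (𝒜 : ℕ → Submodule k A) (ℳ : ℕ → Submodule k M) (𝒱 : ℕ → Submodule k V)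
    [GradedAlgebra 𝒜] [Decomposition ℳ] [SetLike.GradedSMul 𝒜 ℳ] [Decomposition 𝒱]
    [∀ i, Module.Finite k (𝒜 i)] [∀ i, Module.Finite k (𝒱 i)] (hA0 : 𝒜 0 = 1)
    (π : M →ₗ[k] V) (hπgr : ∀ i, ∀ m ∈ ℳ i, π m ∈ 𝒱 i) (hπ : Function.Surjective π)
    (hker : π.ker = (𝒜₊.toIdeal • (⊤ : Submodule A M)).restrictScalars k) :
    (∀ d, Module.finrank k (ℳ d) =
      ∑ p ∈ antidiagonal d, Module.finrank k (𝒜 p.1) * Module.finrank k (𝒱 p.2)) ∧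
    Nonempty (A ⊗[k] V ≃ₗ[k] M) := by
  rcases subsingleton_or_nontrivial A with _ | _
  · have := Module.subsingleton A M
    have := hπ.subsingleton
    exact ⟨fun d => by simp [Module.finrank_zero_of_subsingleton], ⟨0⟩⟩
  let α := (Decomposition.isInternal 𝒜).collectedBasis fun i => Module.Basis.ofVectorSpace k (𝒜 i)
  let β := (Decomposition.isInternal 𝒱).collectedBasis fun i => Module.Basis.ofVectorSpace k (𝒱 i)
  have hα : ∀ x, α x ∈ 𝒜 x.1 := (Decomposition.isInternal 𝒜).collectedBasis_mem _
  have hβ : ∀ y, β y ∈ 𝒱 y.1 := (Decomposition.isInternal 𝒱).collectedBasis_mem _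
  obtain ⟨c, hc⟩ := exists_homogeneous_basis_lift hA0 hπgr hπ hker β hβ
  have (i : ℕ) := Module.Finite.finite_basis (fiberBasis β hβ i)
  refine ⟨fun d => ?_, ⟨(α.tensorProduct β).equiv (α.smulTower c) (Equiv.refl _)⟩⟩
  simp only [finrank_component_eq_sum_antidiagonal α hα c hc d,
    Module.finrank_eq_nat_card_basis (fiberBasis β hβ _)]

/-- **Remark/Proposition (Remarks 1.9(3), first part).** If `C` is a free extension of the
graded Artinian algebra `A` with fiber `B`, then the Hilbert function of `C` equals that of
`A ⊗ₖ B`: for every degree `d`, `dim_k C_d = Σ_{i+e=d} (dim_k A_i)·(dim_k B_e)`; in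
particular `dim_k C = (dim_k A)·(dim_k B)`. -/
theorem free_extension_hilbert_function_eq_tensor_product
    (k : Type*) [Field k]
    (A B C : Type*) [CommRing A] [CommRing B] [CommRing C]
    [Algebra k A] [Algebra k B] [Algebra k C]
    [FiniteDimensional k A] [FiniteDimensional k B] [FiniteDimensional k C]
    (𝒜 : ℕ → Submodule k A) (ℬ : ℕ → Submodule k B) (𝒞 : ℕ → Submodule k C)
    [GradedAlgebra 𝒜] [GradedAlgebra ℬ] [GradedAlgebra 𝒞]
    (hA0 : 𝒜 0 = 1) (hB0 : ℬ 0 = 1) (hC0 : 𝒞 0 = 1)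
    (ι : A →ₐ[k] C) (π : C →ₐ[k] B)
    (hιgr : ∀ i : ℕ, ∀ a ∈ 𝒜 i, ι a ∈ 𝒞 i)
    (hπgr : ∀ i : ℕ, ∀ c ∈ 𝒞 i, π c ∈ ℬ i)
    (hinj : Function.Injective ι)
    (hfree : @Module.Free A C _ _ (Module.compHom C (ι : A →+* C)))
    (hsurj : Function.Surjective π)
    (hker : RingHom.ker π = Ideal.span (⇑ι '' (⋃ i : ℕ, (𝒜 (i + 1) : Set A)))) :
    (∀ d : ℕ, Module.finrank k (𝒞 d) =
      ∑ p ∈ Finset.HasAntidiagonal.antidiagonal d, Module.finrank k (𝒜 p.1) * Module.finrank k (ℬ p.2)) ∧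
    Module.finrank k C = Module.finrank k A * Module.finrank k B := by
  let : Algebra A C := ι.toAlgebra
  have : IsScalarTower k A C := .of_algebraMap_eq' ι.comp_algebraMap.symm
  have : SetLike.GradedSMul 𝒜 𝒞 :=
    ⟨fun i _ _ _ ha hc => SetLike.GradedMul.mul_mem (hιgr i _ ha) hc⟩
  have : Module.Free A C := hfree
  have hker' : π.toLinearMap.ker = (𝒜₊.toIdeal • (⊤ : Submodule A C)).restrictScalars k := by
    rw [Ideal.smul_top_eq_map, ← span_iUnion_succ_eq_irrelevant, Ideal.map_span]
    exact congrArg (Submodule.restrictScalars k) hker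
  obtain ⟨hilbert_eq, ⟨e⟩⟩ := free_extension_hilbert_function_eq_tensor_product_general
    𝒜 𝒞 ℬ hA0 π.toLinearMap hπgr hsurj hker'
  exact ⟨hilbert_eq, by rw [← e.finrank_eq, Module.finrank_tensorProduct]⟩
end

section
/- Let k be a field of characteristic 0, fix integers r ≥ 1 and n ≥ 2, and let e_i(r,n) = e_i(x_1^r,…,x_n^r). Then C = k[x_1,…,x_n]/(e_1(r,n),…,e_n(r,n)) is a free extension of A = k[t]/(t^{rn}) with fiber B = k[x_1,…,x_{n−1}]/(e_1(r,n−1),…,e_{n−1}(r,n−1)): the map ι : A → C, t ↦ x_n, is injective and makes C a free A-module, and the map π : C → B induced by x_i ↦ x_i for i < n and x_n ↦ 0 is surjective with ker π = ι(m_A)·C. -/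
set_option synthInstance.maxHeartbeats 1000000
set_option maxHeartbeats 1000000

/-- The `i`-th "elementary `r`-symmetric polynomial" `e_i(r,n) = e_i(x_1^r,…,x_n^r)`. -/
noncomputable def esymmPow (k : Type*) [CommRing k] (n r i : ℕ) :
    MvPolynomial (Fin n) k :=
  ∑ s ∈ Finset.powersetCard i (Finset.univ : Finset (Fin n)),
    ∏ j ∈ s, MvPolynomial.X j ^ r

/-- The defining ideal `(e_1(r,n),…,e_n(r,n))` of the `G(r,1,n)`-coinvariant algebra. -/
noncomputable def coinvIdeal (k : Type*) [CommRing k] (n r : ℕ) :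
    Ideal (MvPolynomial (Fin n) k) :=
  Ideal.span (Set.range fun i : Fin n => esymmPow k n r (i + 1))

/-!
The relations of the coinvariant algebra say that `T ^ n = ∏ i, (T - x_i ^ r)`, so it is the
universal algebra over which `T ^ n` factors in this way. For an arbitrary monic `f` of degree `n`
in place of `T ^ n`, the last variable is a root of `f(t ^ r)`, and over `A[t]/(f(t ^ r))` the
universal algebra of `f` is the universal algebra of the cofactor of `T - t ^ r`, with one variable
fewer; freeness over `A[t]/(f(t ^ r))` follows by induction on `n`. If `f = g * T`, then setting the
last variable to `0` and cancelling `T` leaves exactly the relations of the universal algebra of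
`g`, which identifies the fiber.
-/

open Polynomial

universe u

theorem prod_X_sub_C_eq_X_pow_iff {R : Type*} [CommRing R] (s : Multiset R) :
    (s.map fun a => X - C a).prod = X ^ s.card ↔ ∀ i < s.card, s.esymm (i + 1) = 0 := by
  constructor
  · intro h i hi
    have hcoeff := Multiset.prod_X_sub_C_coeff s (Nat.sub_le s.card (i + 1))
    rw [h, coeff_X_pow, if_neg (by omega), Nat.sub_sub_self hi] at hcoeff
    exact ((isUnit_one.neg.pow (i + 1)).mul_right_eq_zero).1 hcoeff.symm
  · intro h
    rw [Multiset.prod_X_sub_X_eq_sum_esymm, Finset.sum_range_succ', Finset.sum_eq_zero]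
    · simp [Multiset.esymm]
    · intro i hi
      simp [h i (Finset.mem_range.1 hi)]

theorem ideal_le_of_forall_le_ker {A : Type*} {D : Type u} [CommRing A] [CommRing D] [Algebra A D]
    {I J : Ideal D} (h : ∀ (R : Type u) [CommRing R] [Algebra A R] (φ : D →ₐ[A] R),
      J ≤ RingHom.ker φ → I ≤ RingHom.ker φ) : I ≤ J :=
  (h (D ⧸ J) (Ideal.Quotient.mkₐ A J) (Ideal.Quotient.mkₐ_ker A J).ge).trans
    (Ideal.Quotient.mkₐ_ker A J).le

theorem coinvIdeal_le_ker_iff {k R : Type*} [CommRing k] [CommRing R] (n r : ℕ)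
    (φ : MvPolynomial (Fin n) k →+* R) :
    coinvIdeal k n r ≤ RingHom.ker φ ↔ X ^ n = ∏ i, (X - C (φ (MvPolynomial.X i) ^ r)) := by
  have map_esymmPow (i : ℕ) : φ (esymmPow k n r i) =
      (Finset.univ.val.map fun j => φ (MvPolynomial.X j) ^ r).esymm i := by
    simp only [esymmPow, Finset.esymm_map_val, map_sum, map_prod, map_pow]
  have hprod := prod_X_sub_C_eq_X_pow_iff
    ((Finset.univ : Finset (Fin n)).val.map fun j => φ (MvPolynomial.X j) ^ r)
  simp only [Multiset.map_map, Multiset.card_map, Finset.card_val, Finset.card_univ,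
    Fintype.card_fin, ← map_esymmPow] at hprod
  rw [coinvIdeal, Ideal.span_le, Set.range_subset_iff, eq_comm]
  exact Fin.forall_iff.trans hprod.symm

section PowSplitting

variable {A R : Type*} [CommRing A] [CommRing R] {r : ℕ} {σ : Type*} [Fintype σ] {f : A[X]}

/-- The ideal of relations on the variables `x_i` expressing that `f(T) = ∏ i, (T - x_i ^ r)`. -/
noncomputable def powSplittingIdeal (r : ℕ) (σ : Type*) [Fintype σ] (f : A[X]) :
    Ideal (MvPolynomial σ A) :=
  Ideal.span (Set.range (f.map MvPolynomial.C - ∏ i, (X - C (MvPolynomial.X i ^ r))).coeff)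

theorem map_prod_X_sub_C_pow (φ : A →+* R) (y : σ → A) :
    (∏ i, (X - C (y i ^ r))).map φ = ∏ i, (X - C (φ (y i) ^ r)) := by
  simp only [Polynomial.map_prod, Polynomial.map_sub, map_X, map_C, map_pow φ]

theorem powSplittingIdeal_le_ker_iff (φ : MvPolynomial σ A →+* R) :
    powSplittingIdeal r σ f ≤ RingHom.ker φ ↔
      f.map (φ.comp MvPolynomial.C) = ∏ i, (X - C (φ (MvPolynomial.X i) ^ r)) := by
  rw [powSplittingIdeal, Ideal.span_le, Set.range_subset_iff, ← Polynomial.map_map,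
    ← map_prod_X_sub_C_pow, ← sub_eq_zero, ← Polynomial.map_sub, Polynomial.ext_iff]
  simp only [SetLike.mem_coe, RingHom.mem_ker, coeff_map, coeff_zero]

theorem powSplittingIdeal_one [IsEmpty σ] : powSplittingIdeal r σ (1 : A[X]) = ⊥ := by
  simp [powSplittingIdeal]

theorem coinvIdeal_eq_powSplittingIdeal (k : Type*) [CommRing k] (n r : ℕ) :
    coinvIdeal k n r = powSplittingIdeal r (Fin n) (X ^ n) := by
  apply le_antisymm
  · rw [← Ideal.mk_ker (I := powSplittingIdeal r (Fin n) (X ^ n : k[X])), coinvIdeal_le_ker_iff]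
    simpa using (powSplittingIdeal_le_ker_iff (f := X ^ n)
      (Ideal.Quotient.mk (powSplittingIdeal r (Fin n) (X ^ n : k[X])))).1 Ideal.mk_ker.ge
  · rw [← Ideal.mk_ker (I := coinvIdeal k n r), powSplittingIdeal_le_ker_iff]
    simpa using (coinvIdeal_le_ker_iff n r _).1 Ideal.mk_ker.ge

/-- The universal `A`-algebra over which `f(T)` factors as `∏ i, (T - x_i ^ r)`; for `r = 1` this is
the universal splitting algebra of `f`. -/
abbrev PowSplittingAlgebra (r : ℕ) (σ : Type*) [Fintype σ] (f : A[X]) : Type _ :=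
  MvPolynomial σ A ⧸ powSplittingIdeal r σ f

namespace PowSplittingAlgebra

/-- The class of the variable `x_i`, an `r`-th root of a root of `f`. -/
noncomputable def root (r : ℕ) (f : A[X]) (i : σ) : PowSplittingAlgebra r σ f :=
  Ideal.Quotient.mk _ (MvPolynomial.X i)

theorem map_algebraMap_eq_prod :
    f.map (algebraMap A (PowSplittingAlgebra r σ f)) = ∏ i, (X - C (root r f i ^ r)) :=
  (powSplittingIdeal_le_ker_iff (Ideal.Quotient.mk _)).1 Ideal.mk_ker.ge

section UniversalProperty

variable [Algebra A R]

/-- The universal property: a factorization `f(T) = ∏ i, (T - y_i ^ r)` over an `A`-algebra is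
induced from the universal one. -/
noncomputable def lift (y : σ → R) (hy : f.map (algebraMap A R) = ∏ i, (X - C (y i ^ r))) :
    PowSplittingAlgebra r σ f →ₐ[A] R :=
  Ideal.Quotient.liftₐ _ (MvPolynomial.aeval y) <|
    (powSplittingIdeal_le_ker_iff (MvPolynomial.aeval y).toRingHom).2 <| by
      have comp_C : (MvPolynomial.aeval y).toRingHom.comp MvPolynomial.C = algebraMap A R :=
        (MvPolynomial.aeval y).comp_algebraMap
      exact (congrArg f.map comp_C).trans (by simpa using hy)

@[simp]
theorem lift_root (y : σ → R) (hy : f.map (algebraMap A R) = ∏ i, (X - C (y i ^ r))) (i : σ) :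
    lift y hy (root r f i) = y i :=
  MvPolynomial.aeval_X y i

theorem algHom_ext {φ ψ : PowSplittingAlgebra r σ f →ₐ[A] R}
    (h : ∀ i, φ (root r f i) = ψ (root r f i)) : φ = ψ :=
  Ideal.Quotient.algHom_ext A (MvPolynomial.algHom_ext h)

end UniversalProperty

theorem map_algebraMap_eq_prod_map [Algebra A R] (φ : PowSplittingAlgebra r σ f →ₐ[A] R) :
    f.map (algebraMap A R) = ∏ i, (X - C (φ (root r f i) ^ r)) := by
  rw [← φ.comp_algebraMap, ← Polynomial.map_map, map_algebraMap_eq_prod, map_prod_X_sub_C_pow]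
  rfl

/-- With no roots to adjoin, the universal algebra of the polynomial `1` is the base ring. -/
noncomputable def equivOfIsEmpty (r : ℕ) (σ : Type*) [Fintype σ] [IsEmpty σ] :
    PowSplittingAlgebra r σ (1 : A[X]) ≃ₐ[A] A :=
  (Ideal.quotientEquivAlgOfEq A powSplittingIdeal_one).trans <|
    (AlgEquiv.quotientBot A _).trans (MvPolynomial.isEmptyAlgEquiv A σ)

section LastRoot

variable {m : ℕ}

theorem map_algebraMap_eq_mul :
    f.map (algebraMap A (PowSplittingAlgebra r (Fin (m + 1)) f)) =
      (∏ i : Fin m, (X - C (root r f i.castSucc ^ r))) * (X - C (root r f (Fin.last m) ^ r)) := by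
  rw [map_algebraMap_eq_prod, Fin.prod_univ_castSucc]

theorem aeval_root_last_expand : aeval (root r f (Fin.last m)) (expand A r f) = 0 := by
  rw [expand_aeval, aeval_def, ← eval_map, map_algebraMap_eq_mul]
  simp

/-- The universal algebra as an extension of `A[t]/(f(t ^ r))`, with `t` acting as the last
variable. -/
noncomputable instance : Algebra (AdjoinRoot (expand A r f))
    (PowSplittingAlgebra r (Fin (m + 1)) f) :=
  (AdjoinRoot.lift (algebraMap A _) (root r f (Fin.last m)) aeval_root_last_expand).toAlgebra

theorem algebraMap_mk (p : A[X]) :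
    algebraMap _ (PowSplittingAlgebra r (Fin (m + 1)) f) (AdjoinRoot.mk (expand A r f) p) =
      aeval (root r f (Fin.last m)) p :=
  AdjoinRoot.lift_mk aeval_root_last_expand p

theorem algebraMap_root :
    algebraMap _ (PowSplittingAlgebra r (Fin (m + 1)) f) (AdjoinRoot.root (expand A r f)) =
      root r f (Fin.last m) :=
  AdjoinRoot.lift_root aeval_root_last_expand

instance : IsScalarTower A (AdjoinRoot (expand A r f)) (PowSplittingAlgebra r (Fin (m + 1)) f) :=
  .of_algebraMap_eq fun _ => (AdjoinRoot.lift_of aeval_root_last_expand).symm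

section Cofactor

variable {g : (AdjoinRoot (expand A r f))[X]}

/-- Adjoining the `r`-th roots of the roots of the cofactor `g` of `T - t ^ r` in `f(T)` to
`A[t]/(f(t ^ r))` yields the universal algebra of `f`. -/
noncomputable def equivOfCofactor
    (hg : f.map (AdjoinRoot.of (expand A r f)) =
      g * (X - C (AdjoinRoot.root (expand A r f) ^ r))) :
    PowSplittingAlgebra r (Fin (m + 1)) f ≃ₐ[AdjoinRoot (expand A r f)]
      PowSplittingAlgebra r (Fin m) g :=
  let toCofactor : PowSplittingAlgebra r (Fin (m + 1)) f →ₐ[A] PowSplittingAlgebra r (Fin m) g :=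
    lift (Fin.snoc (root r g) (algebraMap _ _ (AdjoinRoot.root (expand A r f)))) <| by
      rw [IsScalarTower.algebraMap_eq A (AdjoinRoot (expand A r f)), ← Polynomial.map_map,
        AdjoinRoot.algebraMap_eq, hg, Polynomial.map_mul, map_algebraMap_eq_prod,
        Fin.prod_univ_castSucc]
      simp
  have toCofactor_algebraMap : toCofactor.comp (IsScalarTower.toAlgHom A _ _) =
      IsScalarTower.toAlgHom A (AdjoinRoot (expand A r f)) _ :=
    AdjoinRoot.algHom_ext <| by simp [toCofactor, algebraMap_root]
  have cofactor_map : g.map (algebraMap _ (PowSplittingAlgebra r (Fin (m + 1)) f)) =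
      ∏ i : Fin m, (X - C (root r f i.castSucc ^ r)) := by
    have hmap := congrArg (Polynomial.map (algebraMap _ (PowSplittingAlgebra r (Fin (m + 1)) f))) hg
    rw [Polynomial.map_map, ← AdjoinRoot.algebraMap_eq, ← IsScalarTower.algebraMap_eq,
      map_algebraMap_eq_mul, Polynomial.map_mul, Polynomial.map_sub, map_X, map_C,
      map_pow (algebraMap _ _), algebraMap_root] at hmap
    exact ((monic_X_sub_C _).isRegular.right hmap).symm
  AlgEquiv.ofAlgHom
    { toCofactor with commutes' := AlgHom.congr_fun toCofactor_algebraMap }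
    (lift (fun i => root r f i.castSucc) cofactor_map)
    (algHom_ext fun i => by simp [toCofactor])
    (AlgHom.restrictScalars_injective A <| algHom_ext fun i => by
      cases i using Fin.lastCases <;> simp [toCofactor, algebraMap_root])

end Cofactor

theorem exists_monic_cofactor [Nontrivial (AdjoinRoot (expand A r f))] (hf : f.Monic)
    (hdeg : f.natDegree = m + 1) :
    ∃ g : (AdjoinRoot (expand A r f))[X], g.Monic ∧ g.natDegree = m ∧
      f.map (AdjoinRoot.of (expand A r f)) =
        g * (X - C (AdjoinRoot.root (expand A r f) ^ r)) := by
  have isRoot : (f.map (AdjoinRoot.of (expand A r f))).IsRoot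
      (AdjoinRoot.root (expand A r f) ^ r) := by
    rw [IsRoot, ← expand_eval, ← map_expand]
    exact AdjoinRoot.isRoot_root _
  obtain ⟨g, hg⟩ := dvd_iff_isRoot.2 isRoot
  have g_monic : g.Monic := (monic_X_sub_C _).of_mul_monic_left (hg ▸ hf.map _)
  refine ⟨g, g_monic, ?_, hg.trans (mul_comm _ _)⟩
  have natDegree_eq := congrArg natDegree hg
  rw [(monic_X_sub_C _).natDegree_mul g_monic, hf.natDegree_map, natDegree_X_sub_C] at natDegree_eq
  omega

theorem nontrivial_adjoinRoot_expand [Nontrivial A] (hr : 1 ≤ r) (hf : f.Monic)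
    (hdeg : f.natDegree = m + 1) : Nontrivial (AdjoinRoot (expand A r f)) := by
  have natDegree_pos : 0 < (expand A r f).natDegree := by
    rw [natDegree_expand, hdeg]
    positivity
  exact nontrivial_of_ne _ _ <| AdjoinRoot.mk_ne_zero_of_natDegree_lt (hf.expand hr)
    one_ne_zero (natDegree_one.trans_lt natDegree_pos)

end LastRoot

protected theorem nontrivial {A : Type u} [CommRing A] [Nontrivial A] {r m : ℕ} {f : A[X]}
    (hr : 1 ≤ r) (hf : f.Monic) (hdeg : f.natDegree = m) :
    Nontrivial (PowSplittingAlgebra r (Fin m) f) := by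
  induction m generalizing A with
  | zero =>
    obtain rfl := hf.natDegree_eq_zero.1 hdeg
    exact (equivOfIsEmpty r (Fin 0)).toEquiv.nontrivial
  | succ m ih =>
    have := nontrivial_adjoinRoot_expand hr hf hdeg
    obtain ⟨g, g_monic, natDegree_g, hg⟩ := exists_monic_cofactor (r := r) hf hdeg
    have := ih g_monic natDegree_g
    exact (equivOfCofactor hg).toEquiv.nontrivial

protected theorem free {A : Type u} [CommRing A] [Nontrivial A] {r m : ℕ} {f : A[X]}
    (hr : 1 ≤ r) (hf : f.Monic) (hdeg : f.natDegree = m) :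
    Module.Free A (PowSplittingAlgebra r (Fin m) f) := by
  induction m generalizing A with
  | zero =>
    obtain rfl := hf.natDegree_eq_zero.1 hdeg
    exact .of_equiv (equivOfIsEmpty r (Fin 0)).symm.toLinearEquiv
  | succ m ih =>
    have := nontrivial_adjoinRoot_expand hr hf hdeg
    obtain ⟨g, g_monic, natDegree_g, hg⟩ := exists_monic_cofactor (r := r) hf hdeg
    have := ih g_monic natDegree_g
    have := (hf.expand hr).free_adjoinRoot
    have : Module.Free (AdjoinRoot (expand A r f)) (PowSplittingAlgebra r (Fin (m + 1)) f) :=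
      .of_equiv (equivOfCofactor hg).symm.toLinearEquiv
    exact .trans (S := AdjoinRoot (expand A r f))

theorem free_over_adjoinRoot [Nontrivial A] {m : ℕ} (hr : 1 ≤ r) (hf : f.Monic)
    (hdeg : f.natDegree = m + 1) :
    Module.Free (AdjoinRoot (expand A r f)) (PowSplittingAlgebra r (Fin (m + 1)) f) := by
  have := nontrivial_adjoinRoot_expand hr hf hdeg
  obtain ⟨g, g_monic, natDegree_g, hg⟩ := exists_monic_cofactor (r := r) hf hdeg
  have := PowSplittingAlgebra.free hr g_monic natDegree_g
  exact .of_equiv (equivOfCofactor hg).symm.toLinearEquiv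

theorem algebraMap_adjoinRoot_injective [Nontrivial A] {m : ℕ} (hr : 1 ≤ r) (hf : f.Monic)
    (hdeg : f.natDegree = m + 1) :
    Function.Injective
      (algebraMap (AdjoinRoot (expand A r f)) (PowSplittingAlgebra r (Fin (m + 1)) f)) := by
  have := PowSplittingAlgebra.nontrivial hr hf hdeg
  have := free_over_adjoinRoot hr hf hdeg
  exact FaithfulSMul.algebraMap_injective _ _

section Fiber

variable {m : ℕ} {g : A[X]}

/-- Setting the last variable to `0`, when `0` is a root of `f = g * T`; this is the projection of
the extension onto its fiber. -/
noncomputable def fiberHom (hr : 1 ≤ r) (hfg : f = g * X) :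
    PowSplittingAlgebra r (Fin (m + 1)) f →ₐ[A] PowSplittingAlgebra r (Fin m) g :=
  lift (Fin.lastCases 0 (root r g)) <| by
    rw [hfg, Polynomial.map_mul, map_algebraMap_eq_prod, Fin.prod_univ_castSucc]
    simp [Nat.one_le_iff_ne_zero.1 hr]

@[simp]
theorem fiberHom_root_last (hr : 1 ≤ r) (hfg : f = g * X) :
    fiberHom hr hfg (root r f (Fin.last m)) = 0 := by
  simp [fiberHom]

@[simp]
theorem fiberHom_root_castSucc (hr : 1 ≤ r) (hfg : f = g * X) (i : Fin m) :
    fiberHom hr hfg (root r f i.castSucc) = root r g i := by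
  simp [fiberHom]

theorem fiberHom_mk (hr : 1 ≤ r) (hfg : f = g * X) (p : MvPolynomial (Fin (m + 1)) A) :
    fiberHom hr hfg (Ideal.Quotient.mk _ p) =
      Ideal.Quotient.mk _ (MvPolynomial.aeval (fun i => Fin.lastCases 0 MvPolynomial.X i) p) := by
  let setLastZero : MvPolynomial (Fin (m + 1)) A →ₐ[A] MvPolynomial (Fin m) A :=
    MvPolynomial.aeval fun i => Fin.lastCases 0 MvPolynomial.X i
  have comp_eq : (fiberHom hr hfg).comp (Ideal.Quotient.mkₐ A (powSplittingIdeal r _ f)) =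
      (Ideal.Quotient.mkₐ A _).comp setLastZero := by
    refine MvPolynomial.algHom_ext fun i => ?_
    cases i using Fin.lastCases with
    | last => exact (fiberHom_root_last hr hfg).trans (by simp [setLastZero])
    | cast i => exact (fiberHom_root_castSucc hr hfg i).trans (by simp [setLastZero, root])
  exact AlgHom.congr_fun comp_eq p

theorem fiberHom_surjective (hr : 1 ≤ r) (hfg : f = g * X) :
    Function.Surjective (fiberHom (m := m) hr hfg) := by
  let initVars : MvPolynomial (Fin m) A →ₐ[A] PowSplittingAlgebra r (Fin (m + 1)) f :=
    MvPolynomial.aeval fun i => root r f i.castSucc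
  have comp_eq : (fiberHom hr hfg).comp initVars =
      Ideal.Quotient.mkₐ A (powSplittingIdeal r (Fin m) g) :=
    MvPolynomial.algHom_ext fun i => by
      simp only [AlgHom.comp_apply, initVars, MvPolynomial.aeval_X, fiberHom_root_castSucc]
      rfl
  refine .of_comp (g := initVars) ?_
  rw [← AlgHom.coe_comp, comp_eq]
  exact Ideal.Quotient.mk_surjective

theorem ker_fiberHom_le_ker [Algebra A R] (hr : 1 ≤ r) (hfg : f = g * X)
    (φ : PowSplittingAlgebra r (Fin (m + 1)) f →ₐ[A] R) (hφ : φ (root r f (Fin.last m)) = 0) :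
    RingHom.ker (fiberHom hr hfg) ≤ RingHom.ker φ := by
  have cofactor_map : g.map (algebraMap A R) =
      ∏ i : Fin m, (X - C (φ (root r f i.castSucc) ^ r)) := by
    have hmap := (congrArg (Polynomial.map _) hfg).symm.trans (map_algebraMap_eq_prod_map φ)
    rw [Polynomial.map_mul, map_X, Fin.prod_univ_castSucc, hφ, zero_pow (by omega), map_zero,
      sub_zero] at hmap
    exact monic_X.isRegular.right hmap
  have factorization : (lift _ cofactor_map).comp (fiberHom hr hfg) = φ :=
    algHom_ext fun i => by cases i using Fin.lastCases <;> simp [hφ]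
  intro c hc
  rw [RingHom.mem_ker, ← factorization, AlgHom.comp_apply, RingHom.mem_ker.1 hc, map_zero]

theorem ker_fiberHom (hr : 1 ≤ r) (hfg : f = g * X) :
    RingHom.ker (fiberHom (m := m) hr hfg) = Ideal.span {root r f (Fin.last m)} := by
  apply le_antisymm
  · exact ideal_le_of_forall_le_ker (A := A) fun R _ _ φ hφ =>
      ker_fiberHom_le_ker hr hfg φ (hφ (Ideal.mem_span_singleton_self _))
  · rw [Ideal.span_singleton_le_iff_mem, RingHom.mem_ker, fiberHom_root_last]

end Fiber
end PowSplittingAlgebra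
end PowSplitting

theorem coinvariant_algebra_Grn_free_extension_general
    (k : Type*) [CommRing k] [Nontrivial k] (r m : ℕ) (hr : 1 ≤ r) :
    (∃ ι : (Polynomial k ⧸ Ideal.span {(Polynomial.X : Polynomial k) ^ (r * (m + 1))}) →+*
        (MvPolynomial (Fin (m + 1)) k ⧸ coinvIdeal k (m + 1) r),
      (∀ p : Polynomial k,
        ι (Ideal.Quotient.mk (Ideal.span {(Polynomial.X : Polynomial k) ^ (r * (m + 1))}) p) =
          Ideal.Quotient.mk (coinvIdeal k (m + 1) r)
            (Polynomial.aeval (MvPolynomial.X (Fin.last m) : MvPolynomial (Fin (m + 1)) k) p)) ∧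
      Function.Injective ι ∧
      @Module.Free (Polynomial k ⧸ Ideal.span {(Polynomial.X : Polynomial k) ^ (r * (m + 1))})
        (MvPolynomial (Fin (m + 1)) k ⧸ coinvIdeal k (m + 1) r) _ _
        (Module.compHom (MvPolynomial (Fin (m + 1)) k ⧸ coinvIdeal k (m + 1) r) ι)) ∧
    (∃ π : (MvPolynomial (Fin (m + 1)) k ⧸ coinvIdeal k (m + 1) r) →+*
        (MvPolynomial (Fin m) k ⧸ coinvIdeal k m r),
      (∀ f : MvPolynomial (Fin (m + 1)) k,
        π (Ideal.Quotient.mk (coinvIdeal k (m + 1) r) f) =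
          Ideal.Quotient.mk (coinvIdeal k m r)
            (MvPolynomial.aeval (fun i => Fin.lastCases 0 MvPolynomial.X i) f)) ∧
      Function.Surjective π ∧
      RingHom.ker π =
        Ideal.span {Ideal.Quotient.mk (coinvIdeal k (m + 1) r)
          (MvPolynomial.X (Fin.last m) : MvPolynomial (Fin (m + 1)) k)}) := by
  have expand_eq : (X : k[X]) ^ (r * (m + 1)) = expand k r (X ^ (m + 1)) := by
    rw [map_pow, expand_X, pow_mul]
  have monic : (X ^ (m + 1) : k[X]).Monic := monic_X_pow _
  have natDegree_eq : (X ^ (m + 1) : k[X]).natDegree = m + 1 := natDegree_X_pow _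
  rw [coinvIdeal_eq_powSplittingIdeal, coinvIdeal_eq_powSplittingIdeal, expand_eq]
  open PowSplittingAlgebra in
  refine ⟨⟨algebraMap (AdjoinRoot _) _, fun p => ?_,
      algebraMap_adjoinRoot_injective hr monic natDegree_eq,
      free_over_adjoinRoot hr monic natDegree_eq⟩,
    ⟨(fiberHom hr (pow_succ X m)).toRingHom, fiberHom_mk hr _, fiberHom_surjective hr _,
      ker_fiberHom hr _⟩⟩
  exact (algebraMap_mk p).trans (aeval_algHom_apply (Ideal.Quotient.mkₐ k _) _ p)

/-- **Example (Example 3.3 / ex:SLCoin, the free-extension structure).** For `n = m+1 ≥ 2`,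
the coinvariant algebra `C = k[x_1,…,x_n]/(e_1(r,n),…,e_n(r,n))` of `G(r,1,n)` is a free
extension of `A = k[t]/(t^{rn})` with fiber the `G(r,1,n-1)`-coinvariant algebra
`B = k[x_1,…,x_{n-1}]/(e_1(r,n-1),…,e_{n-1}(r,n-1))`, via `ι : t ↦ x_n` (injective, making
`C` a free `A`-module) and `π : x_i ↦ x_i (i < n), x_n ↦ 0` (surjective, with
`ker π = ι(m_A)·C` the ideal generated by the class of `x_n`). -/
theorem coinvariant_algebra_Grn_free_extension
    (k : Type*) [Field k] [CharZero k] (r m : ℕ) (hr : 1 ≤ r) (hm : 1 ≤ m) :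
    (∃ ι : (Polynomial k ⧸ Ideal.span {(Polynomial.X : Polynomial k) ^ (r * (m + 1))}) →+*
        (MvPolynomial (Fin (m + 1)) k ⧸ coinvIdeal k (m + 1) r),
      (∀ p : Polynomial k,
        ι (Ideal.Quotient.mk (Ideal.span {(Polynomial.X : Polynomial k) ^ (r * (m + 1))}) p) =
          Ideal.Quotient.mk (coinvIdeal k (m + 1) r)
            (Polynomial.aeval (MvPolynomial.X (Fin.last m) : MvPolynomial (Fin (m + 1)) k) p)) ∧
      Function.Injective ι ∧
      @Module.Free (Polynomial k ⧸ Ideal.span {(Polynomial.X : Polynomial k) ^ (r * (m + 1))})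
        (MvPolynomial (Fin (m + 1)) k ⧸ coinvIdeal k (m + 1) r) _ _
        (Module.compHom (MvPolynomial (Fin (m + 1)) k ⧸ coinvIdeal k (m + 1) r) ι)) ∧
    (∃ π : (MvPolynomial (Fin (m + 1)) k ⧸ coinvIdeal k (m + 1) r) →+*
        (MvPolynomial (Fin m) k ⧸ coinvIdeal k m r),
      (∀ f : MvPolynomial (Fin (m + 1)) k,
        π (Ideal.Quotient.mk (coinvIdeal k (m + 1) r) f) =
          Ideal.Quotient.mk (coinvIdeal k m r)
            (MvPolynomial.aeval (fun i => Fin.lastCases 0 MvPolynomial.X i) f)) ∧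
      Function.Surjective π ∧
      RingHom.ker π =
        Ideal.span {Ideal.Quotient.mk (coinvIdeal k (m + 1) r)
          (MvPolynomial.X (Fin.last m) : MvPolynomial (Fin (m + 1)) k)}) :=
  coinvariant_algebra_Grn_free_extension_general k r m hr
end

section
/- Let k be a field of characteristic 0 and let A = k[x,y]/(x^3 − y^6, xy), a 9-dimensional k-algebra. Then multiplication by ℓ = x + y on A has Jordan type (7,2): for every integer k ≥ 0, dim_k ker((×ℓ)^k : A → A) = min(k,7) + min(k,2). Moreover, with the grading deg x = 2, deg y = 1, A is a graded Artinian Gorenstein algebra with Hilbert function (1,1,2,1,2,1,1), whose conjugate partition is (7,2); hence ℓ = x + y has strong Lefschetz Jordan type even though the Hilbert function of A is not unimodal (so A admits no homogeneous strong Lefschetz element). -/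
set_option synthInstance.maxHeartbeats 400000
set_option maxHeartbeats 1000000

/-- The defining ideal `(x³ - y⁶, xy)` of the relative coinvariant algebra
`R^K_W ≅ k[x,y]/(x³ - y⁶, xy)` for `K = G(3,3,2) ⊂ W = G(3,3,3)`. -/
noncomputable def perazzoRelIdeal (k : Type*) [Field k] : Ideal (MvPolynomial (Fin 2) k) :=
  Ideal.span {MvPolynomial.X 0 ^ 3 - MvPolynomial.X 1 ^ 6,
    MvPolynomial.X 0 * MvPolynomial.X 1}

/-- The grading of `k[x,y]/(x³ - y⁶, xy)` with `deg x = 2`, `deg y = 1`: the degree-`i`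
component is the image of the weighted-homogeneous polynomials of weighted degree `i`. -/
noncomputable def relGrade (k : Type*) [Field k] (i : ℕ) :
    Submodule k (MvPolynomial (Fin 2) k ⧸ perazzoRelIdeal k) :=
  (MvPolynomial.weightedHomogeneousSubmodule k (![2, 1] : Fin 2 → ℕ) i).map
    (Ideal.Quotient.mkₐ k (perazzoRelIdeal k)).toLinearMap

/-!
In `A = k[x,y]/(x^(a+1) - y^(b+1), xy)` let `φ` read off the coefficient of the socle generator
`x^(a+1) = y^(b+1)`. The monomials `x^i` (`i ≤ a`) and `y^j` (`1 ≤ j ≤ b + 1`) span `A`, and they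
are independent because `φ(m m')` pairs them perfectly with their complementary monomials; the same
pairing shows that the socle is spanned by `y^(b+1)`.

Since `xy = 0`, `ℓ = x + y` satisfies `ℓ^n = x^n + y^n` for `n ≥ 1`. For `a < b`, put
`z = x - y^(b-a+1)`. Then `ℓ^n z = x^(n+1) - y^(n+b-a+1)`, which vanishes for `n = a`, and the
strings `1, ℓ, …, ℓ^(b+1)` and `z, ℓ z, …, ℓ^(a-1) z` form a Jordan basis, so `ℓ` has Jordan type
`(b+2, a)`. For `a = 2`, `b = 5` this is `(7, 2)`. With `deg x = 2` and `deg y = 1` the linear forms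
are the multiples of `y`, which have at least `a + 1 = 3` Jordan blocks and hence are not of type
`(7, 2)`.
-/

section JordanType

open Module

/-- The nilpotent endomorphism `N` has Jordan type `p`: its Jordan blocks have sizes `p s`. This is
encoded by the dimensions of the kernels of the powers of `N`; the parts are indexed by an arbitrary
finite type, and parts equal to `0` contribute nothing. -/
def HasJordanType {K V ι : Type*} [Field K] [AddCommGroup V] [Module K V] [Fintype ι]
    (N : End K V) (p : ι → ℕ) : Prop :=
  ∀ n, finrank K (LinearMap.ker (N ^ n)) = ∑ s, min n (p s)

section Strings

variable {R M ι : Type*} [Semiring R] [AddCommMonoid M] [Module R M] {N : End R M} {v : ι → M}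
  {p : ι → ℕ}

theorem range_pow_eq_span_jordanStrings
    (hspan : Submodule.span R (Set.range fun q : ι × ℕ ↦ (N ^ q.2) (v q.1)) = ⊤)
    (hzero : ∀ s, (N ^ p s) (v s) = 0) (n : ℕ) :
    LinearMap.range (N ^ n) =
      Submodule.span R (Set.range fun q : Σ s, Fin (p s - n) ↦ (N ^ (n + q.2)) (v q.1)) := by
  rw [LinearMap.range_eq_map, ← hspan, Submodule.map_span, ← Set.range_comp]
  refine le_antisymm (Submodule.span_le.2 ?_) (Submodule.span_mono ?_)
  · rintro _ ⟨⟨s, j⟩, rfl⟩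
    rw [Function.comp_apply, ← Module.End.mul_apply, ← pow_add]
    obtain hj | hj := lt_or_ge j (p s - n)
    · exact Submodule.subset_span ⟨⟨s, j, hj⟩, rfl⟩
    · rw [Module.End.pow_map_zero_of_le (by lia) (hzero s)]
      exact zero_mem _
  · rintro _ ⟨⟨s, j⟩, rfl⟩
    exact ⟨(s, j), by simp [pow_add]⟩

end Strings

theorem hasJordanType_of_jordanStrings {K V ι : Type*} [Field K] [AddCommGroup V] [Module K V]
    [FiniteDimensional K V] [Fintype ι] {N : End K V} {v : ι → V} {p : ι → ℕ}
    (hspan : Submodule.span K (Set.range fun q : ι × ℕ ↦ (N ^ q.2) (v q.1)) = ⊤)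
    (hzero : ∀ s, (N ^ p s) (v s) = 0) (hcard : ∑ s, p s = finrank K V) : HasJordanType N p := by
  intro n
  have hrange := range_pow_eq_span_jordanStrings hspan hzero
  have hindep : LinearIndependent K fun q : Σ s, Fin (p s) ↦ (N ^ (q.2 : ℕ)) (v q.1) := by
    refine linearIndependent_of_top_le_span_of_card_eq_finrank ?_ (by simpa using hcard)
    simpa [Module.End.one_eq_id] using (hrange 0).le
  have hrank : finrank K (LinearMap.range (N ^ n)) = ∑ s, (p s - n) := by
    have hinj : Function.Injective
        fun q : Σ s, Fin (p s - n) ↦ (⟨q.1, n + q.2, by lia⟩ : Σ s, Fin (p s)) := by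
      rintro ⟨s, i⟩ ⟨t, j⟩ hij
      obtain ⟨rfl, hij⟩ := Sigma.mk.inj_iff.1 hij
      simpa [Fin.ext_iff] using hij
    rw [hrange n]
    exact (finrank_span_eq_card (hindep.comp _ hinj)).trans (by simp)
  have hsum : ∑ s, (p s - n) + ∑ s, min n (p s) = ∑ s, p s := by
    rw [← Finset.sum_add_distrib]
    exact Finset.sum_congr rfl fun s _ ↦ by lia
  have hnullity := (N ^ n).finrank_range_add_finrank_ker
  lia

end JordanType

theorem add_pow_succ_of_mul_eq_zero {A : Type*} [CommSemiring A] {x y : A} (hxy : x * y = 0)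
    (n : ℕ) : (x + y) ^ (n + 1) = x ^ (n + 1) + y ^ (n + 1) := by
  induction n with
  | zero => simp
  | succ n ih =>
    calc (x + y) ^ (n + 1 + 1)
      _ = (x ^ (n + 1) + y ^ (n + 1)) * (x + y) := by rw [pow_succ, ih]
      _ = x ^ (n + 1 + 1) + y ^ (n + 1 + 1) + (x ^ n + y ^ n) * (x * y) := by ring
      _ = x ^ (n + 1 + 1) + y ^ (n + 1 + 1) := by rw [hxy, mul_zero, add_zero]

theorem add_pow_mul_sub_pow_of_mul_eq_zero {A : Type*} [CommRing A] {x y : A} (hxy : x * y = 0)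
    (n d : ℕ) : (x + y) ^ n * (x - y ^ (d + 1)) = x ^ (n + 1) - y ^ (n + d + 1) := by
  cases n with
  | zero => simp
  | succ n =>
    rw [add_pow_succ_of_mul_eq_zero hxy]
    linear_combination (y ^ n - x ^ n * y ^ d) * hxy

/-- The `R`-algebra `A` is the connected sum of `R[x]/(x^(a+2))` and `R[y]/(y^(b+2))`: it is
generated by `x` and `y` subject to `x y = 0` and `x^(a+1) = y^(b+1)`. The absence of further
relations is witnessed by the form `φ`, which takes the value `1` on the socle generator
`x^(a+1) = y^(b+1)` and `0` on the other powers of `x` and `y`. The exponents are shifted by one so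
that they are positive. -/
structure IsConnectedSum {R A : Type*} [CommRing R] [CommRing A] [Algebra R A]
    (φ : A →ₗ[R] R) (x y : A) (a b : ℕ) : Prop where
  mul_eq_zero : x * y = 0
  pow_eq_pow : x ^ (a + 1) = y ^ (b + 1)
  aeval_surjective : Function.Surjective (MvPolynomial.aeval (R := R) ![x, y])
  form_pow_left : ∀ i, φ (x ^ i) = if i = a + 1 then 1 else 0
  form_pow_right : ∀ j, φ (y ^ j) = if j = b + 1 then 1 else 0

namespace IsConnectedSum

open Module Submodule MvPolynomial

/-- The monomial basis `1, x, …, x^a, y, …, y^(b+1)` of a connected sum. The socle generator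
`x^(a+1) = y^(b+1)` is listed among the powers of `y`. -/
def stdMonomial {A : Type*} [Monoid A] (x y : A) (a b : ℕ) : Fin (a + 1) ⊕ Fin (b + 1) → A :=
  Sum.elim (fun i ↦ x ^ (i : ℕ)) fun j ↦ y ^ (j + 1 : ℕ)

/-- The monomials complementary to `stdMonomial x y a b`: they form its dual basis with respect to
the pairing `(u, v) ↦ φ (u * v)`. -/
def dualMonomial {A : Type*} [Monoid A] (x y : A) (a b : ℕ) : Fin (a + 1) ⊕ Fin (b + 1) → A :=
  Sum.elim (fun i ↦ x ^ (a + 1 - i : ℕ)) fun j ↦ y ^ (b - j : ℕ)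

/-- The weighted degrees of the standard monomials when `x` and `y` have degrees `w 0` and `w 1`. -/
def stdWeight (a b : ℕ) (w : Fin 2 → ℕ) : Fin (a + 1) ⊕ Fin (b + 1) → ℕ :=
  Sum.elim (fun i ↦ i * w 0) fun j ↦ (j + 1) * w 1

section CommRing

variable {R A : Type*} [CommRing R] [CommRing A] [Algebra R A] {φ : A →ₗ[R] R} {x y : A} {a b : ℕ}

theorem pow_left_eq_zero (h : IsConnectedSum φ x y a b) {i : ℕ} (hi : a + 1 < i) : x ^ i = 0 := by
  refine pow_eq_zero_of_le hi ?_
  rw [pow_succ', h.pow_eq_pow, pow_succ']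
  linear_combination y ^ b * h.mul_eq_zero

theorem pow_right_eq_zero (h : IsConnectedSum φ x y a b) {j : ℕ} (hj : b + 1 < j) : y ^ j = 0 := by
  refine pow_eq_zero_of_le hj ?_
  rw [pow_succ', ← h.pow_eq_pow, pow_succ']
  linear_combination x ^ a * h.mul_eq_zero

theorem pow_mul_pow_eq_zero (h : IsConnectedSum φ x y a b) {i j : ℕ} (hi : i ≠ 0) (hj : j ≠ 0) :
    x ^ i * y ^ j = 0 := by
  obtain ⟨i, rfl⟩ := Nat.exists_eq_add_one_of_ne_zero hi
  obtain ⟨j, rfl⟩ := Nat.exists_eq_add_one_of_ne_zero hj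
  linear_combination x ^ i * y ^ j * h.mul_eq_zero

theorem form_pow_mul_pow (h : IsConnectedSum φ x y a b) (i j : ℕ) :
    φ (x ^ i * y ^ j) = if (i = a + 1 ∧ j = 0) ∨ (i = 0 ∧ j = b + 1) then 1 else 0 := by
  obtain rfl | hi := eq_or_ne i 0
  · simp [h.form_pow_right]
  obtain rfl | hj := eq_or_ne j 0
  · simp [h.form_pow_left]
  simp [h.pow_mul_pow_eq_zero hi hj, hi, hj]

theorem form_stdMonomial_mul_dualMonomial (h : IsConnectedSum φ x y a b)
    (s t : Fin (a + 1) ⊕ Fin (b + 1)) :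
    φ (stdMonomial x y a b s * dualMonomial x y a b t) = if s = t then 1 else 0 := by
  obtain i | i := s <;> obtain j | j := t <;>
    simp only [stdMonomial, dualMonomial, Sum.elim_inl, Sum.elim_inr, ← pow_add,
      h.form_pow_left, h.form_pow_right, h.form_pow_mul_pow, mul_comm (y ^ _) (x ^ _),
      Sum.inl.injEq, Sum.inr.injEq, Fin.ext_iff, reduceCtorEq] <;>
    exact if_congr (by lia) rfl rfl

theorem linearIndependent_stdMonomial (h : IsConnectedSum φ x y a b) :
    LinearIndependent R (stdMonomial x y a b) := by
  let pairing : A →ₗ[R] Fin (a + 1) ⊕ Fin (b + 1) → R :=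
    LinearMap.pi fun t ↦ φ ∘ₗ LinearMap.mulRight R (dualMonomial x y a b t)
  have hpairing : pairing ∘ stdMonomial x y a b = fun s ↦ Pi.single s 1 := by
    ext s t
    simp [pairing, h.form_stdMonomial_mul_dualMonomial, Pi.single_apply, eq_comm]
  refine LinearIndependent.of_comp pairing ?_
  rw [hpairing]
  exact Pi.linearIndependent_single_one _ R

theorem pow_mul_pow_eq_zero_or_stdMonomial (h : IsConnectedSum φ x y a b) {w : Fin 2 → ℕ}
    (hw : (a + 1) * w 0 = (b + 1) * w 1) (i j : ℕ) :
    x ^ i * y ^ j = 0 ∨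
      ∃ s, stdMonomial x y a b s = x ^ i * y ^ j ∧ stdWeight a b w s = i * w 0 + j * w 1 := by
  obtain rfl | hj := eq_or_ne j 0
  · obtain hi | rfl | hi := lt_trichotomy i (a + 1)
    · exact .inr ⟨.inl ⟨i, hi⟩, by simp [stdMonomial, stdWeight]⟩
    · exact .inr ⟨.inr (Fin.last b), by simp [stdMonomial, stdWeight, h.pow_eq_pow, hw]⟩
    · simp [h.pow_left_eq_zero hi]
  obtain rfl | hi := eq_or_ne i 0
  · obtain ⟨j, rfl⟩ := Nat.exists_eq_add_one_of_ne_zero hj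
    obtain hj | hj := le_or_gt j b
    · exact .inr ⟨.inr ⟨j, by lia⟩, by simp [stdMonomial, stdWeight]⟩
    · simp [h.pow_right_eq_zero (Nat.succ_lt_succ hj)]
  exact .inl (h.pow_mul_pow_eq_zero hi hj)

theorem map_weightedHomogeneousSubmodule (h : IsConnectedSum φ x y a b) {w : Fin 2 → ℕ}
    (hw : (a + 1) * w 0 = (b + 1) * w 1) (n : ℕ) :
    (weightedHomogeneousSubmodule R w n).map (aeval ![x, y]).toLinearMap =
      span R (stdMonomial x y a b '' {s | stdWeight a b w s = n}) := by
  refine le_antisymm ?_ (span_le.2 ?_)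
  · rintro _ ⟨p, hp, rfl⟩
    induction hp using IsWeightedHomogeneous.induction_on with
    | zero => simp
    | add p q _ _ hp hq => simpa using add_mem hp hq
    | monomial d r hd =>
      have hd : d 0 * w 0 + d 1 * w 1 = n := by
        simpa [Finsupp.weight_apply, Finsupp.sum_fintype] using hd
      suffices x ^ d 0 * y ^ d 1 ∈ span R (stdMonomial x y a b '' {s | stdWeight a b w s = n}) by
        simpa [aeval_monomial, Finsupp.prod_fintype, ← Algebra.smul_def] using smul_mem _ r this
      obtain hzero | ⟨s, hs, hsw⟩ := h.pow_mul_pow_eq_zero_or_stdMonomial hw (d 0) (d 1)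
      · exact hzero ▸ zero_mem _
      · exact hs ▸ subset_span ⟨s, hsw.trans hd, rfl⟩
  · rintro _ ⟨s, rfl, rfl⟩
    obtain i | j := s
    · exact ⟨X 0 ^ (i : ℕ), by simpa [stdWeight] using (isWeightedHomogeneous_X R w 0).pow i,
        by simp [stdMonomial]⟩
    · exact ⟨X 1 ^ (j + 1 : ℕ),
        by simpa [stdWeight] using (isWeightedHomogeneous_X R w 1).pow (j + 1),
        by simp [stdMonomial]⟩

theorem finrank_map_weightedHomogeneousSubmodule [Nontrivial R] (h : IsConnectedSum φ x y a b)
    {w : Fin 2 → ℕ} (hw : (a + 1) * w 0 = (b + 1) * w 1) (n : ℕ) :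
    finrank R ((weightedHomogeneousSubmodule R w n).map (aeval ![x, y]).toLinearMap) =
      Fintype.card {s // stdWeight a b w s = n} := by
  rw [h.map_weightedHomogeneousSubmodule hw, Set.image_eq_range]
  exact finrank_span_eq_card (h.linearIndependent_stdMonomial.comp _ Subtype.val_injective)

theorem span_range_stdMonomial (h : IsConnectedSum φ x y a b) :
    span R (Set.range (stdMonomial x y a b)) = ⊤ := by
  have htrivial : weightedHomogeneousSubmodule R (0 : Fin 2 → ℕ) 0 = ⊤ := by
    rw [eq_top_iff]
    intro p _ d _
    simp [Finsupp.weight_apply]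
  have hspan := h.map_weightedHomogeneousSubmodule (w := 0) (by simp) 0
  rw [htrivial, Submodule.map_top, LinearMap.range_eq_top.2 h.aeval_surjective] at hspan
  rw [hspan, ← Set.image_univ]
  congr 2
  ext (i | j) <;> simp [stdWeight]

/-- The standard monomials as a basis of the connected sum. -/
noncomputable def stdBasis (h : IsConnectedSum φ x y a b) :
    Basis (Fin (a + 1) ⊕ Fin (b + 1)) R A :=
  .mk h.linearIndependent_stdMonomial h.span_range_stdMonomial.ge

theorem stdBasis_apply (h : IsConnectedSum φ x y a b) (s : Fin (a + 1) ⊕ Fin (b + 1)) :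
    h.stdBasis s = stdMonomial x y a b s :=
  Basis.mk_apply _ _ s

theorem stdBasis_repr_apply (h : IsConnectedSum φ x y a b) (u : A)
    (s : Fin (a + 1) ⊕ Fin (b + 1)) :
    h.stdBasis.repr u s = φ (u * dualMonomial x y a b s) := by
  suffices h.stdBasis.coord s = φ ∘ₗ LinearMap.mulRight R (dualMonomial x y a b s) from
    LinearMap.congr_fun this u
  refine h.stdBasis.ext fun t ↦ ?_
  rw [Basis.coord_apply, Basis.repr_self, Finsupp.single_apply, stdBasis_apply]
  exact (h.form_stdMonomial_mul_dualMonomial t s).symm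

theorem finrank_eq [Nontrivial R] (h : IsConnectedSum φ x y a b) :
    finrank R A = (a + 1) + (b + 1) := by
  simp [finrank_eq_card_basis h.stdBasis]

theorem ker_mulLeft_inf_ker_mulLeft (h : IsConnectedSum φ x y a b) :
    LinearMap.ker (LinearMap.mulLeft R x) ⊓ LinearMap.ker (LinearMap.mulLeft R y) =
      span R {y ^ (b + 1)} := by
  refine le_antisymm ?_ (span_le.2 (Set.singleton_subset_iff.2 ⟨?_, ?_⟩))
  · rintro u ⟨hx : x * u = 0, hy : y * u = 0⟩
    have hux (i : ℕ) (hi : i ≠ 0) : u * x ^ i = 0 := by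
      obtain ⟨i, rfl⟩ := Nat.exists_eq_add_one_of_ne_zero hi
      linear_combination x ^ i * hx
    have huy (j : ℕ) (hj : j ≠ 0) : u * y ^ j = 0 := by
      obtain ⟨j, rfl⟩ := Nat.exists_eq_add_one_of_ne_zero hj
      linear_combination y ^ j * hy
    have hrepr : h.stdBasis.repr u = Finsupp.single (.inr (Fin.last b)) (φ u) := by
      ext (i | j)
      · simp [stdBasis_repr_apply, dualMonomial, hux (a + 1 - i) (by lia)]
      · obtain rfl | hj := eq_or_ne j (Fin.last b)
        · simp [stdBasis_repr_apply, dualMonomial]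
        · have hjb : b - (j : ℕ) ≠ 0 := by grind [Fin.ext_iff]
          simp [stdBasis_repr_apply, dualMonomial, huy _ hjb, hj.symm]
    refine mem_span_singleton.2 ⟨φ u, h.stdBasis.repr.injective ?_⟩
    have hlast : h.stdBasis (.inr (Fin.last b)) = y ^ (b + 1) := by
      simp [stdBasis_apply, stdMonomial]
    rw [hrepr, ← hlast, map_smul, Basis.repr_self, Finsupp.smul_single_one]
  · simpa using h.pow_mul_pow_eq_zero one_ne_zero b.succ_ne_zero
  · simpa [← pow_succ'] using h.pow_right_eq_zero (b + 1).lt_succ_self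

theorem eq_top_of_stdMonomial_mem (h : IsConnectedSum φ x y a b) {S : Submodule R A}
    (hone : 1 ∈ S) (hx : ∀ i < a, x ^ (i + 1) ∈ S) (hy : ∀ j, y ^ (j + 1) ∈ S) : S = ⊤ := by
  rw [← top_le_iff, ← h.span_range_stdMonomial, span_le]
  rintro _ ⟨⟨_ | i, hi⟩ | j, rfl⟩
  · simpa [stdMonomial] using hone
  · exact hx i (Nat.lt_of_succ_lt_succ hi)
  · exact hy j

theorem eq_top_of_add_pow_mem (h : IsConnectedSum φ x y a b) {S : Submodule R A} {d : ℕ}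
    (hd : 0 < d) (hone : ∀ n, (x + y) ^ n ∈ S)
    (hstring : ∀ n, (x + y) ^ n * (x - y ^ (d + 1)) ∈ S) : S = ⊤ := by
  have hadd (n : ℕ) : x ^ (n + 1) + y ^ (n + 1) ∈ S :=
    add_pow_succ_of_mul_eq_zero h.mul_eq_zero n ▸ hone (n + 1)
  have hsub (n : ℕ) : x ^ (n + 1) - y ^ (n + d + 1) ∈ S :=
    add_pow_mul_sub_pow_of_mul_eq_zero h.mul_eq_zero n d ▸ hstring n
  have hy (n : ℕ) : y ^ (n + 1) ∈ S := by
    induction hm : b + 1 - n using Nat.strong_induction_on generalizing n with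
    | _ m ih =>
      obtain hn | hn := le_or_gt (b + 1) n
      · exact h.pow_right_eq_zero (Nat.lt_succ_of_le hn) ▸ zero_mem S
      · have hnext : y ^ (n + d + 1) ∈ S := ih (b + 1 - (n + d)) (by lia) _ rfl
        convert sub_mem (sub_mem (hadd n) (hsub n)) hnext using 1
        ring
  refine h.eq_top_of_stdMonomial_mem (by simpa using hone 0) (fun n _ ↦ ?_) hy
  simpa using sub_mem (hadd n) (hy n)

end CommRing

section Field

variable {K A : Type*} [Field K] [CommRing A] [Algebra K A] {φ : A →ₗ[K] K} {x y : A} {a b : ℕ}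

theorem finrank_ker_mulLeft_inf_ker_mulLeft (h : IsConnectedSum φ x y a b) :
    finrank K ↥(LinearMap.ker (LinearMap.mulLeft K x) ⊓ LinearMap.ker (LinearMap.mulLeft K y)) =
      1 := by
  have hne : y ^ (b + 1) ≠ 0 := fun h0 ↦ by simpa [h0] using h.form_pow_right (b + 1)
  rw [h.ker_mulLeft_inf_ker_mulLeft, finrank_span_singleton hne]

theorem hasJordanType_mulLeft_add (h : IsConnectedSum φ x y a b) (hab : a < b) :
    HasJordanType (LinearMap.mulLeft K (x + y)) ![b + 2, a] := by
  have : FiniteDimensional K A := .of_basis h.stdBasis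
  refine hasJordanType_of_jordanStrings (v := ![1, x - y ^ (b - a + 1)]) ?_ ?_ ?_
  · refine h.eq_top_of_add_pow_mem (Nat.sub_pos_of_lt hab)
      (fun n ↦ subset_span ⟨(0, n), ?_⟩) (fun n ↦ subset_span ⟨(1, n), ?_⟩) <;>
    simp
  · refine Fin.forall_fin_two.2 ⟨?_, ?_⟩
    · have hx : x ^ (b + 1 + 1) = 0 := h.pow_left_eq_zero (by lia)
      have hy : y ^ (b + 1 + 1) = 0 := h.pow_right_eq_zero (by lia)
      simp [add_pow_succ_of_mul_eq_zero h.mul_eq_zero, hx, hy]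
    · simp [add_pow_mul_sub_pow_of_mul_eq_zero h.mul_eq_zero, h.pow_eq_pow,
        Nat.add_sub_cancel' hab.le]
  · simp only [h.finrank_eq, Fin.sum_univ_two, Matrix.cons_val_zero, Matrix.cons_val_one]
    ring

theorem hasJordanType_mulLeft_right (h : IsConnectedSum φ x y a b) :
    HasJordanType (LinearMap.mulLeft K y)
      (fun s : Option (Fin a) ↦ s.elim (b + 2) fun _ ↦ 1) := by
  have : FiniteDimensional K A := .of_basis h.stdBasis
  refine hasJordanType_of_jordanStrings (v := fun s ↦ s.elim 1 fun i ↦ x ^ (i + 1 : ℕ)) ?_ ?_ ?_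
  · exact h.eq_top_of_stdMonomial_mem (subset_span ⟨(none, 0), by simp⟩)
      (fun i hi ↦ subset_span ⟨(some ⟨i, hi⟩, 0), by simp⟩)
      (fun j ↦ subset_span ⟨(none, j + 1), by simp⟩)
  · rintro (_ | i)
    · simp [h.pow_right_eq_zero]
    · simpa [mul_comm] using h.pow_mul_pow_eq_zero (Nat.succ_ne_zero i) one_ne_zero
  · simp only [h.finrank_eq, Fintype.sum_option, Option.elim_none, Option.elim_some,
      Finset.sum_const, Finset.card_univ, Fintype.card_fin, smul_eq_mul, mul_one]
    ring

theorem lt_finrank_ker_mulLeft_smul (h : IsConnectedSum φ x y a b) (c : K) :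
    a < finrank K (LinearMap.ker (LinearMap.mulLeft K (c • y))) := by
  have : FiniteDimensional K A := .of_basis h.stdBasis
  have hy : finrank K (LinearMap.ker (LinearMap.mulLeft K y)) = a + 1 := by
    have hone := h.hasJordanType_mulLeft_right 1
    rw [pow_one] at hone
    simpa [add_comm] using hone
  have hle : LinearMap.ker (LinearMap.mulLeft K y) ≤ LinearMap.ker (LinearMap.mulLeft K (c • y)) :=
    fun u hu ↦ by simp_all
  exact hy.ge.trans (finrank_mono hle)

end Field

end IsConnectedSum

section Quotient

open MvPolynomial

variable (R : Type*) [CommRing R] (a b : ℕ)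

/-- The ideal `(x^(a+1) - y^(b+1), xy)` defining the universal connected sum. -/
noncomputable def connectedSumIdeal : Ideal (MvPolynomial (Fin 2) R) :=
  Ideal.span {X 0 ^ (a + 1) - X 1 ^ (b + 1), X 0 * X 1}

/-- The Macaulay dual generator `x^(a+1) + y^(b+1)` of `connectedSumIdeal R a b`, as the functional
summing the coefficients of these two monomials. -/
noncomputable def dualGenerator : MvPolynomial (Fin 2) R →ₗ[R] R :=
  lcoeff R (Finsupp.single 0 (a + 1)) + lcoeff R (Finsupp.single 1 (b + 1))

theorem connectedSumIdeal_le_ker_dualGenerator :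
    (connectedSumIdeal R a b).restrictScalars R ≤ LinearMap.ker (dualGenerator R a b) := by
  intro p hp
  obtain ⟨q, r, rfl⟩ := Ideal.mem_span_pair.1 hp
  have hsub : dualGenerator R a b (q * (X 0 ^ (a + 1) - X 1 ^ (b + 1))) = 0 := by
    simp [dualGenerator, mul_sub, X_pow_eq_monomial, coeff_mul_monomial', Finsupp.single_le_iff,
      -Finsupp.single_add]
  have hmul : dualGenerator R a b (r * (X 0 * X 1)) = 0 := by
    simp [dualGenerator, ← mul_assoc, coeff_mul_X']
  rw [LinearMap.mem_ker, map_add, hsub, hmul, add_zero]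

/-- The Frobenius form of the connected sum, induced by its Macaulay dual generator. -/
noncomputable def frobeniusForm : MvPolynomial (Fin 2) R ⧸ connectedSumIdeal R a b →ₗ[R] R :=
  ((connectedSumIdeal R a b).restrictScalars R).liftQ (dualGenerator R a b)
    (connectedSumIdeal_le_ker_dualGenerator R a b) ∘ₗ
    (Submodule.Quotient.restrictScalarsEquiv R (connectedSumIdeal R a b)).symm.toLinearMap

theorem frobeniusForm_mk (p : MvPolynomial (Fin 2) R) :
    frobeniusForm R a b (Ideal.Quotient.mk _ p) = dualGenerator R a b p :=
  rfl

theorem mkₐ_eq_aeval (I : Ideal (MvPolynomial (Fin 2) R)) :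
    Ideal.Quotient.mkₐ R I = aeval ![Ideal.Quotient.mk I (X 0), Ideal.Quotient.mk I (X 1)] := by
  ext i
  fin_cases i <;> simp

theorem isConnectedSum_quotient :
    IsConnectedSum (frobeniusForm R a b) (Ideal.Quotient.mk (connectedSumIdeal R a b) (X 0))
      (Ideal.Quotient.mk (connectedSumIdeal R a b) (X 1)) a b where
  mul_eq_zero := by
    rw [← map_mul, Ideal.Quotient.eq_zero_iff_mem]
    exact Ideal.subset_span (by simp)
  pow_eq_pow := by
    rw [← map_pow, ← map_pow, Ideal.Quotient.eq]
    exact Ideal.subset_span (by simp)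
  aeval_surjective := mkₐ_eq_aeval R (connectedSumIdeal R a b) ▸ Ideal.Quotient.mkₐ_surjective R _
  form_pow_left i := by
    rw [← map_pow, frobeniusForm_mk]
    simp [dualGenerator, coeff_X_pow, Finsupp.single_eq_single_iff, -Finsupp.single_add]
  form_pow_right j := by
    rw [← map_pow, frobeniusForm_mk]
    simp [dualGenerator, coeff_X_pow, Finsupp.single_eq_single_iff, -Finsupp.single_add]

end Quotient

theorem isConnectedSum_perazzoRelIdeal (k : Type*) [Field k] :
    IsConnectedSum (A := MvPolynomial (Fin 2) k ⧸ perazzoRelIdeal k) (frobeniusForm k 2 5)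
      (Ideal.Quotient.mk (perazzoRelIdeal k) (MvPolynomial.X 0))
      (Ideal.Quotient.mk (perazzoRelIdeal k) (MvPolynomial.X 1)) 2 5 :=
  isConnectedSum_quotient k 2 5

theorem finrank_relGrade (k : Type*) [Field k] (n : ℕ) :
    Module.finrank k (relGrade k n) =
      Fintype.card {s // IsConnectedSum.stdWeight 2 5 ![2, 1] s = n} := by
  rw [relGrade, mkₐ_eq_aeval]
  exact (isConnectedSum_perazzoRelIdeal k).finrank_map_weightedHomogeneousSubmodule rfl n

theorem finrank_relGrade_eq_zero (k : Type*) [Field k] {n : ℕ} (hn : 6 < n) :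
    Module.finrank k (relGrade k n) = 0 := by
  have hle : ∀ s, IsConnectedSum.stdWeight 2 5 ![2, 1] s ≤ 6 := by decide
  rw [finrank_relGrade, Fintype.card_eq_zero_iff]
  exact ⟨fun s ↦ ((hle s).trans_lt hn).ne s.2⟩

theorem relGrade_one_eq_span (k : Type*) [Field k] :
    relGrade k 1 =
      Submodule.span k {Ideal.Quotient.mk (perazzoRelIdeal k) (MvPolynomial.X 1)} := by
  have hset : {s | IsConnectedSum.stdWeight 2 5 ![2, 1] s = 1} = {.inr 0} := Set.ext (by decide)
  have hgrade :=
    (isConnectedSum_perazzoRelIdeal k).map_weightedHomogeneousSubmodule (w := ![2, 1]) rfl 1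
  rw [relGrade, mkₐ_eq_aeval, hgrade, hset, Set.image_singleton]
  simp [IsConnectedSum.stdMonomial]

theorem relative_coinvariants_G333_SLJT_not_SL_general
    (k : Type*) [Field k] :
    Module.finrank k (MvPolynomial (Fin 2) k ⧸ perazzoRelIdeal k) = 9 ∧
    (∀ n : ℕ,
      Module.finrank k (LinearMap.ker
        ((LinearMap.mulLeft k (Ideal.Quotient.mk (perazzoRelIdeal k)
          (MvPolynomial.X 0 + MvPolynomial.X 1))) ^ n)) = min n 7 + min n 2) ∧
    (Module.finrank k (relGrade k 0) = 1 ∧ Module.finrank k (relGrade k 1) = 1 ∧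
      Module.finrank k (relGrade k 2) = 2 ∧ Module.finrank k (relGrade k 3) = 1 ∧
      Module.finrank k (relGrade k 4) = 2 ∧ Module.finrank k (relGrade k 5) = 1 ∧
      Module.finrank k (relGrade k 6) = 1 ∧
      ∀ i : ℕ, 6 < i → Module.finrank k (relGrade k i) = 0) ∧
    Module.finrank k
      ↥(LinearMap.ker (LinearMap.mulLeft k (Ideal.Quotient.mk (perazzoRelIdeal k)
          (MvPolynomial.X 0))) ⊓
        LinearMap.ker (LinearMap.mulLeft k (Ideal.Quotient.mk (perazzoRelIdeal k)
          (MvPolynomial.X 1)))) = 1 ∧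
    ¬ ∃ ℓ' ∈ relGrade k 1, ∀ n : ℕ,
        Module.finrank k (LinearMap.ker ((LinearMap.mulLeft k ℓ') ^ n)) =
          min n 7 + min n 2 := by
  have h := isConnectedSum_perazzoRelIdeal k
  refine ⟨h.finrank_eq, fun n ↦ ?_, ?_, h.finrank_ker_mulLeft_inf_ker_mulLeft, ?_⟩
  · rw [map_add, h.hasJordanType_mulLeft_add (by decide) n, Fin.sum_univ_two]
    rfl
  · simp only [finrank_relGrade]
    exact ⟨by decide, by decide, by decide, by decide, by decide, by decide, by decide,
      fun i hi ↦ (finrank_relGrade k i).symm.trans (finrank_relGrade_eq_zero k hi)⟩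
  · rintro ⟨ℓ', hℓ', hjordan⟩
    rw [relGrade_one_eq_span, Submodule.mem_span_singleton] at hℓ'
    obtain ⟨c, rfl⟩ := hℓ'
    have hker := hjordan 1
    rw [pow_one] at hker
    exact (h.lt_finrank_ker_mulLeft_smul c).ne' hker

/-- **Example (Example 3.4 / ex:G333).** Over a field of characteristic `0`, the
`9`-dimensional algebra `A = k[x,y]/(x³ - y⁶, xy)` is graded Artinian Gorenstein (with
`deg x = 2`, `deg y = 1`) with non-unimodal Hilbert function `(1,1,2,1,2,1,1)`, whose
conjugate partition is `(7,2)`; the (non-homogeneous) element `ℓ = x + y` has Jordan type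
`(7,2)`, i.e. strong Lefschetz Jordan type, while `A` has no degree-one strong Lefschetz
element. -/
theorem relative_coinvariants_G333_SLJT_not_SL
    (k : Type*) [Field k] [CharZero k] :
    Module.finrank k (MvPolynomial (Fin 2) k ⧸ perazzoRelIdeal k) = 9 ∧
    (∀ n : ℕ,
      Module.finrank k (LinearMap.ker
        ((LinearMap.mulLeft k (Ideal.Quotient.mk (perazzoRelIdeal k)
          (MvPolynomial.X 0 + MvPolynomial.X 1))) ^ n)) = min n 7 + min n 2) ∧
    (Module.finrank k (relGrade k 0) = 1 ∧ Module.finrank k (relGrade k 1) = 1 ∧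
      Module.finrank k (relGrade k 2) = 2 ∧ Module.finrank k (relGrade k 3) = 1 ∧
      Module.finrank k (relGrade k 4) = 2 ∧ Module.finrank k (relGrade k 5) = 1 ∧
      Module.finrank k (relGrade k 6) = 1 ∧
      ∀ i : ℕ, 6 < i → Module.finrank k (relGrade k i) = 0) ∧
    Module.finrank k
      ↥(LinearMap.ker (LinearMap.mulLeft k (Ideal.Quotient.mk (perazzoRelIdeal k)
          (MvPolynomial.X 0))) ⊓
        LinearMap.ker (LinearMap.mulLeft k (Ideal.Quotient.mk (perazzoRelIdeal k)
          (MvPolynomial.X 1)))) = 1 ∧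
    ¬ ∃ ℓ' ∈ relGrade k 1, ∀ n : ℕ,
        Module.finrank k (LinearMap.ker ((LinearMap.mulLeft k ℓ') ^ n)) =
          min n 7 + min n 2 :=
  relative_coinvariants_G333_SLJT_not_SL_general k
end
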